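/- arXiv:2208.05575 — 3 statements merged into one kernel-verified Lean document; each statement's English description precedes it below -/
import Mathlib

section
/- The mean multiplicity of the eigenvalue 0 of the adjacency matrix of a random recursive tree on n vertices satisfies E[N_0(Rec_n)] = (2G − 1)·n + O(1/log n) as n → ∞, where G is the Euler–Gompertz constant; i.e., there exist constants C > 0 and N such that for all n ≥ N, |E[N_0(Rec_n)] − (2G − 1)n| ≤ C/log n. -/
/-!
Call a vertex of a recursive tree *free* if none of its children is free (so leaves are free).
No two free vertices are adjacent, and each non-free vertex has a free child. Ordering the vertices
by free / non-free, the adjacency matrix has the block form `[[0, B], [Bᵀ, C]]`, and `B` is injective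
by back substitution from the largest label. Hence the nullity is `#free - #nonfree = 2 #free - n`
(`adjMult_zero_of_layers`, `adjMult_recTree`).

To average the number of free vertices, process the labels `n - 1, n - 2, …` downwards, each free
vertex marking its parent; then `v` is free iff it is unmarked after all larger labels have been
processed. The probability that all vertices of `I ⊆ {0, …, j - 1}` are still unmarked
once `j, …, n - 1` have been processed depends only on `#I` and satisfies a linear recursion
(`unmarkedProb_step`), which is solved by
`[X^(n-j)] φ^#I (1 - X)^(#I - j) / (n-1 choose j-1)` with `φ = 1 / ((1 - X) (1 - log (1 - X)))`,
because `φ' = φ / (1 - X) - φ²` (`unmarkedProb_eq`). Summing over vertices and writing `φ_k` for the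
coefficients of `φ` gives the exact formula
`E[#free] = φ_(n-1) + n ∑_{k < n-1} φ_k / ((k+1)(k+2))`
(`meanAdjMult_eq`, `sum_coeff_div_choose`).

Since `φ_k` is a probability, it lies in `[0, 1]`, and `φ` converges on `[0, 1)`. Termwise integration
after the substitution `x = 1 - e^(-u)` yields `∑_k φ_k / ((k+1)(k+2)) = G` (`hasSum_gompertz`).
Evaluating `φ` at `1 - 1/(2m)` bounds `∑_{i < m} φ_i` by `4m / (1 + log (2m))`, and the differential
equation gives `m φ_m ≤ ∑_{i < m} φ_i`, so `φ_m ≤ 4 / (1 + log (2m))` (`coeff_freeS_le`). Thus both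
`φ_(n-1)` and `n` times the tail of the series for `G` are `O(1 / log n)`.
-/

/-- Multiplicity of `α` as an eigenvalue of a real matrix `M`:
the dimension over `ℝ` of the kernel of `M - α•I`. -/
noncomputable def eigMult {I : Type} [Fintype I] (M : Matrix I I ℝ) (α : ℝ) : ℕ :=
  letI := Classical.decEq I
  Module.finrank ℝ (LinearMap.ker (M - α • (1 : Matrix I I ℝ)).mulVecLin)

/-- Multiplicity `N_α(G)` of `α` as an adjacency eigenvalue of a finite simple graph. -/
noncomputable def adjMult {V : Type} [Finite V] (G : SimpleGraph V) (α : ℝ) : ℕ :=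
  letI := Fintype.ofFinite V
  letI := Classical.decRel G.Adj
  eigMult (G.adjMatrix ℝ) α

/-- The space of parent functions encoding recursive trees on `{0, …, n-1}`. -/
abbrev ParentSpace (n : ℕ) := ∀ j : Fin (n - 1), Fin (j.val + 1)

/-- The recursive tree `T_p` on `Fin n` encoded by the parent function `p`: the edges
are `{j+1, p j}` for `j+1 ∈ {1, …, n-1}`, and the tree is rooted at `0`. -/
def recTree {n : ℕ} (p : ParentSpace n) : SimpleGraph (Fin n) :=
  SimpleGraph.fromRel (fun a b => ∃ j : Fin (n - 1), a.val = j.val + 1 ∧ b.val = (p j).val)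

/-- `E[N_α(Rec_n)]`: the average of `N_α(T_p)` over all parent functions `p`. -/
noncomputable def meanAdjMult (α : ℝ) (n : ℕ) : ℝ :=
  (∑ p : ParentSpace n, (adjMult (recTree p) α : ℝ)) / Fintype.card (ParentSpace n)

/-- The Euler–Gompertz constant `G = ∫_0^∞ e^{-u}/(1+u) du ≈ 0.596347`. -/
noncomputable def gompertz : ℝ := ∫ u in Set.Ioi (0 : ℝ), Real.exp (-u) / (1 + u)

/-! ### The generating function -/

open PowerSeries

/-- The geometric series `1 / (1 - X)`. -/
noncomputable def geomS : ℝ⟦X⟧ := PowerSeries.mk 1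

/-- The series `1 + log (1 / (1 - X)) = 1 + ∑_{k ≥ 1} X ^ k / k`. -/
noncomputable def logS : ℝ⟦X⟧ := PowerSeries.mk fun k => if k = 0 then 1 else 1 / (k : ℝ)

/-- The series `φ = 1 / ((1 - X) (1 + log (1 / (1 - X))))`. Its coefficient of `X ^ N` is the
probability that the root of a random recursive tree on `N + 1` vertices is free
(`coeff_freeS_eq`, `isFree_iff`). -/
noncomputable def freeS : ℝ⟦X⟧ := geomS * logS⁻¹

lemma logS_const : constantCoeff logS ≠ 0 := by
  rw [← coeff_zero_eq_constantCoeff_apply]; simp [logS]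

lemma freeS_mul_logS : freeS * logS = geomS := by
  rw [freeS, mul_assoc, PowerSeries.inv_mul_cancel _ logS_const, mul_one]

lemma deriv_geomS : d⁄dX ℝ geomS = geomS ^ 2 := by
  have : geomS ^ 2 = PowerSeries.mk fun n => (((1 + n).choose 1 : ℕ) : ℝ) :=
    PowerSeries.mk_one_pow_eq_mk_choose_add ℝ 1
  ext n
  rw [this, PowerSeries.coeff_derivative]
  simp [geomS, add_comm]

lemma deriv_logS : d⁄dX ℝ logS = geomS := by
  ext n
  rw [PowerSeries.coeff_derivative]
  simp only [logS, geomS, coeff_mk, Nat.succ_ne_zero, if_false, Pi.one_apply]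
  push_cast
  field_simp

lemma deriv_freeS : d⁄dX ℝ freeS = freeS * geomS - freeS ^ 2 := by
  rw [freeS, Derivation.leibniz, PowerSeries.derivative_inv', deriv_logS, deriv_geomS]
  simp only [smul_eq_mul]
  ring

lemma coeff_zero_freeS : coeff 0 freeS = 1 := by
  have := congrArg constantCoeff freeS_mul_logS
  rw [map_mul, ← coeff_zero_eq_constantCoeff_apply, ← coeff_zero_eq_constantCoeff_apply,
    ← coeff_zero_eq_constantCoeff_apply] at this
  simpa [logS, geomS, -coeff_zero_eq_constantCoeff] using this

lemma deriv_forest (i l : ℕ) : d⁄dX ℝ (freeS ^ i * geomS ^ l) =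
    ((i + l : ℕ) : ℝ⟦X⟧) * (freeS ^ i * geomS ^ (l + 1))
      - (i : ℝ⟦X⟧) * (freeS ^ (i + 1) * geomS ^ l) := by
  rw [Derivation.leibniz, Derivation.leibniz_pow, Derivation.leibniz_pow, deriv_freeS, deriv_geomS]
  simp only [smul_eq_mul, nsmul_eq_mul]
  rcases i with _ | i <;> rcases l with _ | l <;> push_cast <;>
    try simp [-mul_eq_mul_left_iff, -mul_eq_mul_right_iff]
  all_goals try ring

/-- Coefficient form of `deriv_forest`: the recursion that the probabilities `unmarkedProb`, suitably
normalised, satisfy as well. -/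
lemma coeff_forest (i l d : ℕ) : (d + 1 : ℝ) * coeff (d + 1) (freeS ^ i * geomS ^ l) =
    (i + l : ℝ) * coeff d (freeS ^ i * geomS ^ (l + 1))
      - i * coeff d (freeS ^ (i + 1) * geomS ^ l) := by
  have h := congrArg (coeff d) (deriv_forest i l)
  rw [PowerSeries.coeff_derivative, map_sub, ← map_natCast (C (R := ℝ)), ← map_natCast (C (R := ℝ)),
    coeff_C_mul, coeff_C_mul] at h
  push_cast at h
  linarith

/-! ### Nullity of the adjacency matrix -/

open Finset in
/-- Nullity of a graph with an independent set `F` such that every vertex `v` outside `F` has a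
neighbour `w` in `F` whose other neighbours all exceed `v`: it is `#F - #Fᶜ`. The last condition makes
the `F × Fᶜ` block of the adjacency matrix injective by back substitution. -/
lemma adjMult_zero_of_layers {n : ℕ} (G : SimpleGraph (Fin n)) (F : Fin n → Prop) [DecidablePred F]
    (h1 : ∀ u v, F u → F v → ¬ G.Adj u v)
    (h2 : ∀ v, ¬ F v → ∃ w, F w ∧ G.Adj w v ∧ ∀ c, G.Adj w c → c ≠ v → v < c) :
    (adjMult G 0 : ℝ) = 2 * (Fintype.card {v // F v} : ℝ) - n := by
  classical
  set A : Matrix (Fin n) (Fin n) ℝ := G.adjMatrix ℝ with hA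
  have hmult : adjMult G 0 = Module.finrank ℝ (LinearMap.ker A.mulVecLin) := by
    unfold adjMult eigMult
    rw [zero_smul, sub_zero]
    congr!
  let B : Matrix {v // F v} {v // ¬ F v} ℝ := Matrix.of fun i j => A i j
  have hsplit : ∀ (x : Fin n → ℝ) (u : Fin n), (A.mulVec x) u =
      ∑ i : {v // F v}, A u i * x i + ∑ i : {v // ¬ F v}, A u i * x i := fun x u => by
    rw [Matrix.mulVec, dotProduct, Fintype.sum_subtype_add_sum_subtype F (fun i => A u i * x i)]
  have hFF : ∀ u v, F u → F v → A u v = 0 := fun u v hu hv => by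
    simp [hA, SimpleGraph.adjMatrix_apply, h1 u v hu hv]
  have hsymm : ∀ u v, A u v = A v u := fun u v => by
    simp [hA, SimpleGraph.adjMatrix_apply, G.adj_comm]
  -- `B` has full column rank: `y v` is determined by row `w` from entries with larger index
  have hB : ∀ y : {v // ¬ F v} → ℝ, B.mulVec y = 0 → y = 0 := by
    intro y hy
    have key : ∀ k : ℕ, ∀ v : {v // ¬ F v}, n - v.1.val = k → y v = 0 := by
      intro k
      induction k using Nat.strong_induction_on with
      | _ k ih =>
        intro v hk
        obtain ⟨w, hw, hadj, hc⟩ := h2 v.1 v.2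
        have h0 := congrFun hy ⟨w, hw⟩
        simp only [Matrix.mulVec, dotProduct, Pi.zero_apply] at h0
        rw [Finset.sum_eq_single v] at h0
        · simpa [B, hA, SimpleGraph.adjMatrix_apply, hadj] using h0
        · intro c _ hcv
          by_cases hwc : G.Adj w c.1
          · have hlt := hc c.1 hwc (fun h => hcv (Subtype.ext h))
            rw [ih (n - c.1.val) (by have := c.1.2; have := v.1.2; omega) c rfl, mul_zero]
          · simp [B, hA, SimpleGraph.adjMatrix_apply, hwc]
        · simp
    funext v
    exact key _ v rfl
  have hBinj : Function.Injective B.mulVecLin := by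
    rw [← LinearMap.ker_eq_bot, LinearMap.ker_eq_bot']
    intro y hy
    exact hB y (by simpa using hy)
  have hrank : B.transpose.rank = Fintype.card {v // ¬ F v} := by
    rw [Matrix.rank_transpose, Matrix.rank, LinearMap.finrank_range_of_inj hBinj]
    simp
  have hnull := LinearMap.finrank_range_add_finrank_ker B.transpose.mulVecLin
  rw [← Matrix.rank, hrank] at hnull
  have hiff : ∀ x : Fin n → ℝ, A.mulVec x = 0 ↔
      (∀ i : {v // ¬ F v}, x i = 0) ∧ B.transpose.mulVec (fun i => x i) = 0 := by
    intro x
    constructor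
    · intro hx
      have hN : ∀ i : {v // ¬ F v}, x i = 0 := by
        have := hB (fun i => x i) (by
          funext u
          have := congrFun hx u.1
          rw [hsplit, Finset.sum_eq_zero (fun i _ => by rw [hFF _ _ u.2 i.2, zero_mul]),
            zero_add] at this
          exact this)
        exact fun i => congrFun this i
      refine ⟨hN, ?_⟩
      funext u
      have := congrFun hx u.1
      rw [hsplit, Finset.sum_eq_zero (s := (univ : Finset {v // ¬ F v}))
        (fun i _ => by rw [hN, mul_zero]), add_zero] at this
      refine Eq.trans ?_ this
      change ∑ i : {v // F v}, A i u * x i = _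
      exact Finset.sum_congr rfl fun i _ => by rw [hsymm]
    · rintro ⟨hN, hF⟩
      funext u
      rw [hsplit, Finset.sum_eq_zero (s := (univ : Finset {v // ¬ F v}))
        (fun i _ => by rw [hN, mul_zero]), add_zero]
      by_cases hu : F u
      · exact Finset.sum_eq_zero (fun i _ => by rw [hFF _ _ hu i.2, zero_mul])
      · refine Eq.trans ?_ (congrFun hF ⟨u, hu⟩)
        change _ = ∑ i : {v // F v}, A i u * x i
        exact Finset.sum_congr rfl fun i _ => by rw [hsymm]
  have heq : Module.finrank ℝ (LinearMap.ker A.mulVecLin) =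
      Module.finrank ℝ (LinearMap.ker B.transpose.mulVecLin) := by
    let r : (Fin n → ℝ) →ₗ[ℝ] ({v // F v} → ℝ) := LinearMap.funLeft ℝ ℝ Subtype.val
    let φ : LinearMap.ker A.mulVecLin →ₗ[ℝ] LinearMap.ker B.transpose.mulVecLin :=
      r.restrict (fun x hx => by
        rw [LinearMap.mem_ker, Matrix.mulVecLin_apply] at hx ⊢
        exact ((hiff x).1 hx).2)
    refine LinearEquiv.finrank_eq (LinearEquiv.ofBijective φ ⟨?_, ?_⟩)
    · rw [← LinearMap.ker_eq_bot, LinearMap.ker_eq_bot']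
      rintro ⟨x, hx⟩ hφ
      rw [LinearMap.mem_ker, Matrix.mulVecLin_apply] at hx
      have h0 : r x = 0 := congrArg Subtype.val hφ
      apply Subtype.ext
      funext v
      by_cases hv : F v
      · exact congrFun h0 ⟨v, hv⟩
      · exact ((hiff x).1 hx).1 ⟨v, hv⟩
    · rintro ⟨y, hy⟩
      rw [LinearMap.mem_ker, Matrix.mulVecLin_apply] at hy
      have hr : (fun i : {v // F v} => (fun v => if h : F v then y ⟨v, h⟩ else 0 : Fin n → ℝ) i.1)
          = y := by funext i; simp [i.2]
      refine ⟨⟨fun v => if h : F v then y ⟨v, h⟩ else 0, ?_⟩, Subtype.ext hr⟩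
      rw [LinearMap.mem_ker, Matrix.mulVecLin_apply, hiff]
      refine ⟨fun i => by simp [i.2], ?_⟩
      rw [hr]; exact hy
  have hcard : Fintype.card {v // F v} + Fintype.card {v // ¬ F v} = n := by
    rw [Fintype.card_subtype_compl, Fintype.card_fin]
    have := Fintype.card_subtype_le F
    rw [Fintype.card_fin] at this
    omega
  rw [Module.finrank_fintype_fun_eq_card] at hnull
  rw [hmult, heq]
  have e1 : (Fintype.card {v // ¬ F v} : ℝ) +
    Module.finrank ℝ (LinearMap.ker B.transpose.mulVecLin) = Fintype.card {v // F v} := by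
      exact_mod_cast hnull
  have e2 : (Fintype.card {v // F v} : ℝ) + Fintype.card {v // ¬ F v} = n := by exact_mod_cast hcard
  linarith

/-! ### Free vertices of a recursive tree -/

open Finset

/-- The parent of the vertex `u ∈ {1, …, n - 1}`, as a natural number; outside that range the value
is of no significance. -/
def parentOf {n : ℕ} (p : ParentSpace n) (u : ℕ) : ℕ :=
  if h : u - 1 < n - 1 then (p ⟨u - 1, h⟩).val else 0

/-- The vertex `w` is free if none of its children is free. -/
def IsFree {n : ℕ} (p : ParentSpace n) (w : ℕ) : Prop :=
  ∀ u, w < u → u < n → parentOf p u = w → ¬ IsFree p u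
termination_by n - w

/-- The vertex `v` is unmarked after the vertices `n - 1, …, j` have been processed: no free vertex
`u ≥ j` has `v` as its parent. -/
def Unmarked {n : ℕ} (p : ParentSpace n) (j v : ℕ) : Prop :=
  ∀ u, j ≤ u → u < n → parentOf p u = v → ¬ IsFree p u

lemma isFree_iff {n : ℕ} (p : ParentSpace n) (w : ℕ) : IsFree p w ↔ Unmarked p (w + 1) w := by
  rw [IsFree, Unmarked]
  rfl

lemma parentOf_lt {n : ℕ} (p : ParentSpace n) {u : ℕ} (hu : 1 ≤ u) : parentOf p u < u := by
  unfold parentOf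
  split_ifs with h
  · have := (p ⟨u - 1, h⟩).2
    simp only at this
    omega
  · omega

lemma recTree_adj_iff {n : ℕ} (p : ParentSpace n) (a b : Fin n) : (recTree p).Adj a b ↔
    (1 ≤ a.val ∧ b.val = parentOf p a) ∨ (1 ≤ b.val ∧ a.val = parentOf p b) := by
  have key : ∀ a b : Fin n, (∃ j : Fin (n - 1), a.val = j.val + 1 ∧ b.val = (p j).val) ↔
      (1 ≤ a.val ∧ b.val = parentOf p a) := by
    intro a b
    constructor
    · rintro ⟨j, h1, h2⟩
      refine ⟨by omega, ?_⟩
      have hj := j.2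
      rw [h2, h1, parentOf, dif_pos (by omega)]
      rfl
    · rintro ⟨h1, h2⟩
      have ha := a.2
      have hlt : a.val - 1 < n - 1 := by omega
      rw [parentOf, dif_pos hlt] at h2
      exact ⟨⟨a.val - 1, hlt⟩, by simp only; omega, h2⟩
  rw [recTree, SimpleGraph.fromRel_adj, key, key]
  refine ⟨fun h => h.2, fun h => ⟨?_, h⟩⟩
  rintro rfl
  rcases h with ⟨h1, h2⟩ | ⟨h1, h2⟩ <;> exact absurd h2 (parentOf_lt p h1).ne'

open Classical in
lemma adjMult_recTree {n : ℕ} (p : ParentSpace n) :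
    (adjMult (recTree p) 0 : ℝ) = 2 * (∑ v ∈ range n, if IsFree p v then (1 : ℝ) else 0) - n := by
  rw [adjMult_zero_of_layers (recTree p) (fun v => IsFree p v.val)]
  · congr 2
    rw [← Fin.sum_univ_eq_sum_range (fun v => if IsFree p v then (1 : ℝ) else 0),
      Fintype.card_subtype, Finset.sum_boole]
  · have main : ∀ u v : Fin n, IsFree p u.val → IsFree p v.val → 1 ≤ u.val →
        v.val ≠ parentOf p u := by
      intro u v hu hv h1 h2
      rw [IsFree] at hv
      exact hv u (h2 ▸ parentOf_lt p h1) u.2 h2.symm hu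
    intro u v hu hv hadj
    rcases (recTree_adj_iff p u v).1 hadj with ⟨h1, h2⟩ | ⟨h1, h2⟩
    · exact main u v hu hv h1 h2
    · exact main v u hv hu h1 h2
  · intro v hv
    rw [IsFree] at hv
    push Not at hv
    obtain ⟨u, hu, hun, hpar, hfree⟩ := hv
    refine ⟨⟨u, hun⟩, hfree, (recTree_adj_iff p _ _).2 (Or.inl ⟨by simp only; omega, hpar.symm⟩), ?_⟩
    intro c hc hcv
    rcases (recTree_adj_iff p _ _).1 hc with ⟨h1, h2⟩ | ⟨h1, h2⟩
    · exact absurd (Fin.ext (h2.trans hpar)) hcv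
    · have := parentOf_lt p h1
      simp only at h2
      rw [Fin.lt_def]
      omega

/-- Freeness of `w` depends only on the parents of the vertices larger than `w`. -/
lemma isFree_congr {n : ℕ} (p p' : ParentSpace n) (j : ℕ)
    (h : ∀ u, j ≤ u → parentOf p u = parentOf p' u) :
    ∀ k w, n - w = k → j ≤ w + 1 → (IsFree p w ↔ IsFree p' w) := by
  intro k
  induction k using Nat.strong_induction_on with
  | _ k ih =>
    intro w hk hw
    rw [IsFree, IsFree]
    refine forall_congr' fun u => forall_congr' fun hu => forall_congr' fun hun => ?_
    rw [h u (by omega), ih (n - u) (by omega) u rfl (by omega)]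

lemma unmarked_update {n : ℕ} (p : ParentSpace n) (k : Fin (n - 1)) (x : Fin (k.val + 1)) {j : ℕ}
    (hj : k.val + 1 < j) (v : ℕ) :
    Unmarked (Function.update p k x) j v ↔ Unmarked p j v := by
  have h : ∀ u, j ≤ u → parentOf (Function.update p k x) u = parentOf p u := by
    intro u hu
    unfold parentOf
    split_ifs with hlt
    · rw [Function.update_of_ne]
      intro he
      have := congrArg Fin.val he
      simp only at this
      omega
    · rfl
  unfold Unmarked
  refine forall_congr' fun u => forall_congr' fun hu => forall_congr' fun hun => ?_
  rw [h u hu, isFree_congr _ p j h _ u rfl (by omega)]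

/-! ### Averages over parent functions -/

/-- Expectation under the uniform measure on parent functions. -/
noncomputable def avg (n : ℕ) (f : ParentSpace n → ℝ) : ℝ :=
  (∑ p, f p) / Fintype.card (ParentSpace n)

lemma card_ne_zero (n : ℕ) : (Fintype.card (ParentSpace n) : ℝ) ≠ 0 := by
  have : Nonempty (ParentSpace n) := ⟨fun _ => 0⟩
  exact_mod_cast Fintype.card_ne_zero

lemma avg_const (n : ℕ) (c : ℝ) : avg n (fun _ => c) = c := by
  rw [avg, Finset.sum_const, nsmul_eq_mul, Finset.card_univ, mul_div_cancel_left₀ _ (card_ne_zero n)]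

lemma avg_mono {n : ℕ} {f g : ParentSpace n → ℝ} (h : ∀ p, f p ≤ g p) : avg n f ≤ avg n g :=
  div_le_div_of_nonneg_right (Finset.sum_le_sum fun p _ => h p) (Nat.cast_nonneg _)

lemma avg_sub {n : ℕ} (f g : ParentSpace n → ℝ) :
    avg n (fun p => f p - g p) = avg n f - avg n g := by
  simp only [avg, Finset.sum_sub_distrib, sub_div]

lemma avg_mul_left {n : ℕ} (c : ℝ) (f : ParentSpace n → ℝ) :
    avg n (fun p => c * f p) = c * avg n f := by
  simp only [avg, ← Finset.mul_sum, mul_div_assoc]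

lemma avg_sum {n : ℕ} {ι : Type*} (s : Finset ι) (f : ι → ParentSpace n → ℝ) :
    avg n (fun p => ∑ i ∈ s, f i p) = ∑ i ∈ s, avg n (f i) := by
  simp only [avg]
  rw [Finset.sum_comm, Finset.sum_div]

/-- Independence: if `g` does not depend on the coordinate `k`, then `h (p k)` and `g p` are
uncorrelated. -/
lemma sum_indicator_mul {n : ℕ} (k : Fin (n - 1)) (h : Fin (k.val + 1) → ℝ)
    (g : ParentSpace n → ℝ) (hg : ∀ p x, g (Function.update p k x) = g p) :
    (k.val + 1 : ℝ) * ∑ p, h (p k) * g p = (∑ x, h x) * ∑ p, g p := by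
  let e := Equiv.piSplitAt k (fun j : Fin (n - 1) => Fin (j.val + 1))
  have hk : ∀ x y, (e.symm (x, y)) k = x := by
    intro x y
    simp [e, Equiv.piSplitAt]
  have hgy : ∀ x y, g (e.symm (x, y)) = g (e.symm (0, y)) := by
    intro x y
    rw [← hg (e.symm (0, y)) x]
    congr 1
    funext j
    by_cases hj : j = k
    · subst hj
      rw [hk, Function.update_self]
    · rw [Function.update_of_ne hj]
      simp [e, Equiv.piSplitAt, hj]
  have e1 : ∀ F : ParentSpace n → ℝ, ∑ p, F p = ∑ x, ∑ y, F (e.symm (x, y)) := by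
    intro F
    rw [← Equiv.sum_comp e.symm, Fintype.sum_prod_type]
  rw [e1, e1 g]
  simp_rw [hk, hgy, ← Finset.mul_sum, ← Finset.sum_mul]
  rw [Finset.sum_const, Finset.card_univ, Fintype.card_fin, nsmul_eq_mul]
  push_cast
  ring

open Classical in
/-- The probability that all vertices of `I` are unmarked after the vertices `n - 1, …, j` have been
processed. -/
noncomputable def unmarkedProb (n j : ℕ) (I : Finset ℕ) : ℝ :=
  avg n fun p => if ∀ v ∈ I, Unmarked p j v then 1 else 0

open Classical in
/-- Processing the vertex `j` spoils the event for `I` exactly when all of `I` and `j` itself were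
unmarked and the parent of `j`, uniform on `{0, …, j - 1}`, falls in `I`. -/
lemma unmarkedProb_step {n j : ℕ} (hj : 1 ≤ j) (hjn : j < n) (I : Finset ℕ) (hI : I ⊆ range j) :
    (j : ℝ) * unmarkedProb n j I =
      j * unmarkedProb n (j + 1) I - #I * unmarkedProb n (j + 1) (insert j I) := by
  have hk : j - 1 < n - 1 := by omega
  let k : Fin (n - 1) := ⟨j - 1, hk⟩
  have hkj : k.val + 1 = j := by simp only [k]; omega
  have hpar : ∀ p : ParentSpace n, parentOf p j = (p k).val := fun p => by
    rw [parentOf, dif_pos hk]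
  let g : ParentSpace n → ℝ := fun p => if ∀ v ∈ insert j I, Unmarked p (j + 1) v then 1 else 0
  let h : Fin (k.val + 1) → ℝ := fun x => if x.val ∈ I then 1 else 0
  have hpt : ∀ p : ParentSpace n, (if ∀ v ∈ I, Unmarked p j v then (1 : ℝ) else 0) =
      (if ∀ v ∈ I, Unmarked p (j + 1) v then (1 : ℝ) else 0) - h (p k) * g p := by
    intro p
    have hQ : (∀ v ∈ I, Unmarked p j v) ↔
        (∀ v ∈ I, Unmarked p (j + 1) v) ∧ ¬ (parentOf p j ∈ I ∧ IsFree p j) := by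
      constructor
      · intro H
        refine ⟨fun v hv u hu => H v hv u (by omega), fun ⟨h1, h2⟩ => ?_⟩
        exact H _ h1 j le_rfl hjn rfl h2
      · rintro ⟨H, H'⟩ v hv u hu hun hpu hfree
        rcases hu.eq_or_lt with rfl | hlt
        · exact H' ⟨hpu ▸ hv, hfree⟩
        · exact H v hv u hlt hun hpu hfree
    have hg : (∀ v ∈ insert j I, Unmarked p (j + 1) v) ↔
        IsFree p j ∧ ∀ v ∈ I, Unmarked p (j + 1) v := by
      rw [Finset.forall_mem_insert, isFree_iff]
    have hh : h (p k) = if parentOf p j ∈ I then 1 else 0 := by rw [hpar]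
    have hgp : g p = if IsFree p j ∧ ∀ v ∈ I, Unmarked p (j + 1) v then 1 else 0 := by
      simp only [g, hg]
    rw [hh, hgp, if_congr hQ rfl rfl]
    split_ifs <;> first | (norm_num; done) | (exfalso; tauto)
  have hsum : ∑ x, h x = #I := by
    simp only [h]
    rw [Fin.sum_univ_eq_sum_range (fun x => if x ∈ I then (1 : ℝ) else 0), Finset.sum_boole, hkj,
      Finset.filter_mem_eq_inter, Finset.inter_eq_right.2 hI]
  have hind := sum_indicator_mul k h g (fun p x => by
    simp only [g, unmarked_update p k x (show k.val + 1 < j + 1 by omega)])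
  rw [hsum] at hind
  have hkr : (k.val + 1 : ℝ) = j := by exact_mod_cast hkj
  rw [hkr] at hind
  have hg' : unmarkedProb n (j + 1) (insert j I) = avg n g := rfl
  rw [hg']
  unfold unmarkedProb
  rw [funext hpt, avg_sub, mul_sub]
  congr 1
  rw [avg, avg, ← mul_div_assoc, ← mul_div_assoc, hind]

/-- Closed form of `unmarkedProb`, by downward induction on the processed label. -/
lemma unmarkedProb_eq {N : ℕ} : ∀ d m, m + d = N → ∀ I ⊆ range (m + 1),
    unmarkedProb (N + 1) (m + 1) I * N.choose m =
      coeff d (freeS ^ #I * geomS ^ (m + 1 - #I)) := by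
  intro d
  induction d with
  | zero =>
    intro m hm I hI
    obtain rfl : m = N := by omega
    have h1 : unmarkedProb (m + 1) (m + 1) I = 1 := by
      classical
      refine (congrArg (avg (m + 1)) (funext fun p => ?_)).trans (avg_const (m + 1) 1)
      rw [if_pos]
      intro v _ u hu hu'
      omega
    have hg : coeff 0 geomS = (1 : ℝ) := by simp [geomS, -coeff_zero_eq_constantCoeff]
    have hf := coeff_zero_freeS
    rw [coeff_zero_eq_constantCoeff_apply] at hf hg
    rw [h1, coeff_zero_eq_constantCoeff_apply, map_mul, map_pow, map_pow, hf, hg]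
    simp
  | succ d ih =>
    intro m hm I hI
    have hcard : #I ≤ m + 1 := by simpa using Finset.card_le_card hI
    have hnot : m + 1 ∉ I := fun h => by simpa using hI h
    have hstep := unmarkedProb_step (n := N + 1) (j := m + 1) (by omega) (by omega) I hI
    have ih1 := ih (m + 1) (by omega) I (hI.trans (Finset.range_subset_range.2 (by omega)))
    have ih2 := ih (m + 1) (by omega) (insert (m + 1) I) (by
      rw [Finset.insert_subset_iff]
      exact ⟨by simp, hI.trans (Finset.range_subset_range.2 (by omega))⟩)
    rw [Finset.card_insert_of_notMem hnot] at ih2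
    obtain ⟨l, hl⟩ := Nat.exists_eq_add_of_le hcard
    rw [show m + 1 + 1 - #I = l + 1 by omega] at ih1
    rw [show m + 1 + 1 - (#I + 1) = l by omega] at ih2
    rw [show m + 1 - #I = l by omega]
    have hcf := coeff_forest #I l d
    have hch : (N.choose (m + 1) : ℝ) * (m + 1) = N.choose m * (d + 1) := by
      have := Nat.choose_succ_right_eq N m
      rw [show N - m = d + 1 by omega] at this
      exact_mod_cast this
    have hlr : (#I + l : ℝ) = m + 1 := by exact_mod_cast hl.symm
    have hd : (d + 1 : ℝ) ≠ 0 := by positivity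
    apply mul_left_cancel₀ hd
    rw [hcf, ← ih1, ← ih2, hlr]
    push_cast at hstep
    linear_combination (N.choose (m + 1) : ℝ) * hstep - unmarkedProb (N + 1) (m + 1) I * hch

lemma coeff_freeS_eq (N : ℕ) : coeff N freeS = unmarkedProb (N + 1) 1 {0} := by
  have := unmarkedProb_eq (N := N) N 0 (by omega) {0} (by simp)
  simpa using this.symm

lemma coeff_freeS_nonneg (N : ℕ) : 0 ≤ coeff N freeS := by
  rw [coeff_freeS_eq, ← avg_const (N + 1) 0]
  exact avg_mono fun p => by split_ifs <;> norm_num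

lemma coeff_freeS_le_one (N : ℕ) : coeff N freeS ≤ 1 := by
  rw [coeff_freeS_eq, ← avg_const (N + 1) 1]
  exact avg_mono fun p => by split_ifs <;> norm_num

/-- The sum is the mean number of free vertices; its `m`-th term is the probability that the vertex
`m` is free. -/
lemma meanAdjMult_eq (N : ℕ) : meanAdjMult 0 (N + 1) =
    2 * (∑ m ∈ range (N + 1), coeff (N - m) (freeS * geomS ^ m) / N.choose m) - (N + 1) := by
  classical
  have h : meanAdjMult 0 (N + 1) = avg (N + 1) fun p => (adjMult (recTree p) 0 : ℝ) := rfl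
  rw [h]
  simp only [adjMult_recTree]
  rw [avg_sub, avg_const, avg_mul_left, avg_sum]
  push_cast
  congr 2
  refine Finset.sum_congr rfl fun m hm => ?_
  rw [Finset.mem_range] at hm
  have := unmarkedProb_eq (N := N) (N - m) m (by omega) {m} (by simp)
  rw [Finset.card_singleton, pow_one, Nat.add_sub_cancel] at this
  rw [← this, mul_div_cancel_right₀]
  · simp only [isFree_iff, unmarkedProb, Finset.mem_singleton, forall_eq]
  · exact_mod_cast (Nat.choose_pos (by omega)).ne'

/-! ### Summation over the vertices -/

lemma sum_choose_div_choose (M k : ℕ) :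
    ∑ t ∈ range (M + 1), (M.choose t : ℝ) / ((M + k + 1).choose (t + 1)) =
      (M + k + 2) / ((k + 1) * (k + 2)) := by
  have hterm : ∀ t ∈ range (M + 1), (M.choose t : ℝ) / ((M + k + 1).choose (t + 1)) =
      (M.factorial * k.factorial / (M + k + 1).factorial : ℝ) *
        ((1 + t).choose 1 * (k + (M - t)).choose k) := by
    intro t ht
    rw [Finset.mem_range] at ht
    obtain ⟨r, rfl⟩ := Nat.exists_eq_add_of_le (show t ≤ M by omega)
    rw [Nat.add_sub_cancel_left, Nat.choose_one_right,
      Nat.cast_choose ℝ (show t ≤ t + r by omega),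
      Nat.cast_choose ℝ (show t + 1 ≤ t + r + k + 1 by omega),
      Nat.cast_choose ℝ (show k ≤ k + r by omega),
      show t + r - t = r by omega, show t + r + k + 1 - (t + 1) = k + r by omega,
      show k + r - k = r by omega, Nat.factorial_succ t]
    have h1 := Nat.factorial_ne_zero t
    have h2 := Nat.factorial_ne_zero r
    have h3 := Nat.factorial_ne_zero k
    have h4 := Nat.factorial_ne_zero (k + r)
    have h5 := Nat.factorial_ne_zero (t + r)
    have h6 := Nat.factorial_ne_zero (t + r + k + 1)
    push_cast
    field_simp
    ring
  rw [Finset.sum_congr rfl hterm, ← Finset.mul_sum]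
  -- compare coefficients in `(1-X)⁻² (1-X)⁻ᵏ⁻¹ = (1-X)⁻ᵏ⁻³`
  have hconv : ∑ t ∈ range (M + 1), ((1 + t).choose 1 * (k + (M - t)).choose k : ℝ) =
      (k + 2 + M).choose (k + 2) := by
    have h : geomS ^ (1 + 1) * geomS ^ (k + 1) = geomS ^ (k + 2 + 1) := by ring
    have h' := congrArg (coeff M) h
    simp only [geomS, PowerSeries.mk_one_pow_eq_mk_choose_add] at h'
    rw [coeff_mul, Finset.Nat.sum_antidiagonal_eq_sum_range_succ_mk] at h'
    simpa using h'
  rw [hconv, Nat.cast_choose ℝ (show k + 2 ≤ k + 2 + M by omega),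
    show k + 2 + M - (k + 2) = M by omega, show k + 2 + M = (M + k + 1) + 1 by omega,
    Nat.factorial_succ (M + k + 1), Nat.factorial_succ (k + 1), Nat.factorial_succ k]
  have h1 := Nat.factorial_ne_zero M
  have h3 := Nat.factorial_ne_zero k
  have h4 := Nat.factorial_ne_zero (M + k + 1)
  push_cast
  field_simp
  ring

/-- The mean number of free vertices, regrouped by subtree size: `(N + 1) / ((k + 1) (k + 2))` is the
mean number of vertices, other than the root, with exactly `k` proper descendants. -/
lemma sum_coeff_div_choose (N : ℕ) :
    ∑ m ∈ range (N + 1), coeff (N - m) (freeS * geomS ^ m) / N.choose m =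
      coeff N freeS + (N + 1) * ∑ k ∈ range N, coeff k freeS / ((k + 1) * (k + 2)) := by
  rw [Finset.sum_range_succ']
  simp only [pow_zero, mul_one, Nat.sub_zero, Nat.choose_zero_right, Nat.cast_one, div_one]
  rw [add_comm]
  congr 1
  have hrow : ∀ t ∈ range N, coeff (N - (t + 1)) (freeS * geomS ^ (t + 1)) / (N.choose (t + 1) : ℝ)
      = ∑ k ∈ range N, coeff k freeS * (((N - 1 - k).choose t : ℝ) / N.choose (t + 1)) := by
    intro t ht
    rw [Finset.mem_range] at ht
    rw [geomS, PowerSeries.mk_one_pow_eq_mk_choose_add, coeff_mul,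
      Finset.Nat.sum_antidiagonal_eq_sum_range_succ_mk, Finset.sum_div]
    refine Eq.trans ?_ (Finset.sum_subset (s₁ := range (N - (t + 1)).succ) ?_ ?_)
    · refine Finset.sum_congr rfl fun k hk => ?_
      rw [Finset.mem_range] at hk
      rw [coeff_mk, show t + (N - (t + 1) - k) = N - 1 - k by omega, mul_div_assoc]
    · exact Finset.range_subset_range.2 (by omega)
    · intro k hkN hk
      rw [Finset.mem_range] at hk hkN
      rw [Nat.choose_eq_zero_of_lt (by omega)]
      simp
  rw [Finset.sum_congr rfl hrow, Finset.sum_comm, Finset.mul_sum]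
  refine Finset.sum_congr rfl fun k hk => ?_
  rw [Finset.mem_range] at hk
  obtain ⟨M, rfl⟩ := Nat.exists_eq_add_of_le (show k + 1 ≤ N by omega)
  rw [← Finset.mul_sum, show k + 1 + M - 1 - k = M by omega, show k + 1 + M = M + k + 1 by omega]
  rw [← Finset.sum_subset (s₁ := range (M + 1)) (Finset.range_subset_range.2 (by omega)),
    sum_choose_div_choose]
  · push_cast
    ring
  · intro t _ ht
    rw [Finset.mem_range] at ht
    rw [Nat.choose_eq_zero_of_lt (by omega)]
    simp

/-! ### Analytic estimates -/

lemma hasSum_freeS {x : ℝ} (hx0 : 0 ≤ x) (hx1 : x < 1) :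
    HasSum (fun k => coeff k freeS * x ^ k) (1 / ((1 - x) * (1 - Real.log (1 - x)))) := by
  have habs : |x| < 1 := by rwa [abs_of_nonneg hx0]
  have hfs : Summable fun k => coeff k freeS * x ^ k :=
    Summable.of_nonneg_of_le (fun k => mul_nonneg (coeff_freeS_nonneg k) (pow_nonneg hx0 k))
      (fun k => mul_le_of_le_one_left (pow_nonneg hx0 k) (coeff_freeS_le_one k))
      (summable_geometric_of_lt_one hx0 hx1)
  have hg : HasSum (fun k => coeff k logS * x ^ k) (1 - Real.log (1 - x)) := by
    rw [sub_eq_add_neg]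
    have h := Real.hasSum_pow_div_log_of_abs_lt_one habs
    rw [← hasSum_nat_add_iff' 1]
    simp only [Finset.range_one, Finset.sum_singleton, pow_zero, mul_one]
    have h0 : coeff 0 logS = 1 := by simp [logS, -coeff_zero_eq_constantCoeff]
    rw [h0, add_sub_cancel_left]
    refine h.congr_fun fun k => ?_
    simp only [logS, coeff_mk, Nat.succ_ne_zero, if_false]
    push_cast
    ring
  have hprod := tsum_mul_tsum_eq_tsum_sum_antidiagonal_of_summable_norm hfs.norm hg.summable.norm
  have hcoef : ∀ n, ∑ kl ∈ antidiagonal n,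
      coeff kl.1 freeS * x ^ kl.1 * (coeff kl.2 logS * x ^ kl.2) = x ^ n := by
    intro n
    have h := congrArg (coeff n) freeS_mul_logS
    rw [coeff_mul, geomS, coeff_mk, Pi.one_apply] at h
    calc _ = ∑ kl ∈ antidiagonal n, coeff kl.1 freeS * coeff kl.2 logS * x ^ n := by
          refine Finset.sum_congr rfl fun kl hkl => ?_
          rw [Finset.HasAntidiagonal.mem_antidiagonal] at hkl
          rw [← hkl, pow_add]
          ring
      _ = x ^ n := by rw [← Finset.sum_mul, h, one_mul]
  simp_rw [hcoef] at hprod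
  rw [hg.tsum_eq, tsum_geometric_of_lt_one hx0 hx1] at hprod
  have hlog : Real.log (1 - x) ≤ 0 := Real.log_nonpos (by linarith) (by linarith)
  have hval : ∑' k, coeff k freeS * x ^ k = 1 / ((1 - x) * (1 - Real.log (1 - x))) := by
    have h1 : (1 - Real.log (1 - x)) ≠ 0 := by linarith
    have h2 : 1 - x ≠ 0 := by linarith
    rw [eq_div_iff (mul_ne_zero h2 h1)]
    calc _ = (1 - x) * ((∑' k, coeff k freeS * x ^ k) * (1 - Real.log (1 - x))) := by ring
      _ = 1 := by rw [hprod, mul_inv_cancel₀ h2]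
  rw [← hval]
  exact hfs.hasSum

/-- A one-sided Tauberian bound: positivity of the coefficients controls their partial sums by a value
of the function, and `φ' = φ / (1 - X) - φ²` gives `m φ_m ≤ ∑_{i < m} φ_i`. -/
lemma coeff_freeS_le {m : ℕ} (hm : 1 ≤ m) : coeff m freeS ≤ 4 / (1 + Real.log (2 * m)) := by
  have hm' : (1 : ℝ) ≤ m := by exact_mod_cast hm
  have hlog : 0 ≤ Real.log (2 * m) := Real.log_nonneg (by linarith)
  -- evaluating the generating function at `1 - 1 / (2m)` controls the partial sums
  have hsum : ∑ i ∈ range m, coeff i freeS ≤ 4 * m / (1 + Real.log (2 * m)) := by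
    set x : ℝ := 1 - 1 / (2 * m) with hx
    have hinv : 1 / (2 * m : ℝ) ≤ 1 / 2 := by
      apply one_div_le_one_div_of_le <;> linarith
    have hinv0 : 0 < 1 / (2 * m : ℝ) := by positivity
    have hx0 : 0 ≤ x := by linarith
    have hx1 : x < 1 := by linarith
    have hpow : (1 / 2 : ℝ) ≤ x ^ m := by
      have := one_add_mul_le_pow (a := -(1 / (2 * m : ℝ))) (by linarith) m
      calc (1 / 2 : ℝ) = 1 + m * (-(1 / (2 * m : ℝ))) := by field_simp; norm_num
        _ ≤ _ := by rw [hx, sub_eq_add_neg]; exact this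
    have hS := hasSum_freeS hx0 hx1
    have hle := sum_le_hasSum (range m)
      (fun i _ => mul_nonneg (coeff_freeS_nonneg i) (pow_nonneg hx0 i)) hS
    have hlow : (∑ i ∈ range m, coeff i freeS) * (1 / 2) ≤
        ∑ i ∈ range m, coeff i freeS * x ^ i := by
      rw [Finset.sum_mul]
      refine Finset.sum_le_sum fun i hi => mul_le_mul_of_nonneg_left ?_ (coeff_freeS_nonneg i)
      exact hpow.trans (pow_le_pow_of_le_one hx0 hx1.le (Finset.mem_range.1 hi).le)
    have h1x : 1 - x = (2 * m : ℝ)⁻¹ := by rw [hx]; ring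
    rw [h1x, Real.log_inv, sub_neg_eq_add] at hle
    have e : 1 / ((2 * m : ℝ)⁻¹ * (1 + Real.log (2 * m))) = 2 * m / (1 + Real.log (2 * m)) := by
      field_simp
    rw [e] at hle
    have : 4 * m / (1 + Real.log (2 * m)) = 2 * (2 * m / (1 + Real.log (2 * m))) := by ring
    rw [this]
    linarith
  obtain ⟨d, rfl⟩ := Nat.exists_eq_add_of_le' hm
  have hrec := coeff_forest 1 0 d
  have hZ : coeff d (freeS ^ 1 * geomS ^ (0 + 1)) = ∑ i ∈ range (d + 1), coeff i freeS := by
    rw [pow_one, zero_add, pow_one, coeff_mul, Finset.Nat.sum_antidiagonal_eq_sum_range_succ_mk]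
    simp [geomS]
  have hsq : 0 ≤ coeff d (freeS ^ (1 + 1) * geomS ^ 0) := by
    rw [pow_zero, mul_one, pow_two, coeff_mul]
    exact Finset.sum_nonneg fun i _ => mul_nonneg (coeff_freeS_nonneg _) (coeff_freeS_nonneg _)
  rw [hZ, show freeS ^ 1 * geomS ^ 0 = freeS by simp, Nat.cast_one, Nat.cast_zero, add_zero,
    one_mul, one_mul] at hrec
  have hd : (0 : ℝ) < d + 1 := by positivity
  have h1 : (d + 1 : ℝ) * coeff (d + 1) freeS ≤
      (d + 1) * (4 / (1 + Real.log (2 * (d + 1 : ℕ)))) := by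
    calc _ ≤ ∑ i ∈ range (d + 1), coeff i freeS := by linarith
      _ ≤ _ := hsum
      _ = _ := by push_cast; ring
  exact le_of_mul_le_mul_left h1 hd

/-- With `x = 1 - e^(-u)` the function is the antiderivative of `x ^ k (1 - x)`. -/
lemma hasDerivAt_beta (k : ℕ) (u : ℝ) :
    HasDerivAt (fun u => (1 - Real.exp (-u)) ^ (k + 1) / (k + 1)
      - (1 - Real.exp (-u)) ^ (k + 2) / (k + 2))
      ((1 - Real.exp (-u)) ^ k * Real.exp (-u) ^ 2) u := by
  have h0 : HasDerivAt (fun u => 1 - Real.exp (-u)) (Real.exp (-u)) u := by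
    have := ((Real.hasDerivAt_exp (-u)).comp u (hasDerivAt_neg u)).const_sub 1
    simpa using this
  have h1 := (h0.pow (k + 1)).div_const ((k : ℝ) + 1)
  have h2 := (h0.pow (k + 2)).div_const ((k : ℝ) + 2)
  refine (h1.sub h2).congr_deriv ?_
  have a1 : (k + 1 : ℝ) ≠ 0 := by positivity
  have a2 : (k + 2 : ℝ) ≠ 0 := by positivity
  simp only [Nat.add_sub_cancel, show k + 2 - 1 = k + 1 by omega]
  push_cast
  field_simp
  ring

lemma tendsto_beta (k : ℕ) :
    Filter.Tendsto (fun u : ℝ => (1 - Real.exp (-u)) ^ (k + 1) / (k + 1)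
      - (1 - Real.exp (-u)) ^ (k + 2) / (k + 2)) Filter.atTop
      (nhds (1 / ((k + 1) * (k + 2)))) := by
  have h0 : Filter.Tendsto (fun u : ℝ => 1 - Real.exp (-u)) Filter.atTop (nhds 1) := by
    simpa using Real.tendsto_exp_neg_atTop_nhds_zero.const_sub (1 : ℝ)
  have := ((h0.pow (k + 1)).div_const ((k : ℝ) + 1)).sub ((h0.pow (k + 2)).div_const ((k : ℝ) + 2))
  convert this using 2
  have a1 : (k + 1 : ℝ) ≠ 0 := by positivity
  have a2 : (k + 2 : ℝ) ≠ 0 := by positivity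
  simp only [one_pow]
  field_simp
  ring

lemma exp_neg_mem {u : ℝ} (hu : u ∈ Set.Ioi (0 : ℝ)) : 0 ≤ 1 - Real.exp (-u) ∧
    1 - Real.exp (-u) < 1 := by
  have h1 : Real.exp (-u) ≤ 1 := Real.exp_le_one_iff.2 (by simpa using (le_of_lt hu))
  have h2 := Real.exp_pos (-u)
  constructor <;> linarith

lemma integrable_beta (k : ℕ) : MeasureTheory.IntegrableOn
    (fun u : ℝ => (1 - Real.exp (-u)) ^ k * Real.exp (-u) ^ 2) (Set.Ioi 0) :=
  MeasureTheory.integrableOn_Ioi_deriv_of_nonneg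
    (hasDerivAt_beta k 0).continuousAt.continuousWithinAt (fun u _ => hasDerivAt_beta k u)
    (fun _ hu => mul_nonneg (pow_nonneg (exp_neg_mem hu).1 k) (sq_nonneg _)) (tendsto_beta k)

lemma integral_beta (k : ℕ) : ∫ u in Set.Ioi (0 : ℝ), (1 - Real.exp (-u)) ^ k * Real.exp (-u) ^ 2 =
    1 / ((k + 1) * (k + 2) : ℝ) := by
  rw [MeasureTheory.integral_Ioi_of_hasDerivAt_of_tendsto
    (hasDerivAt_beta k 0).continuousAt.continuousWithinAt (fun u _ => hasDerivAt_beta k u)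
    (integrable_beta k) (tendsto_beta k)]
  simp

/-- Tail estimate by telescoping `1 / ((k + 1) (k + 2)) = 1 / (k + 1) - 1 / (k + 2)`. -/
lemma sum_Ico_le {c : ℝ} {N : ℕ} (hc : ∀ k ≥ N, coeff k freeS ≤ c) (d : ℕ) :
    ∑ k ∈ range (N + d), coeff k freeS / ((k + 1) * (k + 2) : ℝ) ≤
      ∑ k ∈ range N, coeff k freeS / ((k + 1) * (k + 2) : ℝ) + c * (1 / (N + 1) - 1 / (N + d + 1)) := by
  induction d with
  | zero => simp
  | succ d ih =>
    rw [← add_assoc, Finset.sum_range_succ]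
    have h : coeff (N + d) freeS / (((N + d : ℕ) + 1) * ((N + d : ℕ) + 2) : ℝ) ≤
        c / (((N + d : ℕ) + 1) * ((N + d : ℕ) + 2) : ℝ) :=
      div_le_div_of_nonneg_right (hc _ (by omega)) (by positivity)
    have e : c / (((N + d : ℕ) + 1) * ((N + d : ℕ) + 2) : ℝ) =
        c * (1 / (N + d + 1) - 1 / (N + (d + 1 : ℕ) + 1)) := by
      push_cast
      have a1 : (N + d + 1 : ℝ) ≠ 0 := by positivity
      have a2 : (N + d + 2 : ℝ) ≠ 0 := by positivity
      have a3 : (N + (d + 1) + 1 : ℝ) ≠ 0 := by positivity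
      field_simp
      ring
    rw [e] at h
    linarith

/-- Termwise integration of `e^(-u) / (1 + u) = ∑ φ_k (1 - e^(-u))^k e^(-2u)`, which is the expansion
of `φ` at `x = 1 - e^(-u)`. -/
lemma hasSum_gompertz :
    HasSum (fun k : ℕ => coeff k freeS / ((k + 1) * (k + 2) : ℝ)) gompertz := by
  have hbeta : ∀ k : ℕ, ∫ u in Set.Ioi (0 : ℝ),
      coeff k freeS * ((1 - Real.exp (-u)) ^ k * Real.exp (-u) ^ 2) =
      coeff k freeS / ((k + 1) * (k + 2)) := fun k => by
    rw [MeasureTheory.integral_const_mul, integral_beta, mul_one_div]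
  have hterm : ∀ k : ℕ, 0 ≤ coeff k freeS / ((k + 1) * (k + 2) : ℝ) := fun k =>
    div_nonneg (coeff_freeS_nonneg k) (by positivity)
  have hsummable : Summable (fun k : ℕ => coeff k freeS / ((k + 1) * (k + 2) : ℝ)) := by
    refine summable_of_sum_range_le (c := 1) hterm fun n => ?_
    have := sum_Ico_le (c := 1) (N := 0) (fun k _ => coeff_freeS_le_one k) n
    simp only [zero_add, Finset.range_zero, Finset.sum_empty, Nat.cast_zero, one_mul] at this
    have hp : (0 : ℝ) ≤ 1 / (n + 1) := by positivity
    linarith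
  have hS := MeasureTheory.hasSum_integral_of_summable_integral_norm
    (μ := MeasureTheory.volume.restrict (Set.Ioi (0 : ℝ)))
    (F := fun (k : ℕ) (u : ℝ) => coeff k freeS * ((1 - Real.exp (-u)) ^ k * Real.exp (-u) ^ 2))
    (fun k => (integrable_beta k).const_mul _) (by
      convert hsummable using 2 with k
      rw [← hbeta k]
      refine MeasureTheory.setIntegral_congr_fun measurableSet_Ioi fun u hu => ?_
      exact Real.norm_of_nonneg (mul_nonneg (coeff_freeS_nonneg k)
        (mul_nonneg (pow_nonneg (exp_neg_mem hu).1 k) (sq_nonneg _))))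
  simp_rw [hbeta] at hS
  refine (show gompertz = _ from ?_) ▸ hS
  refine MeasureTheory.setIntegral_congr_fun measurableSet_Ioi fun u hu => ?_
  have h := (hasSum_freeS (exp_neg_mem hu).1 (exp_neg_mem hu).2).mul_right (Real.exp (-u) ^ 2)
  rw [sub_sub_cancel, Real.log_exp, sub_neg_eq_add] at h
  simp only [← mul_assoc]
  rw [h.tsum_eq]
  have h1 : (1 + u) ≠ 0 := by have := Set.mem_Ioi.1 hu; linarith
  have h2 := Real.exp_ne_zero (-u)
  field_simp

/-- The mean multiplicity of the eigenvalue `0` of a random recursive tree satisfies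
`E[N_0(Rec_n)] = (2G - 1)n + O(1/log n)`, where `G` is the Euler–Gompertz constant. -/
theorem stmt14 :
    ∃ C : ℝ, 0 < C ∧ ∃ N : ℕ, ∀ n ≥ N,
      |meanAdjMult 0 n - (2 * gompertz - 1) * n| ≤ C / Real.log n := by
  refine ⟨8, by norm_num, 2, fun n hn => ?_⟩
  obtain ⟨N, rfl⟩ := Nat.exists_eq_add_of_le' (show 1 ≤ n by omega)
  have hN : 1 ≤ N := by omega
  set c : ℝ := 4 / Real.log ((N + 1 : ℕ) : ℝ) with hcdef
  have hlog : 0 < Real.log ((N + 1 : ℕ) : ℝ) := Real.log_pos (by exact_mod_cast hn)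
  have hc0 : 0 ≤ c := by positivity
  have hc : ∀ k ≥ N, coeff k freeS ≤ c := by
    intro k hk
    refine (coeff_freeS_le (hN.trans hk)).trans ?_
    have : Real.log ((N + 1 : ℕ) : ℝ) ≤ Real.log (2 * k) :=
      Real.log_le_log (by positivity) (by exact_mod_cast (by omega : N + 1 ≤ 2 * k))
    exact div_le_div_of_nonneg_left (by norm_num) hlog (by linarith)
  set P : ℝ := ∑ k ∈ range N, coeff k freeS / ((k + 1) * (k + 2) : ℝ) with hP
  have hlow : P ≤ gompertz := sum_le_hasSum _
    (fun k _ => div_nonneg (coeff_freeS_nonneg k) (by positivity)) hasSum_gompertz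
  have hpos : (0 : ℝ) < N + 1 := by positivity
  have hup : gompertz ≤ P + c / (N + 1) := by
    have ht := (Filter.tendsto_add_atTop_iff_nat N).2 hasSum_gompertz.tendsto_sum_nat
    refine le_of_tendsto' ht fun d => ?_
    rw [add_comm d N]
    refine (sum_Ico_le hc d).trans ?_
    have hp : 0 ≤ c * (1 / (N + d + 1 : ℝ)) := by positivity
    have : c / (N + 1 : ℝ) = c * (1 / (N + 1)) := by ring
    rw [this, mul_sub]
    linarith
  rw [meanAdjMult_eq, sum_coeff_div_choose]
  have h1 : 0 ≤ (N + 1) * (gompertz - P) := mul_nonneg hpos.le (by linarith)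
  have h2 : (N + 1) * (gompertz - P) ≤ c := by
    calc _ ≤ (N + 1) * (c / (N + 1)) := mul_le_mul_of_nonneg_left (by linarith) hpos.le
      _ = c := by field_simp
  have h3 := coeff_freeS_nonneg N
  have h4 := hc N le_rfl
  have e8 : 8 / Real.log ((N + 1 : ℕ) : ℝ) = 2 * c := by rw [hcdef]; ring
  rw [e8, abs_le]
  push_cast
  constructor <;> nlinarith
end

section
/- The variance of the multiplicity of the eigenvalue 0 of the adjacency matrix of a random recursive tree on n vertices satisfies Var[N_0(Rec_n)] = K₁·n + O(n/log n) as n → ∞, where K₁ = 4(G−1)(G−2) − 4∫_0^∞ (log(1+u))² e^{−u} du and G is the Euler–Gompertz constant; i.e., there exist constants C > 0 and N such that for all n ≥ N, |Var[N_0(Rec_n)] − K₁ n| ≤ C·n/log n. -/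
/-- `Var[N_α(Rec_n)]`: the variance of `N_α(T_p)` over all parent functions `p`. -/
noncomputable def varAdjMult (α : ℝ) (n : ℕ) : ℝ :=
  (∑ p : ParentSpace n, ((adjMult (recTree p) α : ℝ) - meanAdjMult α n) ^ 2)
    / Fintype.card (ParentSpace n)

/-- The variance constant
`K₁ = 4(G-1)(G-2) - 4∫_0^∞ (log(1+u))² e^{-u} du ≈ 0.138629`. -/
noncomputable def K1 : ℝ :=
  4 * (gompertz - 1) * (gompertz - 2)
    - 4 * ∫ u in Set.Ioi (0 : ℝ), (Real.log (1 + u)) ^ 2 * Real.exp (-u)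

/-! ### Plane binary terms encoding rooted trees -/

/-- Terms of the free magma on labels `V`. A term encodes a rooted tree whose vertices are its
labels: `node a b` is the tree obtained from `a` by attaching the root of `b` as a new child of
the root of `a`. -/
inductive LTree (V : Type) : Type
  | leaf : V → LTree V
  | node : LTree V → LTree V → LTree V

/-- Unlabelled terms: the isomorphism type of the construction of an `LTree`. -/
inductive Shape : Type
  | leaf : Shape
  | node : Shape → Shape → Shape

namespace Shape

/-- `true` iff the root is *free*, i.e. missed by the greedy (leaves first) maximum matching:
equivalently, no child of the root is free. -/
def free : Shape → Bool
  | leaf => true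
  | node a b => free a && !free b

/-- The size of the greedy maximum matching. Joining two free roots creates one more matching
edge. -/
def mat : Shape → ℕ
  | leaf => 0
  | node a b => mat a + mat b + (if free a && free b then 1 else 0)

/-- Number of vertices. -/
def size : Shape → ℕ
  | leaf => 1
  | node a b => size a + size b

end Shape

namespace LTree

variable {V : Type}

/-- Forget the labels. -/
def shape : LTree V → Shape
  | leaf _ => .leaf
  | node a b => .node a.shape b.shape

/-- The label of the root. -/
def root : LTree V → V
  | leaf v => v
  | node a _ => a.root

/-- The set of labels. -/
def labels [DecidableEq V] : LTree V → Finset V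
  | leaf v => {v}
  | node a b => a.labels ∪ b.labels

/-- No label is used twice. -/
def WF [DecidableEq V] : LTree V → Prop
  | leaf _ => True
  | node a b => a.WF ∧ b.WF ∧ Disjoint a.labels b.labels

/-- Adjacency in the encoded tree. -/
def adj : LTree V → V → V → Prop
  | leaf _, _, _ => False
  | node a b, i, j => a.adj i j ∨ b.adj i j ∨ (i = a.root ∧ j = b.root) ∨ (i = b.root ∧ j = a.root)

/-- The adjacency matrix of the encoded tree (for `WF` terms), on all of `V`. -/
noncomputable def adjM [DecidableEq V] : LTree V → Matrix V V ℝ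
  | leaf _ => 0
  | node a b => a.adjM + b.adjM + Matrix.vecMulVec (Pi.single a.root 1) (Pi.single b.root 1)
      + Matrix.vecMulVec (Pi.single b.root 1) (Pi.single a.root 1)

variable [DecidableEq V]

lemma root_mem (t : LTree V) : t.root ∈ t.labels := by
  induction t with
  | leaf v => simp [root, labels]
  | node a b iha _ => simp [root, labels, iha]

lemma adj_mem (t : LTree V) {i j : V} (h : t.adj i j) : i ∈ t.labels ∧ j ∈ t.labels := by
  induction t with
  | leaf v => exact h.elim
  | node a b iha ihb =>
    simp only [labels, Finset.mem_union]
    rcases h with h | h | ⟨rfl, rfl⟩ | ⟨rfl, rfl⟩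
    · exact ⟨.inl (iha h).1, .inl (iha h).2⟩
    · exact ⟨.inr (ihb h).1, .inr (ihb h).2⟩
    · exact ⟨.inl a.root_mem, .inr b.root_mem⟩
    · exact ⟨.inr b.root_mem, .inl a.root_mem⟩

open Classical in
lemma adjM_apply (t : LTree V) (ht : t.WF) (i j : V) :
    t.adjM i j = if t.adj i j then 1 else 0 := by
  induction t with
  | leaf v => simp [adjM, adj]
  | node a b iha ihb =>
    obtain ⟨ha, hb, hd⟩ := ht
    have hd' := Finset.disjoint_left.mp hd
    simp only [adjM, Matrix.add_apply, iha ha, ihb hb, Matrix.vecMulVec_apply, Pi.single_apply, adj]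
    have h1 : a.adj i j → i ∈ a.labels ∧ j ∈ a.labels := a.adj_mem
    have h2 : b.adj i j → i ∈ b.labels ∧ j ∈ b.labels := b.adj_mem
    have h3 := a.root_mem
    have h4 := b.root_mem
    by_cases e1 : a.adj i j <;> by_cases e2 : b.adj i j <;> by_cases e3 : i = a.root <;>
      by_cases e4 : j = b.root <;> by_cases e5 : i = b.root <;> by_cases e6 : j = a.root <;>
      simp_all

end LTree

/-! ### Rank of the adjacency matrix -/

open Matrix

/-- The rank is additive for square matrices supported on disjoint sets of indices. -/
lemma rank_add_of_disjoint {V : Type} [Fintype V] [DecidableEq V] (A B : Matrix V V ℝ)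
    (S T : Finset V) (hST : Disjoint S T) (hA : ∀ i j, A i j ≠ 0 → i ∈ S ∧ j ∈ S)
    (hB : ∀ i j, B i j ≠ 0 → i ∈ T ∧ j ∈ T) : (A + B).rank = A.rank + B.rank := by
  have hd := Finset.disjoint_left.mp hST
  have hsup : LinearMap.range (A + B).mulVecLin
      = LinearMap.range A.mulVecLin ⊔ LinearMap.range B.mulVecLin := by
    apply le_antisymm
    · rintro _ ⟨v, rfl⟩
      rw [mulVecLin_apply, add_mulVec]
      exact Submodule.add_mem_sup ⟨v, rfl⟩ ⟨v, rfl⟩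
    · refine sup_le ?_ ?_
      · rintro _ ⟨v, rfl⟩
        refine ⟨fun i => if i ∈ S then v i else 0, ?_⟩
        ext i
        simp only [mulVecLin_apply, mulVec, dotProduct, Matrix.add_apply]
        refine Finset.sum_congr rfl fun j _ => ?_
        by_cases h : j ∈ S
        · have : B i j = 0 := by
            by_contra h0
            exact hd h (hB i j h0).2
          simp [h, this]
        · have : A i j = 0 := by
            by_contra h0
            exact h (hA i j h0).2
          simp [h, this]
      · rintro _ ⟨v, rfl⟩
        refine ⟨fun i => if i ∈ T then v i else 0, ?_⟩
        ext i
        simp only [mulVecLin_apply, mulVec, dotProduct, Matrix.add_apply]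
        refine Finset.sum_congr rfl fun j _ => ?_
        by_cases h : j ∈ T
        · have : A i j = 0 := by
            by_contra h0
            exact hd (hA i j h0).2 h
          simp [h, this]
        · have : B i j = 0 := by
            by_contra h0
            exact h (hB i j h0).2
          simp [h, this]
  have hdisj : LinearMap.range A.mulVecLin ⊓ LinearMap.range B.mulVecLin = ⊥ := by
    rw [eq_bot_iff]
    rintro x ⟨⟨v, hv⟩, ⟨w, hw⟩⟩
    rw [Submodule.mem_bot]
    ext i
    by_cases h : i ∈ S
    · rw [← hw]
      simp only [mulVecLin_apply, mulVec, dotProduct, Pi.zero_apply]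
      refine Finset.sum_eq_zero fun j _ => ?_
      have : B i j = 0 := by
        by_contra h0
        exact hd h (hB i j h0).1
      simp [this]
    · rw [← hv]
      simp only [mulVecLin_apply, mulVec, dotProduct, Pi.zero_apply]
      refine Finset.sum_eq_zero fun j _ => ?_
      have : A i j = 0 := by
        by_contra h0
        exact h (hA i j h0).1
      simp [this]
  have := Submodule.finrank_sup_add_finrank_inf_eq (LinearMap.range A.mulVecLin)
    (LinearMap.range B.mulVecLin)
  rw [← hsup, hdisj, finrank_bot, add_zero] at this
  exact this

/-- Joining `r` and `s` does not change the rank if `e_s = N w` for some `w` vanishing at `r` and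
`s`: the new edge is removed by a congruence. -/
lemma rank_join_eq {V : Type} [Fintype V] [DecidableEq V] (N : Matrix V V ℝ) (hN : Nᵀ = N)
    (r s : V) (w : V → ℝ) (hw : N *ᵥ w = Pi.single s 1) (hr : w r = 0) (hs : w s = 0) :
    (N + vecMulVec (Pi.single r 1) (Pi.single s 1)
      + vecMulVec (Pi.single s 1) (Pi.single r 1)).rank = N.rank := by
  have hw' : w ᵥ* N = Pi.single s 1 := by
    rw [← hw, ← vecMul_transpose, hN]
  have key : N + vecMulVec (Pi.single r 1) (Pi.single s 1)
      + vecMulVec (Pi.single s 1) (Pi.single r 1)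
      = (1 + vecMulVec (Pi.single r 1) w) * N * (1 + vecMulVec w (Pi.single r 1)) := by
    rw [add_mul, one_mul, mul_add, mul_one, vecMulVec_mul, hw', add_mul, mul_vecMulVec, hw,
      vecMulVec_mul_vecMulVec]
    simp [hs]
  have u1 : IsUnit (1 + vecMulVec (Pi.single r (1:ℝ)) w) := by
    refine IsUnit.of_mul_eq_one (1 - vecMulVec (Pi.single r (1:ℝ)) w) ?_
    rw [add_mul, one_mul, mul_sub, mul_one, vecMulVec_mul_vecMulVec]
    simp [hr]
  have u2 : IsUnit (1 + vecMulVec w (Pi.single r (1:ℝ))) := by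
    refine IsUnit.of_mul_eq_one (1 - vecMulVec w (Pi.single r (1:ℝ))) ?_
    rw [add_mul, one_mul, mul_sub, mul_one, vecMulVec_mul_vecMulVec]
    simp [hr]
  rw [key, rank_mul_eq_left_of_isUnit_det _ _ ((isUnit_iff_isUnit_det _).mp u2),
    rank_mul_eq_right_of_isUnit_det _ _ ((isUnit_iff_isUnit_det _).mp u1)]

/-- Joining `r` and `s` raises the rank by two if the kernel separates `r` and `s`. -/
lemma rank_join_add_two {V : Type} [Fintype V] [DecidableEq V] (N : Matrix V V ℝ) (hN : Nᵀ = N)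
    (r s : V) (v w : V → ℝ) (hv : N *ᵥ v = 0) (hw : N *ᵥ w = 0) (hvr : v r = 1) (hvs : v s = 0)
    (hwr : w r = 0) (hws : w s = 1) :
    (N + vecMulVec (Pi.single r 1) (Pi.single s 1)
      + vecMulVec (Pi.single s 1) (Pi.single r 1)).rank = N.rank + 2 := by
  set M := N + vecMulVec (Pi.single r 1) (Pi.single s 1)
      + vecMulVec (Pi.single s 1) (Pi.single r 1) with hM
  have hMz : ∀ z, M *ᵥ z = N *ᵥ z + (z s • Pi.single r 1 + z r • Pi.single s 1) := by
    intro z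
    rw [hM, add_mulVec, add_mulVec, vecMulVec_mulVec, vecMulVec_mulVec]
    simp [add_assoc]
  have hMv : M *ᵥ v = Pi.single s 1 := by rw [hMz, hv, hvr, hvs]; simp
  have hMw : M *ᵥ w = Pi.single r 1 := by rw [hMz, hw, hwr, hws]; simp
  have hrange : LinearMap.range M.mulVecLin = LinearMap.range N.mulVecLin
      ⊔ Submodule.span ℝ {Pi.single r 1} ⊔ Submodule.span ℝ {Pi.single s 1} := by
    apply le_antisymm
    · rintro _ ⟨z, rfl⟩
      rw [mulVecLin_apply, hMz, ← add_assoc]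
      refine Submodule.add_mem_sup (Submodule.add_mem_sup ⟨z, rfl⟩ ?_) ?_
      · exact Submodule.smul_mem _ _ (Submodule.mem_span_singleton_self _)
      · exact Submodule.smul_mem _ _ (Submodule.mem_span_singleton_self _)
    · have h1 : Pi.single r 1 ∈ LinearMap.range M.mulVecLin := ⟨w, hMw⟩
      have h2 : Pi.single s 1 ∈ LinearMap.range M.mulVecLin := ⟨v, hMv⟩
      refine sup_le (sup_le ?_ ?_) ?_
      · rintro _ ⟨z, rfl⟩
        have : N *ᵥ z = M *ᵥ z - (z s • Pi.single r 1 + z r • Pi.single s 1) := by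
          rw [hMz]; abel
        rw [mulVecLin_apply, this]
        exact Submodule.sub_mem _ ⟨z, rfl⟩
          (Submodule.add_mem _ (Submodule.smul_mem _ _ h1) (Submodule.smul_mem _ _ h2))
      · rwa [Submodule.span_singleton_le_iff_mem]
      · rwa [Submodule.span_singleton_le_iff_mem]
  -- vectors of the kernel are orthogonal to the range of the symmetric matrix `N`
  have orth : ∀ k z, N *ᵥ k = 0 → k ⬝ᵥ (N *ᵥ z) = 0 := by
    intro k z hk
    rw [dotProduct_mulVec, ← mulVec_transpose, hN, hk, zero_dotProduct]
  have n1 : Pi.single r 1 ∉ LinearMap.range N.mulVecLin := by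
    rintro ⟨z, hz⟩
    have := orth v z hv
    rw [mulVecLin_apply] at hz
    rw [hz] at this
    simp [hvr] at this
  have n2 : Pi.single s 1 ∉ LinearMap.range N.mulVecLin
      ⊔ Submodule.span ℝ {Pi.single r 1} := by
    intro h
    obtain ⟨_, ⟨z, rfl⟩, y, hy, hzy⟩ := Submodule.mem_sup.mp h
    obtain ⟨c, rfl⟩ := Submodule.mem_span_singleton.mp hy
    have := orth w z hw
    rw [mulVecLin_apply] at hzy
    rw [eq_sub_of_add_eq hzy] at this
    simp [hws, hwr, dotProduct_sub] at this
  have e1 := Submodule.finrank_sup_span_singleton n1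
  have e2 := Submodule.finrank_sup_span_singleton n2
  rw [← hrange, e1] at e2
  exact e2

lemma LTree.adjM_mem {V : Type} [DecidableEq V] (t : LTree V) (ht : t.WF) (i j : V)
    (h : t.adjM i j ≠ 0) : i ∈ t.labels ∧ j ∈ t.labels := by
  classical
  rw [t.adjM_apply ht] at h
  by_contra h'
  exact h (if_neg fun h2 => h' (t.adj_mem h2))

lemma LTree.adjM_transpose {V : Type} [DecidableEq V] (t : LTree V) : t.adjMᵀ = t.adjM := by
  induction t with
  | leaf v => simp [adjM]
  | node a b iha ihb =>
    simp only [adjM, transpose_add, iha, ihb, transpose_vecMulVec]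
    abel

lemma LTree.adjM_mulVec_of_disjoint {V : Type} [Fintype V] [DecidableEq V] (t : LTree V)
    (ht : t.WF) (v : V → ℝ) (hv : ∀ i ∈ t.labels, v i = 0) : t.adjM *ᵥ v = 0 := by
  ext i
  simp only [mulVec, dotProduct, Pi.zero_apply]
  refine Finset.sum_eq_zero fun j _ => ?_
  by_cases h : t.adjM i j = 0
  · simp [h]
  · simp [hv j (t.adjM_mem ht i j h).2]

/-- If the root is free then some kernel vector is nonzero at the root; otherwise `e_root` is the
image of a vector vanishing at the root. The rank is twice the matching number. -/
lemma LTree.rank_aux {V : Type} [Fintype V] [DecidableEq V] (t : LTree V) (ht : t.WF) :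
    (t.shape.free = true → ∃ v : V → ℝ, (∀ i ∉ t.labels, v i = 0) ∧ t.adjM *ᵥ v = 0 ∧
      v t.root = 1) ∧
    (t.shape.free = false → ∃ v : V → ℝ, (∀ i ∉ t.labels, v i = 0) ∧
      t.adjM *ᵥ v = Pi.single t.root 1 ∧ v t.root = 0) ∧
    t.adjM.rank = 2 * t.shape.mat := by
  induction t with
  | leaf u =>
    refine ⟨fun _ => ⟨Pi.single u 1, ?_, ?_, ?_⟩, ?_, ?_⟩
    · intro i hi
      simp only [labels, Finset.mem_singleton] at hi
      simp [hi]
    · rw [adjM, zero_mulVec]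
    · simp [root]
    · simp [shape, Shape.free]
    · simp [adjM, shape, Shape.mat]
  | node a b iha ihb =>
    obtain ⟨ha, hb, hd⟩ := ht
    obtain ⟨a1, a0, ar⟩ := iha ha
    obtain ⟨b1, b0, br⟩ := ihb hb
    have hd' := Finset.disjoint_left.mp hd
    have hbr : b.root ∉ a.labels := fun h => hd' h b.root_mem
    have har : a.root ∉ b.labels := hd' a.root_mem
    have hsum : (a.adjM + b.adjM).rank = a.adjM.rank + b.adjM.rank :=
      rank_add_of_disjoint _ _ _ _ hd (a.adjM_mem ha) (b.adjM_mem hb)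
    have hsymm : (a.adjM + b.adjM)ᵀ = a.adjM + b.adjM := by
      rw [transpose_add, a.adjM_transpose, b.adjM_transpose]
    have killa : ∀ v : V → ℝ, (∀ i ∉ b.labels, v i = 0) → a.adjM *ᵥ v = 0 := fun v hv =>
      a.adjM_mulVec_of_disjoint ha v fun i hi => hv i (hd' hi)
    have killb : ∀ v : V → ℝ, (∀ i ∉ a.labels, v i = 0) → b.adjM *ᵥ v = 0 := fun v hv =>
      b.adjM_mulVec_of_disjoint hb v fun i hi => hv i (fun h => hd' h hi)
    have hmv : ∀ z : V → ℝ, (node a b).adjM *ᵥ z = a.adjM *ᵥ z + b.adjM *ᵥ z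
        + (z b.root • Pi.single a.root 1 + z a.root • Pi.single b.root 1) := by
      intro z
      rw [adjM, add_mulVec, add_mulVec, add_mulVec, vecMulVec_mulVec, vecMulVec_mulVec]
      simp [add_assoc]
    simp only [shape, Shape.free, Shape.mat, root, labels, Finset.mem_union, not_or]
    cases hfa : a.shape.free <;> cases hfb : b.shape.free
    · obtain ⟨u, hu1, hu2, hu3⟩ := a0 hfa
      refine ⟨by simp, fun _ => ⟨u, fun i hi => hu1 i hi.1, ?_, hu3⟩, ?_⟩
      · rw [hmv, hu2, killb u hu1, hu3, hu1 _ hbr]; simp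
      · obtain ⟨w, hw1, hw2, hw3⟩ := b0 hfb
        rw [adjM, rank_join_eq _ hsymm _ _ w (by rw [add_mulVec, killa w hw1, hw2, zero_add])
          (hw1 _ har) hw3, hsum, ar, br]
        simp; ring
    · obtain ⟨u, hu1, hu2, hu3⟩ := a0 hfa
      refine ⟨by simp, fun _ => ⟨u, fun i hi => hu1 i hi.1, ?_, hu3⟩, ?_⟩
      · rw [hmv, hu2, killb u hu1, hu3, hu1 _ hbr]; simp
      · rw [adjM, add_right_comm, rank_join_eq _ hsymm _ _ u
          (by rw [add_mulVec, killb u hu1, hu2, add_zero]) (hu1 _ hbr) hu3, hsum, ar, br]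
        simp; ring
    · obtain ⟨u, hu1, hu2, hu3⟩ := a1 hfa
      obtain ⟨w, hw1, hw2, hw3⟩ := b0 hfb
      refine ⟨fun _ => ⟨u - w, fun i hi => ?_, ?_, ?_⟩, by simp, ?_⟩
      · simp [hu1 i hi.1, hw1 i hi.2]
      · rw [hmv, mulVec_sub, mulVec_sub, hu2, killb u hu1, killa w hw1, hw2]
        simp [hu3, hw3, hu1 _ hbr, hw1 _ har]
      · simp [hu3, hw1 _ har]
      · rw [adjM, rank_join_eq _ hsymm _ _ w (by rw [add_mulVec, killa w hw1, hw2, zero_add])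
          (hw1 _ har) hw3, hsum, ar, br]
        simp; ring
    · obtain ⟨u, hu1, hu2, hu3⟩ := a1 hfa
      obtain ⟨w, hw1, hw2, hw3⟩ := b1 hfb
      refine ⟨by simp, fun _ => ⟨w, fun i hi => hw1 i hi.2, ?_, hw1 _ har⟩, ?_⟩
      · rw [hmv, hw2, killa w hw1, hw3, hw1 _ har]; simp
      · rw [adjM, rank_join_add_two _ hsymm _ _ u w
          (by rw [add_mulVec, hu2, killb u hu1, add_zero])
          (by rw [add_mulVec, hw2, killa w hw1, add_zero]) hu3 (hu1 _ hbr) (hw1 _ har) hw3,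
          hsum, ar, br]
        simp; ring

/-! ### Recursive trees as terms -/

namespace LTree

/-- Attach a new vertex `Fin.last n` to the vertex `v`, i.e. replace the leaf `v` of the term by
`node v (last n)`. -/
def grow {n : ℕ} (v : Fin n) : LTree (Fin n) → LTree (Fin (n + 1))
  | leaf w => if w = v then node (leaf w.castSucc) (leaf (Fin.last n)) else leaf w.castSucc
  | node a b => node (a.grow v) (b.grow v)

lemma root_grow {n : ℕ} (v : Fin n) (t : LTree (Fin n)) : (t.grow v).root = t.root.castSucc := by
  induction t with
  | leaf w => by_cases h : w = v <;> simp [grow, h, root]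
  | node a b iha _ => simp [grow, root, iha]

lemma labels_grow {n : ℕ} (v : Fin n) (t : LTree (Fin n)) :
    (t.grow v).labels = t.labels.image Fin.castSucc ∪ (if v ∈ t.labels then {Fin.last n} else ∅) := by
  induction t with
  | leaf w =>
    by_cases h : w = v
    · simp [grow, h, labels]
    · simp [grow, h, labels, Ne.symm h]
  | node a b iha ihb =>
    simp only [grow, labels, iha, ihb, Finset.image_union, Finset.mem_union]
    by_cases h1 : v ∈ a.labels <;> by_cases h2 : v ∈ b.labels <;> ext x <;> simp [h1, h2]

lemma wf_grow {n : ℕ} (v : Fin n) (t : LTree (Fin n)) (ht : t.WF) : (t.grow v).WF := by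
  induction t with
  | leaf w =>
    by_cases h : w = v
    · simp [grow, h, WF, labels, Fin.castSucc_ne_last]
    · simp [grow, h, WF]
  | node a b iha ihb =>
    obtain ⟨ha, hb, hd⟩ := ht
    refine ⟨iha ha, ihb hb, ?_⟩
    rw [labels_grow, labels_grow]
    have hd' := Finset.disjoint_left.mp hd
    rw [Finset.disjoint_left]
    intro x hx hy
    rcases Finset.mem_union.mp hx with hx | hx <;> rcases Finset.mem_union.mp hy with hy | hy
    · obtain ⟨i, hi, rfl⟩ := Finset.mem_image.mp hx
      obtain ⟨j, hj, hij⟩ := Finset.mem_image.mp hy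
      rw [Fin.castSucc_injective _ hij] at hj
      exact hd' hi hj
    · obtain ⟨i, hi, rfl⟩ := Finset.mem_image.mp hx
      split_ifs at hy <;> simp_all [Fin.castSucc_ne_last]
    · obtain ⟨i, hi, rfl⟩ := Finset.mem_image.mp hy
      split_ifs at hx <;> simp_all [Fin.castSucc_ne_last]
    · split_ifs at hx hy with h1 h2 <;> simp_all

lemma grow_of_notMem {n : ℕ} (v : Fin n) (t : LTree (Fin n)) (hv : v ∉ t.labels) :
    (t.grow v).shape = t.shape := by
  induction t with
  | leaf w =>
    have : w ≠ v := by simpa [labels, eq_comm] using hv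
    simp [grow, this, shape]
  | node a b iha ihb =>
    simp only [labels, Finset.mem_union, not_or] at hv
    simp [grow, shape, iha hv.1, ihb hv.2]

lemma adj_grow {n : ℕ} (v : Fin n) (t : LTree (Fin n)) (i j : Fin (n + 1)) :
    (t.grow v).adj i j ↔ (∃ i' j', i = Fin.castSucc i' ∧ j = Fin.castSucc j' ∧ t.adj i' j') ∨
      (v ∈ t.labels ∧ ((i = v.castSucc ∧ j = Fin.last n) ∨ (i = Fin.last n ∧ j = v.castSucc))) := by
  induction t with
  | leaf w =>
    by_cases h : w = v
    · subst h
      simp [grow, adj, labels, root]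
    · simp [grow, h, adj, labels, Ne.symm h]
  | node a b iha ihb =>
    simp only [grow, adj, iha, ihb, root_grow, labels, Finset.mem_union]
    constructor
    · rintro ((⟨i', j', h1, h2, h3⟩ | h) | (⟨i', j', h1, h2, h3⟩ | h) | h | h)
      · exact .inl ⟨i', j', h1, h2, .inl h3⟩
      · exact .inr ⟨.inl h.1, h.2⟩
      · exact .inl ⟨i', j', h1, h2, .inr (.inl h3)⟩
      · exact .inr ⟨.inr h.1, h.2⟩
      · exact .inl ⟨_, _, h.1, h.2, .inr (.inr (.inl ⟨rfl, rfl⟩))⟩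
      · exact .inl ⟨_, _, h.1, h.2, .inr (.inr (.inr ⟨rfl, rfl⟩))⟩
    · rintro (⟨i', j', h1, h2, h3 | h3 | ⟨rfl, rfl⟩ | ⟨rfl, rfl⟩⟩ | ⟨h | h, h'⟩)
      · exact .inl (.inl ⟨i', j', h1, h2, h3⟩)
      · exact .inr (.inl (.inl ⟨i', j', h1, h2, h3⟩))
      · exact .inr (.inr (.inl ⟨h1, h2⟩))
      · exact .inr (.inr (.inr ⟨h1, h2⟩))
      · exact .inl (.inr ⟨h, h'⟩)
      · exact .inr (.inl (.inr ⟨h, h'⟩))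

end LTree

/-- The term encoding the recursive tree with parent function `p`. -/
def termOf : (n : ℕ) → ParentSpace (n + 1) → LTree (Fin (n + 1))
  | 0, _ => .leaf 0
  | n + 1, p => (termOf n (fun j => p (Fin.castSucc j))).grow (p (Fin.last n))

lemma termOf_labels : ∀ (n : ℕ) (p : ParentSpace (n + 1)), (termOf n p).labels = Finset.univ
  | 0, _ => by
    ext x
    have := x.isLt
    simp only [termOf, LTree.labels, Finset.mem_singleton, Finset.mem_univ, iff_true]
    exact Fin.ext (by simp)
  | n + 1, p => by
    rw [termOf, LTree.labels_grow, termOf_labels n]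
    ext x
    refine Fin.lastCases ?_ (fun i => ?_) x <;> simp

lemma termOf_wf : ∀ (n : ℕ) (p : ParentSpace (n + 1)), (termOf n p).WF
  | 0, _ => by simp [termOf, LTree.WF]
  | n + 1, p => LTree.wf_grow _ _ (termOf_wf n _)

lemma termOf_adj : ∀ (n : ℕ) (p : ParentSpace (n + 1)) (i j : Fin (n + 1)),
    (termOf n p).adj i j ↔ ∃ k : Fin n, (i.val = k.val + 1 ∧ j.val = (p k).val) ∨
      (j.val = k.val + 1 ∧ i.val = (p k).val)
  | 0, _, i, j => by simp [termOf, LTree.adj]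
  | n + 1, p, i, j => by
    rw [termOf, LTree.adj_grow, termOf_labels n]
    simp only [termOf_adj n, Finset.mem_univ, true_and]
    constructor
    · rintro (⟨i', j', rfl, rfl, k, hk⟩ | h | h)
      · exact ⟨k.castSucc, hk⟩
      · exact ⟨Fin.last n, .inr (by simp [h.1, h.2])⟩
      · exact ⟨Fin.last n, .inl (by simp [h.1, h.2])⟩
    · rintro ⟨k, hk⟩
      induction k using Fin.lastCases with
      | last =>
        right
        rcases hk with hk | hk
        · exact .inr ⟨Fin.ext hk.1, Fin.ext hk.2⟩
        · exact .inl ⟨Fin.ext hk.2, Fin.ext hk.1⟩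
      | cast k =>
        left
        have h1 := (p k.castSucc).isLt
        have h2 := k.isLt
        have h3 : (k.castSucc).val = k.val := rfl
        refine ⟨⟨i.val, by omega⟩, ⟨j.val, by omega⟩, Fin.ext rfl, Fin.ext rfl, k, hk⟩

lemma recTree_adj (n : ℕ) (p : ParentSpace (n + 1)) (i j : Fin (n + 1)) :
    (recTree p).Adj i j ↔ (termOf n p).adj i j := by
  rw [termOf_adj, recTree, SimpleGraph.fromRel_adj]
  constructor
  · rintro ⟨_, ⟨k, hk⟩ | ⟨k, hk⟩⟩
    · exact ⟨k, .inl hk⟩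
    · exact ⟨k, .inr hk⟩
  · rintro ⟨k, hk⟩
    have := (p k).isLt
    refine ⟨fun h => ?_, ?_⟩
    · subst h
      omega
    · rcases hk with hk | hk
      · exact .inl ⟨k, hk⟩
      · exact .inr ⟨k, hk⟩

/-- The nullity of a recursive tree is its order minus twice its matching number. -/
lemma adjMult_eq (n : ℕ) (p : ParentSpace (n + 1)) :
    (adjMult (recTree p) 0 : ℝ) = (n + 1 : ℝ) - 2 * ((termOf n p).shape.mat : ℝ) := by
  classical
  have hr := ((termOf n p).rank_aux (termOf_wf n p)).2.2
  have key : adjMult (recTree p) 0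
      = Module.finrank ℝ (LinearMap.ker ((termOf n p).adjM).mulVecLin) := by
    unfold adjMult eigMult
    have hM : (recTree p).adjMatrix ℝ = (termOf n p).adjM := by
      ext i j
      rw [SimpleGraph.adjMatrix_apply, LTree.adjM_apply _ (termOf_wf n p)]
      simp only [recTree_adj]
    rw [zero_smul, sub_zero]
    convert! congrArg (fun M : Matrix (Fin (n + 1)) (Fin (n + 1)) ℝ =>
      Module.finrank ℝ (LinearMap.ker M.mulVecLin)) hM
  have h := LinearMap.finrank_range_add_finrank_ker ((termOf n p).adjM).mulVecLin
  rw [← key] at h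
  change (termOf n p).adjM.rank + _ = _ at h
  rw [hr] at h
  simp only [Module.finrank_fintype_fun_eq_card, Fintype.card_fin] at h
  have h' : ((2 * (termOf n p).shape.mat + adjMult (recTree p) 0 : ℕ) : ℝ) = ((n + 1 : ℕ) : ℝ) := by
    rw [h]
  push_cast at h'
  linarith

/-! ### The leaf-insertion derivation -/

/-- `leafDFun Φ t` sums `Φ` over the terms obtained from `t` by inserting a new leaf vertex at each of
the vertices. -/
noncomputable def leafDFun (Φ : Shape → ℝ) : Shape → ℝ := fun t =>
  Shape.rec (motive := fun _ => (Shape → ℝ) → ℝ) (fun Ψ => Ψ (.node .leaf .leaf))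
    (fun a b iha ihb Ψ => iha (fun c => Ψ (.node c b)) + ihb (fun c => Ψ (.node a c))) t Φ

lemma leafDFun_leaf (Φ : Shape → ℝ) : leafDFun Φ .leaf = Φ (.node .leaf .leaf) := rfl

lemma leafDFun_node (Φ : Shape → ℝ) (a b : Shape) : leafDFun Φ (.node a b)
    = leafDFun (fun c => Φ (.node c b)) a + leafDFun (fun c => Φ (.node a c)) b := rfl

/-- `leafDFun` as a linear map. -/
noncomputable def leafD : (Shape → ℝ) →ₗ[ℝ] (Shape → ℝ) where
  toFun := leafDFun
  map_add' Φ Ψ := by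
    ext t
    induction t generalizing Φ Ψ with
    | leaf => rfl
    | node a b iha ihb =>
      have h1 := iha (fun c => Φ (.node c b)) (fun c => Ψ (.node c b))
      have h2 := ihb (fun c => Φ (.node a c)) (fun c => Ψ (.node a c))
      simp only [Pi.add_apply, leafDFun_node] at *
      change leafDFun ((fun c => Φ (.node c b)) + (fun c => Ψ (.node c b))) a
        + leafDFun ((fun c => Φ (.node a c)) + (fun c => Ψ (.node a c))) b = _
      rw [h1, h2]
      ring
  map_smul' r Φ := by
    ext t
    induction t generalizing Φ with
    | leaf => rfl
    | node a b iha ihb =>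
      have h1 := iha (fun c => Φ (.node c b))
      have h2 := ihb (fun c => Φ (.node a c))
      simp only [Pi.smul_apply, leafDFun_node, RingHom.id_apply, smul_eq_mul] at *
      change leafDFun (r • (fun c => Φ (.node c b))) a
        + leafDFun (r • (fun c => Φ (.node a c))) b = _
      rw [h1, h2]
      ring

lemma leafD_leaf (Φ : Shape → ℝ) : leafD Φ .leaf = Φ (.node .leaf .leaf) := rfl

lemma leafD_node (Φ : Shape → ℝ) (a b : Shape) : leafD Φ (.node a b)
    = leafD (fun c => Φ (.node c b)) a + leafD (fun c => Φ (.node a c)) b := rfl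

/-- Leibniz rule for iterates of `leafD`. -/
lemma leafD_leibniz (Φ φ ψ : Shape → ℝ) (h : ∀ a b, Φ (.node a b) = φ a * ψ b) (n : ℕ) :
    ∀ a b, (leafD^[n] Φ) (.node a b) = ∑ ij ∈ Finset.HasAntidiagonal.antidiagonal n,
      (n.choose ij.1 : ℝ) * ((leafD^[ij.1] φ) a * (leafD^[ij.2] ψ) b) := by
  induction n with
  | zero => intro a b; simp [h]
  | succ n ih =>
    intro a b
    rw [Finset.sum_antidiagonal_choose_succ_mul
      (fun i j => (leafD^[i] φ) a * (leafD^[j] ψ) b) n, Function.iterate_succ_apply', leafD_node]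
    have e1 : (fun c => (leafD^[n] Φ) (.node c b)) = ∑ ij ∈ Finset.HasAntidiagonal.antidiagonal n,
        ((n.choose ij.1 : ℝ) * (leafD^[ij.2] ψ) b) • (leafD^[ij.1] φ) := by
      ext c
      simp only [ih, Finset.sum_apply, Pi.smul_apply, smul_eq_mul]
      exact Finset.sum_congr rfl fun _ _ => by ring
    have e2 : (fun c => (leafD^[n] Φ) (.node a c)) = ∑ ij ∈ Finset.HasAntidiagonal.antidiagonal n,
        ((n.choose ij.1 : ℝ) * (leafD^[ij.1] φ) a) • (leafD^[ij.2] ψ) := by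
      ext c
      simp only [ih, Finset.sum_apply, Pi.smul_apply, smul_eq_mul]
      exact Finset.sum_congr rfl fun _ _ => by ring
    rw [e1, e2, map_sum, map_sum, Finset.sum_apply, Finset.sum_apply, add_comm]
    congr 1
    · refine Finset.sum_congr rfl fun ij _ => ?_
      rw [map_smul, ← Function.iterate_succ_apply' (f := leafD), Pi.smul_apply, smul_eq_mul]
      ring
    · refine Finset.sum_congr rfl fun ij hij => ?_
      rw [map_smul, ← Function.iterate_succ_apply' (f := leafD), Pi.smul_apply, smul_eq_mul,
        Nat.choose_symm_of_eq_add (Finset.HasAntidiagonal.mem_antidiagonal.mp hij).symm]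
      ring

/-- `leafD` is the sum over all attachments of one new vertex. -/
lemma sum_grow {n : ℕ} (Φ : Shape → ℝ) (t : LTree (Fin n)) (ht : t.WF) :
    ∑ v ∈ t.labels, Φ (t.grow v).shape = leafD Φ t.shape := by
  induction t generalizing Φ with
  | leaf w => simp [LTree.labels, LTree.grow, LTree.shape, leafD_leaf]
  | node a b iha ihb =>
    obtain ⟨ha, hb, hd⟩ := ht
    have hd' := Finset.disjoint_left.mp hd
    rw [LTree.labels, Finset.sum_union hd, LTree.shape, leafD_node, ← iha _ ha, ← ihb _ hb]
    congr 1
    · refine Finset.sum_congr rfl fun v hv => ?_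
      rw [LTree.grow, LTree.shape, b.grow_of_notMem v (hd' hv)]
    · refine Finset.sum_congr rfl fun v hv => ?_
      rw [LTree.grow, LTree.shape, a.grow_of_notMem v (fun h => hd' h hv)]

/-- Sums over recursive trees are iterates of `leafD` at the one-vertex tree. -/
lemma sum_termOf (n : ℕ) : ∀ (Φ : Shape → ℝ),
    ∑ p : ParentSpace (n + 1), Φ (termOf n p).shape = (leafD^[n] Φ) .leaf := by
  induction n with
  | zero =>
    intro Φ
    have : IsEmpty (Fin (0 + 1 - 1)) := inferInstanceAs (IsEmpty (Fin 0))
    have : Unique (ParentSpace (0 + 1)) := Pi.uniqueOfIsEmpty _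
    rw [Fintype.sum_unique]
    rfl
  | succ n ih =>
    intro Φ
    rw [Function.iterate_succ_apply, ← ih]
    refine ((Fin.snocEquiv (fun j : Fin (n + 1) => Fin (j.val + 1))).sum_comp
      (fun p : ParentSpace (n + 1 + 1) => Φ (termOf (n + 1) p).shape)).symm.trans ?_
    rw [Fintype.sum_prod_type, Finset.sum_comm]
    refine Finset.sum_congr rfl fun p _ => ?_
    rw [← sum_grow Φ _ (termOf_wf n p), termOf_labels n p]
    refine Finset.sum_congr rfl fun v _ => ?_
    simp only [Fin.snocEquiv, Equiv.coe_fn_mk, termOf, Fin.snoc_castSucc, Fin.snoc_last]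

lemma card_parentSpace (n : ℕ) : Fintype.card (ParentSpace (n + 1)) = n.factorial := by
  rw [Fintype.card_pi]
  simp only [Fintype.card_fin]
  rw [show (n + 1 - 1) = n from rfl, Fin.prod_univ_eq_prod_range (fun j => j + 1) n,
    Finset.prod_range_add_one_eq_factorial]

/-- Expectation of a functional of the random recursive tree on `n + 1` vertices. -/
noncomputable def ev (n : ℕ) (Φ : Shape → ℝ) : ℝ := (leafD^[n] Φ) .leaf / n.factorial

lemma ev_eq (n : ℕ) (Φ : Shape → ℝ) :
    ev n Φ = (∑ p : ParentSpace (n + 1), Φ (termOf n p).shape)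
      / Fintype.card (ParentSpace (n + 1)) := by
  rw [ev, sum_termOf, card_parentSpace]

lemma ev_add (n : ℕ) (Φ Ψ : Shape → ℝ) : ev n (fun t => Φ t + Ψ t) = ev n Φ + ev n Ψ := by
  simp only [ev_eq, Finset.sum_add_distrib, add_div]

lemma ev_smul (n : ℕ) (r : ℝ) (Φ : Shape → ℝ) : ev n (fun t => r * Φ t) = r * ev n Φ := by
  simp only [ev_eq, ← Finset.mul_sum, mul_div_assoc]

lemma ev_one (n : ℕ) : ev n (fun _ => 1) = 1 := by
  rw [ev_eq]
  simp only [Finset.sum_const, Finset.card_univ, nsmul_eq_mul, mul_one]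
  refine div_self ?_
  rw [card_parentSpace]
  exact_mod_cast n.factorial_ne_zero

lemma ev_mono (n : ℕ) (Φ Ψ : Shape → ℝ) (h : ∀ t, Φ t ≤ Ψ t) : ev n Φ ≤ ev n Ψ := by
  rw [ev_eq, ev_eq]
  gcongr
  exact h _

lemma ev_zero (Φ : Shape → ℝ) : ev 0 Φ = Φ .leaf := by simp [ev]

/-- Only the values at `node`s matter for trees with at least two vertices. -/
lemma ev_congr (n : ℕ) (Φ Ψ : Shape → ℝ) (h : ∀ a b, Φ (.node a b) = Ψ (.node a b)) :
    ev (n + 1) Φ = ev (n + 1) Ψ := by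
  have : leafD Φ = leafD Ψ := by
    ext t
    cases t with
    | leaf => simp [leafD_leaf, h]
    | node a b => simp only [leafD_node, h]
  rw [ev, ev, Function.iterate_succ_apply, Function.iterate_succ_apply, this]

/-- The functional `node a b ↦ φ a * ψ b`, zero on the one-vertex tree. -/
def tens (φ ψ : Shape → ℝ) : Shape → ℝ
  | .leaf => 0
  | .node a b => φ a * ψ b

/-- The subtree of the second vertex of a random recursive tree has uniform size, and given this
size it is a random recursive tree independent of the rest. -/
lemma ev_tens (n : ℕ) (φ ψ : Shape → ℝ) :
    ((n : ℝ) + 1) * ev (n + 1) (tens φ ψ)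
      = ∑ ij ∈ Finset.HasAntidiagonal.antidiagonal n, ev ij.1 φ * ev ij.2 ψ := by
  rw [ev, Function.iterate_succ_apply', leafD_leaf, leafD_leibniz (tens φ ψ) φ ψ (fun _ _ => rfl),
    Finset.sum_div, Finset.mul_sum]
  refine Finset.sum_congr rfl fun ij hij => ?_
  have h := Nat.add_choose_mul_factorial_mul_factorial ij.1 ij.2
  rw [Finset.HasAntidiagonal.mem_antidiagonal.mp hij,
    ← Nat.choose_symm_of_eq_add (Finset.HasAntidiagonal.mem_antidiagonal.mp hij).symm] at h
  have hfac : (n.choose ij.1 : ℝ) * ij.1.factorial * ij.2.factorial = n.factorial := by exact_mod_cast h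
  have h1 : (ij.1.factorial : ℝ) ≠ 0 := by exact_mod_cast ij.1.factorial_ne_zero
  have h2 : (ij.2.factorial : ℝ) ≠ 0 := by exact_mod_cast ij.2.factorial_ne_zero
  have h3 : (n.factorial : ℝ) ≠ 0 := by exact_mod_cast n.factorial_ne_zero
  have h4 : (n : ℝ) + 1 ≠ 0 := by positivity
  rw [ev, ev, Nat.factorial_succ]
  push_cast
  field_simp
  linear_combination ((leafD^[ij.1] φ) Shape.leaf * (leafD^[ij.2] ψ) Shape.leaf) * hfac

/-! ### Moment recursions -/

open Finset.HasAntidiagonal in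
/-- The recursions satisfied by the moments of the random recursive tree on `n + 1` vertices:
`a n` is the probability that the root is free and, with `g` the matching number minus `κ` times
the number of vertices, `d n = E g`, `h n = E [g; root free]` and `s n = E g ^ 2`. -/
structure MomentRec (κ : ℝ) (a d h s : ℕ → ℝ) : Prop where
  a_nonneg : ∀ n, 0 ≤ a n
  a_le_one : ∀ n, a n ≤ 1
  a_zero : a 0 = 1
  a_succ : ∀ n : ℕ, ((n : ℝ) + 1) * a (n + 1) = ∑ ij ∈ antidiagonal n, a ij.1 * (1 - a ij.2)
  d_zero : d 0 = -κ
  d_succ : ∀ n : ℕ, ((n : ℝ) + 1) * d (n + 1)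
    = ∑ ij ∈ antidiagonal n, (d ij.1 + d ij.2 + a ij.1 * a ij.2)
  h_zero : h 0 = -κ
  h_succ : ∀ n : ℕ, ((n : ℝ) + 1) * h (n + 1)
    = ∑ ij ∈ antidiagonal n, (h ij.1 * (1 - a ij.2) + a ij.1 * (d ij.2 - h ij.2))
  s_zero : s 0 = κ ^ 2
  s_succ : ∀ n : ℕ, ((n : ℝ) + 1) * s (n + 1)
    = ∑ ij ∈ antidiagonal n, (s ij.1 + s ij.2 + (2 * (d ij.1 * d ij.2)
        + 2 * (h ij.1 * a ij.2) + 2 * (a ij.1 * h ij.2) + a ij.1 * a ij.2))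

/-- Indicator that the root is free. -/
def freeR (t : Shape) : ℝ := if t.free then 1 else 0

/-- The matching number, centred by `κ` per vertex. -/
def cmat (κ : ℝ) (t : Shape) : ℝ := t.mat - κ * t.size

lemma freeR_node (a b : Shape) : freeR (.node a b) = freeR a * (1 - freeR b) := by
  simp only [freeR, Shape.free]
  rcases Bool.eq_false_or_eq_true a.free with ha | ha <;>
    rcases Bool.eq_false_or_eq_true b.free with hb | hb <;> simp [ha, hb]

lemma cmat_node (κ : ℝ) (a b : Shape) :
    cmat κ (.node a b) = cmat κ a + cmat κ b + freeR a * freeR b := by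
  simp only [freeR, cmat, Shape.mat, Shape.size]
  cases a.free <;> cases b.free <;> simp <;> ring

lemma freeR_sq (a : Shape) : freeR a * freeR a = freeR a := by
  simp only [freeR]
  cases a.free <;> simp

lemma momentRec (κ : ℝ) : MomentRec κ (fun n => ev n freeR) (fun n => ev n (cmat κ))
    (fun n => ev n (fun t => cmat κ t * freeR t)) (fun n => ev n (fun t => cmat κ t ^ 2)) where
  a_nonneg n := by
    have := ev_mono n (fun _ => 0 * 1) freeR (fun t => by simp only [freeR]; split_ifs <;> simp)
    rwa [ev_smul n 0 (fun _ => 1), zero_mul] at this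
  a_le_one n := by
    have := ev_mono n freeR (fun _ => 1) (fun t => by simp only [freeR]; split_ifs <;> simp)
    rwa [ev_one] at this
  a_zero := by simp [ev_zero, freeR, Shape.free]
  a_succ n := by
    rw [ev_congr n freeR (fun t => tens freeR (fun _ => 1) t + (-1) * tens freeR freeR t)
      (fun a b => by rw [freeR_node]; simp only [tens]; ring), ev_add, ev_smul]
    rw [mul_add, mul_left_comm, ev_tens, ev_tens, Finset.mul_sum, ← Finset.sum_add_distrib]
    refine Finset.sum_congr rfl fun ij _ => ?_
    rw [ev_one]
    ring
  d_zero := by simp [ev_zero, cmat, Shape.mat, Shape.size]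
  d_succ n := by
    rw [ev_congr n (cmat κ) (fun t => (tens (cmat κ) (fun _ => 1) t + tens (fun _ => 1) (cmat κ) t)
      + tens freeR freeR t)
      (fun a b => by rw [cmat_node]; simp only [tens]; ring), ev_add, ev_add]
    rw [mul_add, mul_add, ev_tens, ev_tens, ev_tens, ← Finset.sum_add_distrib,
      ← Finset.sum_add_distrib]
    refine Finset.sum_congr rfl fun ij _ => ?_
    rw [ev_one, ev_one]
    ring
  h_zero := by simp [ev_zero, cmat, freeR, Shape.free, Shape.mat, Shape.size]
  h_succ n := by
    rw [ev_congr n (fun t => cmat κ t * freeR t)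
      (fun t => (tens (fun t => cmat κ t * freeR t) (fun _ => 1) t
        + (-1) * tens (fun t => cmat κ t * freeR t) freeR t)
        + (tens freeR (cmat κ) t + (-1) * tens freeR (fun t => cmat κ t * freeR t) t))
      (fun a b => by
        rw [cmat_node, freeR_node]
        simp only [tens]
        linear_combination (- freeR a * freeR a) * freeR_sq b), ev_add, ev_add, ev_add, ev_smul,
        ev_smul]
    simp only [mul_add, mul_left_comm ((n : ℝ) + 1) (-1)]
    rw [ev_tens, ev_tens, ev_tens, ev_tens]
    simp only [Finset.mul_sum, ← Finset.sum_add_distrib]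
    refine Finset.sum_congr rfl fun ij _ => ?_
    rw [ev_one]
    ring
  s_zero := by simp [ev_zero, cmat, Shape.mat, Shape.size]
  s_succ n := by
    rw [ev_congr n (fun t => cmat κ t ^ 2)
      (fun t => (tens (fun t => cmat κ t ^ 2) (fun _ => 1) t
        + tens (fun _ => 1) (fun t => cmat κ t ^ 2) t)
        + ((2 * tens (cmat κ) (cmat κ) t + 2 * tens (fun t => cmat κ t * freeR t) freeR t)
          + (2 * tens freeR (fun t => cmat κ t * freeR t) t + tens freeR freeR t)))
      (fun a b => by
        rw [cmat_node]
        simp only [tens]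
        linear_combination (freeR b * freeR b) * freeR_sq a + freeR a * freeR_sq b),
        ev_add, ev_add, ev_add, ev_add, ev_add, ev_smul, ev_smul, ev_smul]
    simp only [mul_add, mul_left_comm ((n : ℝ) + 1) 2]
    simp only [ev_tens]
    simp only [Finset.mul_sum, ← Finset.sum_add_distrib]
    refine Finset.sum_congr rfl fun ij _ => ?_
    rw [ev_one, ev_one]
    ring

lemma LTree.size_shape {V : Type} [DecidableEq V] (t : LTree V) (ht : t.WF) :
    t.shape.size = t.labels.card := by
  induction t with
  | leaf v => simp [shape, Shape.size, labels]
  | node a b iha ihb =>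
    obtain ⟨ha, hb, hd⟩ := ht
    rw [shape, Shape.size, labels, Finset.card_union_of_disjoint hd, iha ha, ihb hb]

/-- Subtracting `κ` per vertex shifts the matching number by a constant, so it does not affect the
variance. -/
lemma varAdjMult_eq (κ : ℝ) (n : ℕ) : varAdjMult 0 (n + 1)
    = 4 * (ev n (fun t => cmat κ t ^ 2) - ev n (cmat κ) ^ 2) := by
  have hN : ∀ p : ParentSpace (n + 1), (adjMult (recTree p) 0 : ℝ)
      = ((n : ℝ) + 1) * (1 - 2 * κ) * 1 + (-2) * cmat κ (termOf n p).shape := by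
    intro p
    rw [adjMult_eq, cmat, LTree.size_shape _ (termOf_wf n p), termOf_labels]
    simp
    ring
  have hmean : meanAdjMult 0 (n + 1) = ((n : ℝ) + 1) * (1 - 2 * κ) + (-2) * ev n (cmat κ) := by
    have := ev_add n (fun _ => ((n : ℝ) + 1) * (1 - 2 * κ) * 1) (fun t => (-2) * cmat κ t)
    rw [ev_smul n _ (fun _ => 1), ev_smul n _ (cmat κ), ev_one, mul_one, ev_eq] at this
    rw [← this, meanAdjMult]
    simp only [hN, mul_one]
  have hv := ev_add n (fun t => 4 * (cmat κ t) ^ 2)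
    (fun t => (-8 * ev n (cmat κ)) * cmat κ t + (4 * ev n (cmat κ) ^ 2) * 1)
  rw [ev_add n (fun t => (-8 * ev n (cmat κ)) * cmat κ t), ev_smul, ev_smul,
    ev_smul n _ (fun _ => 1), ev_one, ev_eq] at hv
  rw [varAdjMult, hmean]
  have : ∀ p : ParentSpace (n + 1), ((adjMult (recTree p) 0 : ℝ)
      - (((n : ℝ) + 1) * (1 - 2 * κ) + (-2) * ev n (cmat κ))) ^ 2
      = 4 * (cmat κ (termOf n p).shape) ^ 2 +
        ((-8 * ev n (cmat κ)) * cmat κ (termOf n p).shape + (4 * ev n (cmat κ) ^ 2) * 1) := by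
    intro p
    rw [hN]
    ring
  simp only [this]
  rw [hv]
  ring

/-! ### Generating functions -/

open Finset.HasAntidiagonal MeasureTheory

/-- Coefficient sequences of at most linear growth. -/
def LinBd (c : ℕ → ℝ) : Prop := ∃ C : ℝ, ∀ n : ℕ, |c n| ≤ C * ((n : ℝ) + 1)

/-- The generating function of `c`. -/
noncomputable def gf (c : ℕ → ℝ) (z : ℝ) : ℝ := ∑' n, c n * z ^ n

lemma summable_poly_geom {r : ℝ} (h0 : 0 ≤ r) (h1 : r < 1) :
    Summable (fun n : ℕ => ((n : ℝ) + 1) ^ 2 * r ^ n) := by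
  have hr : ‖r‖ < 1 := by rwa [Real.norm_of_nonneg h0]
  have h2 := summable_pow_mul_geometric_of_norm_lt_one 2 hr
  have h3 := summable_pow_mul_geometric_of_norm_lt_one 1 hr
  have h4 := summable_pow_mul_geometric_of_norm_lt_one 0 hr
  refine ((h2.add (h3.mul_left 2)).add h4).congr fun n => ?_
  simp
  ring

lemma LinBd.const_nonneg {c : ℕ → ℝ} {C : ℝ} (h : ∀ n : ℕ, |c n| ≤ C * ((n : ℝ) + 1)) : 0 ≤ C := by
  have := h 0
  simp at this
  exact (abs_nonneg _).trans this

lemma LinBd.summable {c : ℕ → ℝ} (hc : LinBd c) {z : ℝ} (hz : |z| < 1) :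
    Summable (fun n => ‖c n * z ^ n‖) := by
  obtain ⟨C, hC⟩ := hc
  have hC0 := LinBd.const_nonneg hC
  refine Summable.of_nonneg_of_le (fun n => norm_nonneg _) (fun n => ?_)
    ((summable_poly_geom (abs_nonneg z) hz).mul_left C)
  rw [norm_mul, norm_pow, Real.norm_eq_abs, Real.norm_eq_abs, ← mul_assoc]
  gcongr
  refine (hC n).trans ?_
  gcongr
  nlinarith [(Nat.cast_nonneg n : (0 : ℝ) ≤ n)]

lemma LinBd.one : LinBd (fun _ => 1) :=
  ⟨1, fun n => by simp⟩

lemma gf_one {z : ℝ} (hz : |z| < 1) : gf (fun _ => 1) z = (1 - z)⁻¹ := by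
  simp only [gf, one_mul]
  exact tsum_geometric_of_norm_lt_one hz

lemma summable_cauchy {c e : ℕ → ℝ} (hc : LinBd c) (he : LinBd e) {z : ℝ} (hz : |z| < 1) :
    Summable (fun n => (∑ ij ∈ antidiagonal n, c ij.1 * e ij.2) * z ^ n) := by
  have h := (summable_norm_sum_mul_antidiagonal_of_summable_norm (hc.summable hz)
    (he.summable hz)).of_norm
  refine h.congr fun n => ?_
  rw [Finset.sum_mul]
  refine Finset.sum_congr rfl fun ij hij => ?_
  rw [← Finset.HasAntidiagonal.mem_antidiagonal.mp hij]
  ring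

lemma gf_cauchy {c e : ℕ → ℝ} (hc : LinBd c) (he : LinBd e) {z : ℝ} (hz : |z| < 1) :
    gf (fun n => ∑ ij ∈ antidiagonal n, c ij.1 * e ij.2) z = gf c z * gf e z := by
  rw [gf, gf, gf, tsum_mul_tsum_eq_tsum_sum_antidiagonal_of_summable_norm (hc.summable hz)
    (he.summable hz)]
  refine tsum_congr fun n => ?_
  rw [Finset.sum_mul]
  refine Finset.sum_congr rfl fun ij hij => ?_
  rw [← Finset.HasAntidiagonal.mem_antidiagonal.mp hij]
  ring

lemma gf_hasDerivAt {c : ℕ → ℝ} (hc : LinBd c) {z : ℝ} (hz : |z| < 1) :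
    HasDerivAt (gf c) (gf (fun n => ((n : ℝ) + 1) * c (n + 1)) z) z := by
  obtain ⟨C, hC⟩ := hc
  have hC0 := LinBd.const_nonneg hC
  set r := (|z| + 1) / 2 with hr
  have hr0 : 0 ≤ r := by positivity
  have hr1 : r < 1 := by linarith
  have hzr : |z| < r := by linarith
  have hu : Summable (fun n : ℕ => C * (((n : ℝ) + 1) ^ 2 * r ^ (n - 1))) := by
    refine Summable.mul_left C ?_
    rw [← summable_nat_add_iff 1]
    refine Summable.of_nonneg_of_le (fun n => by positivity) (fun n => ?_)
      ((summable_poly_geom hr0 hr1).mul_left 4)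
    simp only [Nat.add_sub_cancel]
    push_cast
    rw [← mul_assoc]
    gcongr
    nlinarith [(Nat.cast_nonneg n : (0 : ℝ) ≤ n)]
  have key := hasDerivAt_tsum_of_isPreconnected (t := Metric.ball (0 : ℝ) r)
    (g := fun n x => c n * x ^ n) (g' := fun n x => c n * (n * x ^ (n - 1))) hu
    Metric.isOpen_ball (convex_ball _ _).isPreconnected
    (fun n y _ => (hasDerivAt_pow n y).const_mul (c n)) (fun n y hy => by
      have hy' : |y| < r := by simpa using hy
      rw [norm_mul, norm_mul, norm_pow, Real.norm_eq_abs, Real.norm_eq_abs, Real.norm_eq_abs,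
        Nat.abs_cast]
      calc |c n| * (n * |y| ^ (n - 1)) ≤ (C * (n + 1)) * ((n + 1) * r ^ (n - 1)) := by
            gcongr
            · exact hC n
            · linarith
        _ = _ := by ring)
    (y₀ := 0) (by simp; linarith [abs_nonneg z]) (by
      refine summable_of_ne_finset_zero (s := {0}) fun n hn => ?_
      have : n ≠ 0 := by simpa using hn
      simp [this])
    (y := z) (by simpa using hzr)
  have e : ∑' n : ℕ, c n * ((n : ℝ) * z ^ (n - 1)) = gf (fun n => ((n : ℝ) + 1) * c (n + 1)) z := by
    have hs : Summable (fun n : ℕ => c n * ((n : ℝ) * z ^ (n - 1))) := by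
      refine Summable.of_norm_bounded hu fun n => ?_
      rw [norm_mul, norm_mul, norm_pow, Real.norm_eq_abs, Real.norm_eq_abs, Real.norm_eq_abs,
        Nat.abs_cast]
      calc |c n| * (n * |z| ^ (n - 1)) ≤ (C * (n + 1)) * ((n + 1) * r ^ (n - 1)) := by
            gcongr
            · exact hC n
            · linarith
        _ = _ := by ring
    rw [hs.tsum_eq_zero_add, gf]
    simp only [Nat.cast_zero, zero_mul, mul_zero, zero_add, Nat.add_sub_cancel]
    refine tsum_congr fun n => ?_
    push_cast
    ring
  rw [← e]
  exact key

/-! ### The recursion `(n + 1) s (n + 1) = 2 (s 0 + ⋯ + s n) + r n` -/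

lemma sum_antidiagonal_fst (s : ℕ → ℝ) (n : ℕ) :
    ∑ ij ∈ antidiagonal n, s ij.1 = ∑ i ∈ Finset.range (n + 1), s i := by
  rw [Finset.Nat.sum_antidiagonal_eq_sum_range_succ (fun i _ => s i)]

lemma sum_antidiagonal_snd (s : ℕ → ℝ) (n : ℕ) :
    ∑ ij ∈ antidiagonal n, s ij.2 = ∑ i ∈ Finset.range (n + 1), s i := by
  rw [← sum_antidiagonal_fst, ← Finset.Nat.sum_antidiagonal_swap]
  rfl

/-- Closed form of the solution, obtained by differencing consecutive instances of the recursion. -/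
lemma rec_solution {s r : ℕ → ℝ}
    (h : ∀ n : ℕ, ((n : ℝ) + 1) * s (n + 1) = 2 * ∑ i ∈ Finset.range (n + 1), s i + r n) (n : ℕ) :
    s (n + 1) = ((n : ℝ) + 2) * (s 0 + ∑ k ∈ Finset.range n,
      r k * (2 / (((k : ℝ) + 1) * (k + 2) * (k + 3)))) + r n / (n + 1) := by
  induction n with
  | zero =>
    have := h 0
    simp at this ⊢
    linarith
  | succ n ih =>
    have h1 := h (n + 1)
    rw [Finset.sum_range_succ, mul_add] at h1
    have h2 := h n
    have h3 : ((n : ℝ) + 2) * s (n + 1 + 1) = (n + 3) * s (n + 1) + r (n + 1) - r n := by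
      push_cast at h1
      linear_combination h1 - h2
    have h4 : s (n + 1 + 1) = ((n + 3) * s (n + 1) + r (n + 1) - r n) / (n + 2) := by
      rw [eq_div_iff (by positivity), ← h3]
      ring
    rw [h4, Finset.sum_range_succ, ih]
    push_cast
    field_simp
    ring

/-- Linear asymptotics for the solution of the recursion, with an error controlled by a telescoping
majorant `D` of the tail of the series defining the slope. -/
lemma rec_asymp {s r q D : ℕ → ℝ} {C : ℝ}
    (h : ∀ n : ℕ, ((n : ℝ) + 1) * s (n + 1) = 2 * ∑ i ∈ Finset.range (n + 1), s i + r n)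
    (hC : 0 ≤ C) (hr : ∀ n : ℕ, |r n| ≤ C * ((n + 1) * q n))
    (hD : ∀ n : ℕ, q n / (((n : ℝ) + 1) * (n + 2)) ≤ D n - D (n + 1)) (hD0 : ∀ n, 0 ≤ D n)
    (hq : ∀ n, 0 ≤ q n) :
    Summable (fun k : ℕ => |r k * (2 / (((k : ℝ) + 1) * (k + 2) * (k + 3)))|) ∧
    ∀ n : ℕ, |s (n + 1) - (n + 2) * (s 0 + ∑' k : ℕ, r k * (2 / (((k : ℝ) + 1) * (k + 2) * (k + 3))))|
      ≤ C * (2 * (n + 2) * D n + q n) := by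
  set b : ℕ → ℝ := fun k => r k * (2 / (((k : ℝ) + 1) * (k + 2) * (k + 3))) with hb
  have hb' : ∀ k, |b k| ≤ 2 * C * (D k - D (k + 1)) := by
    intro k
    rw [hb]
    simp only
    rw [abs_mul, abs_of_nonneg (by positivity : 0 ≤ 2 / (((k : ℝ) + 1) * (k + 2) * (k + 3)))]
    have hqk := hq k
    calc |r k| * (2 / (((k : ℝ) + 1) * (k + 2) * (k + 3)))
        ≤ (C * ((k + 1) * q k)) * (2 / (((k : ℝ) + 1) * (k + 2) * (k + 3))) := by
          gcongr; exact hr k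
      _ = 2 * C * (q k / (((k : ℝ) + 3) * (k + 2))) := by field_simp
      _ ≤ 2 * C * (q k / (((k : ℝ) + 1) * (k + 2))) := by gcongr; norm_num
      _ ≤ _ := by gcongr; exact hD k
  have htel : ∀ n m, ∑ k ∈ Finset.range m, |b (k + n)| ≤ 2 * C * D n := by
    intro n m
    have : ∑ k ∈ Finset.range m, |b (k + n)| ≤ 2 * C * (D n - D (m + n)) := by
      induction m with
      | zero => simp
      | succ m ih =>
        rw [Finset.sum_range_succ]
        have := hb' (m + n)
        rw [show m + 1 + n = m + n + 1 by ring]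
        linarith
    have h2 := mul_nonneg hC (hD0 (m + n))
    linarith
  have hsum : ∀ n, Summable (fun k => |b (k + n)|) := fun n =>
    summable_of_sum_range_le (fun _ => abs_nonneg _) (htel n)
  refine ⟨hsum 0, fun n => ?_⟩
  have hsb : Summable b := (hsum 0).of_abs
  have htail : |∑' k, b (k + n)| ≤ 2 * C * D n := by
    have h1 := norm_tsum_le_tsum_norm (f := fun k => b (k + n)) (hsum n)
    exact h1.trans (Real.tsum_le_of_sum_range_le (fun _ => abs_nonneg _) (htel n))
  rw [rec_solution h n, ← hsb.sum_add_tsum_nat_add n]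
  have e : ((n : ℝ) + 2) * (s 0 + ∑ k ∈ Finset.range n, b k) + r n / (n + 1)
      - (n + 2) * (s 0 + (∑ k ∈ Finset.range n, b k + ∑' k, b (k + n)))
      = r n / (n + 1) - (n + 2) * ∑' k, b (k + n) := by ring
  rw [e]
  have h1 : |r n / ((n : ℝ) + 1)| ≤ C * q n := by
    rw [abs_div, abs_of_nonneg (by positivity : 0 ≤ (n : ℝ) + 1), div_le_iff₀ (by positivity)]
    exact (hr n).trans (le_of_eq (by ring))
  have h2 : |((n : ℝ) + 2) * ∑' k, b (k + n)| ≤ (n + 2) * (2 * C * D n) := by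
    rw [abs_mul, abs_of_nonneg (by positivity : 0 ≤ (n : ℝ) + 2)]
    gcongr
  calc _ ≤ |r n / ((n : ℝ) + 1)| + |((n : ℝ) + 2) * ∑' k, b (k + n)| := abs_sub _ _
    _ ≤ C * q n + (n + 2) * (2 * C * D n) := add_le_add h1 h2
    _ = _ := by ring

/-! ### The slope as an integral -/

lemma beta_integral (k : ℕ) : ∫ z in Set.Ioo (0 : ℝ) 1, z ^ k * (1 - z) ^ 2
    = 2 / (((k : ℝ) + 1) * (k + 2) * (k + 3)) := by
  rw [← integral_Ioc_eq_integral_Ioo, ← intervalIntegral.integral_of_le zero_le_one]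
  have : ∀ z : ℝ, z ^ k * (1 - z) ^ 2 = z ^ k - 2 * z ^ (k + 1) + z ^ (k + 2) := fun z => by ring
  simp only [this]
  rw [intervalIntegral.integral_add (Continuous.intervalIntegrable (by fun_prop) _ _) (Continuous.intervalIntegrable (by fun_prop) _ _),
    intervalIntegral.integral_sub (Continuous.intervalIntegrable (by fun_prop) _ _) (Continuous.intervalIntegrable (by fun_prop) _ _),
    intervalIntegral.integral_const_mul, integral_pow, integral_pow, integral_pow]
  push_cast
  simp
  field_simp
  ring

/-- The slope of the recursion as an integral, by termwise integration. -/
lemma tsum_eq_integral {r : ℕ → ℝ}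
    (hr : Summable (fun k : ℕ => |r k * (2 / (((k : ℝ) + 1) * (k + 2) * (k + 3)))|)) :
    ∑' k : ℕ, r k * (2 / (((k : ℝ) + 1) * (k + 2) * (k + 3)))
      = ∫ z in Set.Ioo (0 : ℝ) 1, (1 - z) ^ 2 * gf r z := by
  have hInt : ∀ k : ℕ, Integrable (fun z : ℝ => r k * (z ^ k * (1 - z) ^ 2))
      (volume.restrict (Set.Ioo 0 1)) := by
    intro k
    have : ContinuousOn (fun z : ℝ => r k * (z ^ k * (1 - z) ^ 2)) (Set.Icc 0 1) := by fun_prop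
    exact (this.integrableOn_Icc).mono_set Set.Ioo_subset_Icc_self
  have key := hasSum_integral_of_summable_integral_norm hInt (by
    refine hr.congr fun k => ?_
    rw [abs_mul, ← beta_integral, abs_of_nonneg (setIntegral_nonneg measurableSet_Ioo
      fun z hz => mul_nonneg (pow_nonneg hz.1.le _) (sq_nonneg _)), ← integral_const_mul]
    refine setIntegral_congr_fun measurableSet_Ioo fun z hz => ?_
    simp only [norm_mul, Real.norm_eq_abs]
    rw [abs_of_nonneg (pow_nonneg hz.1.le k), abs_of_nonneg (sq_nonneg (1 - z))])
  have e : ∀ z : ℝ, (1 - z) ^ 2 * gf r z = ∑' k : ℕ, r k * (z ^ k * (1 - z) ^ 2) := by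
    intro z
    rw [gf, ← tsum_mul_left]
    exact tsum_congr fun k => by ring
  simp only [e]
  rw [← key.tsum_eq]
  simp only [integral_const_mul, beta_integral]

lemma integral_subst (f : ℝ → ℝ) : ∫ z in Set.Ioo (0 : ℝ) 1, f z
    = ∫ u in Set.Ioi (0 : ℝ), Real.exp (-u) * f (1 - Real.exp (-u)) := by
  have himg : (fun u : ℝ => 1 - Real.exp (-u)) '' Set.Ioi 0 = Set.Ioo 0 1 := by
    ext z
    constructor
    · rintro ⟨u, hu, rfl⟩
      have h1 : Real.exp (-u) < 1 := Real.exp_lt_one_iff.mpr (by simpa using hu)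
      exact ⟨by simp only; linarith, by simp only; linarith [Real.exp_pos (-u)]⟩
    · rintro ⟨h0, h1⟩
      refine ⟨-Real.log (1 - z), ?_, ?_⟩
      · have := Real.log_neg (by linarith : 0 < 1 - z) (by linarith)
        simp only [Set.mem_Ioi]
        linarith
      · simp only [neg_neg]
        rw [Real.exp_log (by linarith)]
        ring
  rw [← himg, integral_image_eq_integral_abs_deriv_smul (f' := fun u => Real.exp (-u))
    measurableSet_Ioi]
  · simp [abs_of_pos (Real.exp_pos _)]
  · intro u _
    have : HasDerivAt (fun u : ℝ => 1 - Real.exp (-u)) (Real.exp (-u)) u := by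
      have := ((hasDerivAt_neg u).exp).const_sub 1
      simpa using this
    exact this.hasDerivWithinAt
  · intro u _ v _ h
    simp only at h
    have := Real.exp_injective (sub_right_injective h)
    linarith

/-! ### The exponential-integral tail -/

/-- The constant `∫₀^∞ e^{-v} / (1 + v)² dv = 1 - G`. -/
noncomputable def kap : ℝ := ∫ v in Set.Ioi (0 : ℝ), Real.exp (-v) / (1 + v) ^ 2

/-- The tail `∫_u^∞ e^{-v} / (1 + |v|)² dv`; the absolute value makes the integrand continuous on the
whole line, and only `u ≥ 0` matters. -/
noncomputable def tailE (u : ℝ) : ℝ := ∫ v in Set.Ioi u, Real.exp (-v) / (1 + |v|) ^ 2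

lemma continuous_tail_integrand : Continuous (fun v : ℝ => Real.exp (-v) / (1 + |v|) ^ 2) := by
  refine Continuous.div (by fun_prop) (by fun_prop) fun v => ?_
  have := abs_nonneg v
  positivity

lemma exp_neg_integrableOn (a : ℝ) : IntegrableOn (fun v : ℝ => Real.exp (-v)) (Set.Ioi a) := by
  simpa using exp_neg_integrableOn_Ioi a one_pos

lemma tail_integrand_le (v : ℝ) : Real.exp (-v) / (1 + |v|) ^ 2 ≤ Real.exp (-v) := by
  have := abs_nonneg v
  refine div_le_self (Real.exp_pos _).le ?_
  nlinarith

lemma tail_integrableOn (a : ℝ) :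
    IntegrableOn (fun v : ℝ => Real.exp (-v) / (1 + |v|) ^ 2) (Set.Ioi a) := by
  refine (exp_neg_integrableOn a).mono' continuous_tail_integrand.aestronglyMeasurable
    (Filter.Eventually.of_forall fun v => ?_)
  rw [Real.norm_of_nonneg (by positivity)]
  exact tail_integrand_le v

lemma tailE_zero : tailE 0 = kap := by
  refine setIntegral_congr_fun measurableSet_Ioi fun v hv => ?_
  rw [abs_of_pos hv]

lemma tailE_nonneg (u : ℝ) : 0 ≤ tailE u :=
  integral_nonneg fun v => by positivity

lemma tailE_le (u : ℝ) : tailE u ≤ Real.exp (-u) := by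
  rw [← integral_exp_neg_Ioi u]
  exact integral_mono (tail_integrableOn u) (exp_neg_integrableOn u) tail_integrand_le

lemma tailE_hasDerivAt {u : ℝ} (hu : 0 ≤ u) :
    HasDerivAt tailE (-(Real.exp (-u) / (1 + u) ^ 2)) u := by
  have e : tailE = fun u => tailE 0 - ∫ v in (0 : ℝ)..u, Real.exp (-v) / (1 + |v|) ^ 2 := by
    funext u
    rw [tailE, tailE,
      ← intervalIntegral.integral_Ioi_sub_Ioi' (tail_integrableOn 0) (tail_integrableOn u)]
    ring
  rw [e]
  have h := (intervalIntegral.integral_hasDerivAt_right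
    (continuous_tail_integrand.intervalIntegrable 0 u)
    (continuous_tail_integrand.stronglyMeasurableAtFilter _ _)
    continuous_tail_integrand.continuousAt).const_sub (tailE 0)
  rwa [abs_of_nonneg hu] at h

lemma integrableOn_of_exp_bound {f : ℝ → ℝ} {C : ℝ} (hf : ContinuousOn f (Set.Ici 0))
    (hb : ∀ u, 0 ≤ u → |f u| ≤ C * Real.exp (-(1 / 2) * u)) : IntegrableOn f (Set.Ioi 0) := by
  refine ((exp_neg_integrableOn_Ioi 0 (by norm_num : (0 : ℝ) < 1 / 2)).const_mul C).mono'
    ((hf.mono Set.Ioi_subset_Ici_self).aestronglyMeasurable measurableSet_Ioi) ?_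
  refine (ae_restrict_iff' measurableSet_Ioi).mpr (Filter.Eventually.of_forall fun u hu => ?_)
  exact hb u (le_of_lt hu)

lemma kap_eq : kap = 1 - gompertz := by
  have hder : ∀ u ∈ Set.Ici (0 : ℝ), HasDerivAt (fun u : ℝ => -(Real.exp (-u) / (1 + u)))
      (Real.exp (-u) / (1 + u) + Real.exp (-u) / (1 + u) ^ 2) u := by
    intro u hu
    have hu' : (0 : ℝ) ≤ u := hu
    have h1 : (1 + u) ≠ 0 := by positivity
    have := (((hasDerivAt_neg u).exp).div ((hasDerivAt_id u).const_add 1) h1).neg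
    refine this.congr_deriv ?_
    simp only [id]
    field_simp
    ring
  have i2 : IntegrableOn (fun u : ℝ => Real.exp (-u) / (1 + u) ^ 2) (Set.Ioi 0) := by
    refine (tail_integrableOn 0).congr_fun (fun v hv => ?_) measurableSet_Ioi
    simp only
    rw [abs_of_pos hv]
  have i1 : IntegrableOn (fun u : ℝ => Real.exp (-u) / (1 + u)) (Set.Ioi 0) := by
    refine integrableOn_of_exp_bound (C := 1) ?_ ?_
    · refine ContinuousOn.div (by fun_prop) (by fun_prop) fun u hu => ?_
      have hu' : (0 : ℝ) ≤ u := hu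
      positivity
    · intro u hu
      rw [abs_of_nonneg (by positivity), one_mul]
      refine (div_le_self (Real.exp_pos _).le (by linarith)).trans ?_
      exact Real.exp_le_exp.mpr (by linarith)
  have hlim : Filter.Tendsto (fun u : ℝ => -(Real.exp (-u) / (1 + u))) Filter.atTop (nhds 0) := by
    rw [← neg_zero]
    refine Filter.Tendsto.neg ?_
    refine tendsto_of_tendsto_of_tendsto_of_le_of_le' tendsto_const_nhds
      Real.tendsto_exp_neg_atTop_nhds_zero ?_ ?_
    · filter_upwards [Filter.eventually_ge_atTop 0] with u hu
      positivity
    · filter_upwards [Filter.eventually_ge_atTop 0] with u hu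
      exact div_le_self (Real.exp_pos _).le (by linarith)
  have h := integral_Ioi_of_hasDerivAt_of_tendsto' hder (i1.add i2) hlim
  rw [integral_add i1 i2] at h
  simp only [neg_zero, Real.exp_zero, add_zero, div_one, sub_neg_eq_add, zero_add] at h
  rw [kap, gompertz]
  linarith

lemma kap_nonneg : 0 ≤ kap := tailE_zero ▸ tailE_nonneg 0

lemma kap_le_one : kap ≤ 1 := by
  have := tailE_le 0
  rwa [tailE_zero, neg_zero, Real.exp_zero] at this

/-! ### Generating functions in the variable `u = -log (1 - z)` -/

lemma const_of_deriv_zero {f : ℝ → ℝ} (hf : ∀ u, 0 ≤ u → HasDerivAt f 0 u) {u : ℝ} (hu : 0 ≤ u) :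
    f u = f 0 :=
  constant_of_has_deriv_right_zero (fun x hx => (hf x hx.1).continuousAt.continuousWithinAt)
    (fun x hx => (hf x hx.1).hasDerivWithinAt) u ⟨hu, le_rfl⟩

lemma abs_z_lt {u : ℝ} (hu : 0 ≤ u) : |1 - Real.exp (-u)| < 1 := by
  have h1 : Real.exp (-u) ≤ 1 := Real.exp_le_one_iff.mpr (by linarith)
  rw [abs_of_nonneg (by linarith)]
  linarith [Real.exp_pos (-u)]

/-- The generating function of `c` at `z = 1 - e^{-u}`. -/
noncomputable def gu (c : ℕ → ℝ) (u : ℝ) : ℝ := gf c (1 - Real.exp (-u))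

lemma gu_zero (c : ℕ → ℝ) : gu c 0 = c 0 := by
  simp only [gu, gf, neg_zero, Real.exp_zero, sub_self]
  rw [tsum_eq_single 0]
  · simp
  · intro n hn
    simp [hn]

lemma gu_hasDerivAt {c : ℕ → ℝ} (hc : LinBd c) {u : ℝ} (hu : 0 ≤ u) :
    HasDerivAt (gu c) (gu (fun n => ((n : ℝ) + 1) * c (n + 1)) u * Real.exp (-u)) u := by
  have h1 : HasDerivAt (fun u : ℝ => 1 - Real.exp (-u)) (Real.exp (-u)) u := by
    have := ((hasDerivAt_neg u).exp).const_sub 1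
    simpa using this
  exact (gf_hasDerivAt hc (abs_z_lt hu)).comp u h1

lemma gu_one {u : ℝ} (hu : 0 ≤ u) : gu (fun _ => 1) u = Real.exp u := by
  rw [gu, gf_one (abs_z_lt hu), sub_sub_cancel, Real.exp_neg, inv_inv]

/-- Convolution of coefficient sequences. -/
noncomputable def cauchy (c e : ℕ → ℝ) (n : ℕ) : ℝ := ∑ ij ∈ antidiagonal n, c ij.1 * e ij.2

lemma gu_conv {c e : ℕ → ℝ} (hc : LinBd c) (he : LinBd e) {u : ℝ} (hu : 0 ≤ u) :
    gu (cauchy c e) u = gu c u * gu e u := gf_cauchy hc he (abs_z_lt hu)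

/-- Summability of the power series with coefficients `c` at `z = 1 - e^{-u}`. -/
def SumAt (c : ℕ → ℝ) (u : ℝ) : Prop := Summable (fun n => c n * (1 - Real.exp (-u)) ^ n)

lemma LinBd.sumAt {c : ℕ → ℝ} (hc : LinBd c) {u : ℝ} (hu : 0 ≤ u) : SumAt c u :=
  (hc.summable (abs_z_lt hu)).of_norm

lemma sumAt_conv {c e : ℕ → ℝ} (hc : LinBd c) (he : LinBd e) {u : ℝ} (hu : 0 ≤ u) :
    SumAt (cauchy c e) u := summable_cauchy hc he (abs_z_lt hu)

lemma SumAt.add {c e : ℕ → ℝ} {u : ℝ} (hc : SumAt c u) (he : SumAt e u) :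
    SumAt (fun n => c n + e n) u := by
  simp only [SumAt, add_mul]
  exact Summable.add hc he

lemma SumAt.const_mul {c : ℕ → ℝ} {u : ℝ} (k : ℝ) (hc : SumAt c u) :
    SumAt (fun n => k * c n) u := by
  simp only [SumAt, mul_assoc]
  exact Summable.mul_left k hc

lemma gu_add {c e : ℕ → ℝ} {u : ℝ} (hc : SumAt c u) (he : SumAt e u) :
    gu (fun n => c n + e n) u = gu c u + gu e u := by
  simp only [gu, gf, add_mul]
  exact Summable.tsum_add hc he

lemma gu_const_mul (c : ℕ → ℝ) (u k : ℝ) : gu (fun n => k * c n) u = k * gu c u := by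
  simp only [gu, gf, mul_assoc]
  exact tsum_mul_left

lemma gu_nonneg_ge {c : ℕ → ℝ} (h0 : ∀ n, 0 ≤ c n) (hc : LinBd c) {u : ℝ} (hu : 0 ≤ u) :
    c 0 ≤ gu c u := by
  have h1 : Real.exp (-u) ≤ 1 := Real.exp_le_one_iff.mpr (by linarith)
  have := (hc.sumAt hu).le_tsum 0 fun n _ => mul_nonneg (h0 n) (pow_nonneg (by linarith) n)
  simpa [gu, gf] using this

/-- The slope of the linear recursion as an integral in the variable `u`. -/
lemma tsum_eq_integral_u {r : ℕ → ℝ}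
    (hr : Summable (fun k : ℕ => |r k * (2 / (((k : ℝ) + 1) * (k + 2) * (k + 3)))|)) :
    ∑' k : ℕ, r k * (2 / (((k : ℝ) + 1) * (k + 2) * (k + 3)))
      = ∫ u in Set.Ioi (0 : ℝ), Real.exp (-u) ^ 3 * gu r u := by
  rw [tsum_eq_integral hr, integral_subst]
  refine setIntegral_congr_fun measurableSet_Ioi fun u _ => ?_
  simp only [gu]
  ring

/-! ### Solving the recursions -/

namespace MomentRec

variable {a d h s : ℕ → ℝ}

lemma linBd_of_bdd {c : ℕ → ℝ} {C : ℝ} (hc : ∀ n, |c n| ≤ C) : LinBd c :=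
  ⟨C, fun n => (hc n).trans <| by
    have h0 : 0 ≤ C := (abs_nonneg _).trans (hc 0)
    have := mul_nonneg h0 (Nat.cast_nonneg n : (0 : ℝ) ≤ n)
    linarith⟩

lemma linBd_a (H : MomentRec kap a d h s) : LinBd a :=
  linBd_of_bdd (C := 1) fun n => by
    rw [abs_of_nonneg (H.a_nonneg n)]
    exact H.a_le_one n

/-- The Riccati equation for the generating function of `a` linearizes to `d/du (e^u / A) = 1`. -/
lemma gu_a (H : MomentRec kap a d h s) {u : ℝ} (hu : 0 ≤ u) :
    gu a u = Real.exp u / (1 + u) := by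
  have ha := H.linBd_a
  have hpos : ∀ u, 0 ≤ u → 0 < gu a u := fun u hu =>
    lt_of_lt_of_le (by rw [H.a_zero]; norm_num) (gu_nonneg_ge H.a_nonneg ha hu)
  have hder : ∀ u, 0 ≤ u → HasDerivAt (gu a) (gu a u - gu a u ^ 2 * Real.exp (-u)) u := by
    intro u hu
    refine (gu_hasDerivAt ha hu).congr_deriv ?_
    have e : (fun n : ℕ => ((n : ℝ) + 1) * a (n + 1))
        = fun n => cauchy a (fun _ => 1) n + -1 * cauchy a a n := by
      funext n
      rw [H.a_succ, cauchy, cauchy, Finset.mul_sum, ← Finset.sum_add_distrib]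
      exact Finset.sum_congr rfl fun ij _ => by ring
    rw [e, gu_add (sumAt_conv ha LinBd.one hu) ((sumAt_conv ha ha hu).const_mul _), gu_const_mul,
      gu_conv ha LinBd.one hu, gu_conv ha ha hu, gu_one hu, Real.exp_neg]
    have := Real.exp_ne_zero u
    field_simp
    ring
  have hconst := const_of_deriv_zero (f := fun u => Real.exp u / gu a u - u) (fun u hu => by
    have h1 := (hpos u hu).ne'
    refine (((Real.hasDerivAt_exp u).div (hder u hu) h1).sub (hasDerivAt_id u)).congr_deriv ?_
    rw [Real.exp_neg]
    have := Real.exp_ne_zero u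
    field_simp
    ring) hu
  simp only [gu_zero, H.a_zero, Real.exp_zero, div_one, sub_zero] at hconst
  have h1 := (hpos u hu).ne'
  have h2 : 1 + u ≠ 0 := by positivity
  rw [eq_div_iff h2]
  have h3 : Real.exp u / gu a u = 1 + u := by linarith
  rw [← h3]
  field_simp

lemma cauchy_bound {c e : ℕ → ℝ} {C : ℝ} {n : ℕ}
    (hc : ∀ ij ∈ antidiagonal n, |c ij.1 * e ij.2| ≤ C) : |cauchy c e n| ≤ ((n : ℝ) + 1) * C := by
  refine (Finset.abs_sum_le_sum_abs _ _).trans ?_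
  refine (Finset.sum_le_card_nsmul _ _ C hc).trans (le_of_eq ?_)
  rw [Finset.Nat.card_antidiagonal, nsmul_eq_mul]
  push_cast
  ring

lemma abs_a_le (H : MomentRec kap a d h s) (n : ℕ) : |a n| ≤ 1 := by
  rw [abs_of_nonneg (H.a_nonneg n)]
  exact H.a_le_one n

lemma exp_cube_mul_sq {u : ℝ} (y : ℝ) :
    Real.exp (-u) ^ 3 * (Real.exp u / y * (Real.exp u / y)) = Real.exp (-u) / y ^ 2 := by
  rw [Real.exp_neg]
  have := Real.exp_ne_zero u
  by_cases hy : y = 0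
  · simp [hy]
  · field_simp

/-- The choice of the centring constant `kap` makes the linear term of the mean vanish. -/
lemma abs_d_le (H : MomentRec kap a d h s) (n : ℕ) : |d n| ≤ 5 := by
  have ha := H.linBd_a
  obtain ⟨hsum, hasy⟩ := rec_asymp (s := d) (r := cauchy a a) (q := fun _ => 1)
    (D := fun n : ℕ => 1 / ((n : ℝ) + 1)) (C := 1)
    (fun n => by
      rw [H.d_succ, Finset.sum_add_distrib, Finset.sum_add_distrib, sum_antidiagonal_fst,
        sum_antidiagonal_snd, cauchy]
      ring)
    zero_le_one
    (fun n => by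
      refine (cauchy_bound (C := 1) fun ij _ => ?_).trans (le_of_eq (by ring))
      rw [abs_mul]
      exact mul_le_one₀ (H.abs_a_le _) (abs_nonneg _) (H.abs_a_le _))
    (fun n => by
      refine le_of_eq ?_
      push_cast
      field_simp
      ring)
    (fun n => by positivity) (fun n => by norm_num)
  have hslope : d 0 + ∑' k : ℕ, cauchy a a k * (2 / (((k : ℝ) + 1) * (k + 2) * (k + 3))) = 0 := by
    rw [tsum_eq_integral_u hsum, H.d_zero, kap, neg_add_eq_zero]
    refine setIntegral_congr_fun measurableSet_Ioi fun u hu => ?_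
    have hu' : 0 ≤ u := le_of_lt hu
    rw [gu_conv ha ha hu', H.gu_a hu', exp_cube_mul_sq]
  cases n with
  | zero =>
    rw [H.d_zero, abs_neg, abs_of_nonneg kap_nonneg]
    linarith [kap_le_one]
  | succ n =>
    have := hasy n
    rw [hslope, mul_zero, sub_zero, one_mul] at this
    refine this.trans ?_
    have h1 : ((n : ℝ) + 2) * (1 / ((n : ℝ) + 1)) ≤ 2 := by
      rw [mul_one_div, div_le_iff₀ (by positivity)]
      linarith [(Nat.cast_nonneg n : (0 : ℝ) ≤ n)]
    linarith

/-- The generating function `D` of `d` satisfies `d/du (e^{-2u} D) = e^{-u} / (1 + u)²`. -/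
lemma gu_d (H : MomentRec kap a d h s) {u : ℝ} (hu : 0 ≤ u) :
    gu d u = -(tailE u * Real.exp u ^ 2) := by
  have ha := H.linBd_a
  have hd := linBd_of_bdd H.abs_d_le
  have hder : ∀ u, 0 ≤ u →
      HasDerivAt (gu d) (2 * gu d u + Real.exp u / (1 + u) ^ 2) u := by
    intro u hu
    refine (gu_hasDerivAt hd hu).congr_deriv ?_
    have e : (fun n : ℕ => ((n : ℝ) + 1) * d (n + 1))
        = fun n => 2 * cauchy d (fun _ => 1) n + cauchy a a n := by
      funext n
      rw [H.d_succ, cauchy, cauchy, Finset.sum_add_distrib, Finset.sum_add_distrib,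
        sum_antidiagonal_snd, ← sum_antidiagonal_fst]
      simp only [mul_one]
      ring
    rw [e, gu_add ((sumAt_conv hd LinBd.one hu).const_mul _) (sumAt_conv ha ha hu), gu_const_mul,
      gu_conv hd LinBd.one hu, gu_conv ha ha hu, gu_one hu, H.gu_a hu, Real.exp_neg]
    have := Real.exp_ne_zero u
    have : 1 + u ≠ 0 := by positivity
    field_simp
  have hconst := const_of_deriv_zero (f := fun u => Real.exp (-u) ^ 2 * gu d u + tailE u)
    (fun u hu => by
      refine (((((hasDerivAt_neg u).exp).pow 2).mul (hder u hu)).add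
        (tailE_hasDerivAt hu)).congr_deriv ?_
      simp only [Pi.pow_apply, Nat.add_one_sub_one, pow_one]
      rw [Real.exp_neg]
      have := Real.exp_ne_zero u
      have : 1 + u ≠ 0 := by positivity
      field_simp
      ring) hu
  simp only [gu_zero, H.d_zero, tailE_zero, neg_zero, Real.exp_zero, one_pow, one_mul,
    neg_add_cancel] at hconst
  have := Real.exp_ne_zero u
  rw [Real.exp_neg] at hconst
  field_simp at hconst
  linarith

/-- `1 + H_n`, where `H_n` is the harmonic number. -/
noncomputable def hq (n : ℕ) : ℝ := 1 + (harmonic n : ℝ)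

lemma hq_zero : hq 0 = 1 := by simp [hq]

lemma hq_succ (n : ℕ) : hq (n + 1) = hq n + 1 / ((n : ℝ) + 1) := by
  simp only [hq, harmonic_succ]
  push_cast
  ring

lemma hq_mono : Monotone hq :=
  monotone_nat_of_le_succ fun n => by
    rw [hq_succ]
    have : (0 : ℝ) ≤ 1 / ((n : ℝ) + 1) := by positivity
    linarith

lemma one_le_hq (n : ℕ) : 1 ≤ hq n := hq_zero ▸ hq_mono (Nat.zero_le n)

lemma sum_hq (n : ℕ) :
    ∑ i ∈ Finset.range (n + 1), hq i + ((n : ℝ) + 1) = (n + 1) * hq (n + 1) := by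
  induction n with
  | zero => simp [hq_succ, hq_zero]
  | succ n ih =>
    rw [Finset.sum_range_succ, hq_succ (n + 1)]
    push_cast
    have h1 : ((n : ℝ) + 1 + 1) ≠ 0 := by positivity
    field_simp
    linear_combination ih

/-- As `|1 - 2 a j| ≤ 1`, the recursion gives
`(n + 1) |h (n + 1)| ≤ |h 0| + ⋯ + |h n| + 5 (n + 1)`, whose extremal solution is `5 hq`. -/
lemma abs_h_le (H : MomentRec kap a d h s) (n : ℕ) : |h n| ≤ 5 * hq n := by
  induction n using Nat.strong_induction_on with
  | _ n ih =>
  cases n with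
  | zero =>
    rw [H.h_zero, abs_neg, abs_of_nonneg kap_nonneg, hq_zero]
    linarith [kap_le_one]
  | succ n =>
    have e : ((n : ℝ) + 1) * h (n + 1)
        = ∑ ij ∈ antidiagonal n, (h ij.1 * (1 - 2 * a ij.2) + a ij.1 * d ij.2) := by
      have e1 : ∑ ij ∈ antidiagonal n, a ij.1 * h ij.2 = ∑ ij ∈ antidiagonal n, h ij.1 * a ij.2 := by
        rw [← Finset.Nat.sum_antidiagonal_swap]
        exact Finset.sum_congr rfl fun ij _ => mul_comm _ _
      have e2 : ∑ ij ∈ antidiagonal n, (h ij.1 * (1 - 2 * a ij.2) + a ij.1 * d ij.2)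
          = ∑ ij ∈ antidiagonal n, (h ij.1 * (1 - a ij.2) + a ij.1 * (d ij.2 - h ij.2))
            + (∑ ij ∈ antidiagonal n, a ij.1 * h ij.2 - ∑ ij ∈ antidiagonal n, h ij.1 * a ij.2) := by
        rw [← Finset.sum_sub_distrib, ← Finset.sum_add_distrib]
        exact Finset.sum_congr rfl fun ij _ => by ring
      rw [H.h_succ, e2, e1]
      ring
    have hb : ((n : ℝ) + 1) * |h (n + 1)| ≤ ∑ ij ∈ antidiagonal n, (5 * hq ij.1 + 5) := by
      rw [← abs_of_nonneg (by positivity : (0 : ℝ) ≤ n + 1), ← abs_mul, e]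
      refine (Finset.abs_sum_le_sum_abs _ _).trans (Finset.sum_le_sum fun ij hij => ?_)
      have hij' := Finset.HasAntidiagonal.mem_antidiagonal.mp hij
      have h1 := ih ij.1 (by omega)
      have h2 : |1 - 2 * a ij.2| ≤ 1 := by
        rw [abs_le]
        constructor <;> linarith [H.a_nonneg ij.2, H.a_le_one ij.2]
      calc _ ≤ |h ij.1 * (1 - 2 * a ij.2)| + |a ij.1 * d ij.2| := abs_add_le _ _
        _ = |h ij.1| * |1 - 2 * a ij.2| + |a ij.1| * |d ij.2| := by rw [abs_mul, abs_mul]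
        _ ≤ (5 * hq ij.1) * 1 + 1 * 5 := by
          have := one_le_hq ij.1
          gcongr
          · exact H.abs_a_le _
          · exact H.abs_d_le _
        _ = _ := by ring
    rw [Finset.sum_add_distrib, ← Finset.mul_sum, sum_antidiagonal_fst, Finset.sum_const,
      Finset.Nat.card_antidiagonal, nsmul_eq_mul] at hb
    push_cast at hb
    have h3 := sum_hq n
    have h4 : ((n : ℝ) + 1) * |h (n + 1)| ≤ (n + 1) * (5 * hq (n + 1)) := by
      linarith
    exact le_of_mul_le_mul_left h4 (by positivity)

lemma hq_le (n : ℕ) : hq n ≤ (n : ℝ) + 1 := by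
  induction n with
  | zero => simp [hq_zero]
  | succ n ih =>
    rw [hq_succ]
    push_cast
    have : 1 / ((n : ℝ) + 1) ≤ 1 := by
      rw [div_le_one (by positivity)]
      linarith [(Nat.cast_nonneg n : (0 : ℝ) ≤ n)]
    linarith

lemma linBd_h (H : MomentRec kap a d h s) : LinBd h :=
  ⟨5, fun n => (H.abs_h_le n).trans (by linarith [hq_le n])⟩

/-- The linear equation for the generating function of `h` has integrating factor
`e^{-u} (1 + u)²`. -/
lemma gu_h (H : MomentRec kap a d h s) {u : ℝ} (hu : 0 ≤ u) :
    gu h u = -(Real.exp u / (1 + u) ^ 2 * (u * Real.exp u * tailE u + Real.log (1 + u)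
      + 1 / (1 + u) - 1 + kap)) := by
  have ha := H.linBd_a
  have hd := linBd_of_bdd H.abs_d_le
  have hh := H.linBd_h
  have hder : ∀ u, 0 ≤ u →
      HasDerivAt (gu h) (gu h u - 2 * gu h u / (1 + u) - tailE u * Real.exp u ^ 2 / (1 + u)) u := by
    intro u hu
    refine (gu_hasDerivAt hh hu).congr_deriv ?_
    have e : (fun n : ℕ => ((n : ℝ) + 1) * h (n + 1))
        = fun n => (cauchy h (fun _ => 1) n + -1 * cauchy h a n)
          + (cauchy a d n + -1 * cauchy a h n) := by
      funext n
      rw [H.h_succ, cauchy, cauchy, cauchy, cauchy, Finset.mul_sum, Finset.mul_sum,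
        ← Finset.sum_add_distrib, ← Finset.sum_add_distrib, ← Finset.sum_add_distrib]
      exact Finset.sum_congr rfl fun ij _ => by ring
    rw [e, gu_add ((sumAt_conv hh LinBd.one hu).add ((sumAt_conv hh ha hu).const_mul _))
      ((sumAt_conv ha hd hu).add ((sumAt_conv ha hh hu).const_mul _)),
      gu_add (sumAt_conv hh LinBd.one hu) ((sumAt_conv hh ha hu).const_mul _),
      gu_add (sumAt_conv ha hd hu) ((sumAt_conv ha hh hu).const_mul _), gu_const_mul, gu_const_mul,
      gu_conv hh LinBd.one hu, gu_conv hh ha hu, gu_conv ha hd hu, gu_conv ha hh hu,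
      gu_one hu, H.gu_a hu, H.gu_d hu, Real.exp_neg]
    have := Real.exp_ne_zero u
    have : 1 + u ≠ 0 := by positivity
    field_simp
    ring
  have hconst := const_of_deriv_zero (f := fun u => Real.exp (-u) * (1 + u) ^ 2 * gu h u
      + (u * Real.exp u * tailE u + Real.log (1 + u) + 1 / (1 + u) - 1 + kap))
    (fun u hu => by
      have h1 : 1 + u ≠ 0 := by positivity
      have i1 : HasDerivAt (fun u : ℝ => 1 + u) 1 u := (hasDerivAt_id u).const_add 1
      have d1 := (((hasDerivAt_neg u).exp).mul (i1.pow 2)).mul (hder u hu)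
      have d2 := (((hasDerivAt_id u).mul (Real.hasDerivAt_exp u)).mul (tailE_hasDerivAt hu))
      have d3 := i1.log h1
      have d4 := (hasDerivAt_const u (1 : ℝ)).div i1 h1
      refine (d1.add ((((d2.add d3).add d4).sub_const 1).add_const kap)).congr_deriv ?_
      simp only [Pi.pow_apply, Pi.mul_apply, id]
      rw [Real.exp_neg]
      have := Real.exp_ne_zero u
      field_simp
      ring) hu
  simp only [gu_zero, H.h_zero, neg_zero, Real.exp_zero, one_pow, one_mul, zero_mul, add_zero,
    Real.log_one, div_one, zero_add, sub_self, mul_one,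
    neg_add_cancel] at hconst
  have := Real.exp_ne_zero u
  have h1 : 1 + u ≠ 0 := by positivity
  rw [Real.exp_neg] at hconst
  have h2 : gu h u = -(Real.exp u / (1 + u) ^ 2 * (u * Real.exp u * tailE u + Real.log (1 + u)
      + 1 / (1 + u) - 1 + kap)) + (Real.exp u / (1 + u) ^ 2) * ((Real.exp u)⁻¹ * (1 + u) ^ 2 * gu h u
      + (u * Real.exp u * tailE u + Real.log (1 + u) + 1 / (1 + u) - 1 + kap)) := by
    field_simp
    ring
  rw [hconst, mul_zero, add_zero] at h2
  exact h2

end MomentRec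

/-! ### The variance slope in closed form -/

/-- The integrand of the slope of the second moment, in the variable `u`. -/
noncomputable def slopeI (u : ℝ) : ℝ :=
  2 * tailE u ^ 2 * Real.exp u
    - 4 * Real.exp (-u) * (1 + u)⁻¹ ^ 3
      * (u * Real.exp u * tailE u + Real.log (1 + u) + (1 + u)⁻¹ - 1 + kap)
    + Real.exp (-u) * (1 + u)⁻¹ ^ 2

/-- An antiderivative of `slopeI u + log (1 + u) ^ 2 * e^{-u}`. -/
noncomputable def slopeF (u : ℝ) : ℝ :=
  2 * tailE u ^ 2 * Real.exp u - 2 * tailE u * (1 + u)⁻¹ ^ 2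
    + 2 * (Real.exp (-u) * Real.log (1 + u) * (1 + u)⁻¹ ^ 2)
    - 2 * (Real.exp (-u) * Real.log (1 + u) * (1 + u)⁻¹)
    - Real.log (1 + u) ^ 2 * Real.exp (-u) + 2 * (Real.exp (-u) * (1 + u)⁻¹ ^ 3)
    - (2 - 2 * kap) * (Real.exp (-u) * (1 + u)⁻¹ ^ 2) - (2 * kap + 1) * tailE u

lemma slopeF_hasDerivAt {u : ℝ} (hu : 0 ≤ u) :
    HasDerivAt slopeF (slopeI u + Real.log (1 + u) ^ 2 * Real.exp (-u)) u := by
  have h1 : 1 + u ≠ 0 := by positivity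
  have dy : HasDerivAt (fun u : ℝ => 1 + u) 1 u := (hasDerivAt_id u).const_add 1
  have di : HasDerivAt (fun u : ℝ => (1 + u)⁻¹) (-1 / (1 + u) ^ 2) u := dy.fun_inv h1
  have di2 : HasDerivAt (fun u : ℝ => (1 + u)⁻¹ ^ 2) _ u := di.fun_pow 2
  have di3 : HasDerivAt (fun u : ℝ => (1 + u)⁻¹ ^ 3) _ u := di.fun_pow 3
  have dl : HasDerivAt (fun u : ℝ => Real.log (1 + u)) (1 / (1 + u)) u := dy.log h1
  have dx : HasDerivAt (fun u : ℝ => Real.exp (-u)) (Real.exp (-u) * -1) u :=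
    (hasDerivAt_neg u).exp
  have dE := Real.hasDerivAt_exp u
  have de := tailE_hasDerivAt hu
  have key := ((((((((de.fun_pow 2).const_mul 2).fun_mul dE).fun_sub ((de.const_mul 2).fun_mul di2)).fun_add
    (((dx.fun_mul dl).fun_mul di2).const_mul 2)).fun_sub
    (((dx.fun_mul dl).fun_mul di).const_mul 2)).fun_sub ((dl.fun_pow 2).fun_mul dx)).fun_add
    ((dx.fun_mul di3).const_mul 2)).fun_sub ((dx.fun_mul di2).const_mul (2 - 2 * kap))|>.fun_sub
    (de.const_mul (2 * kap + 1))
  refine HasDerivAt.congr_deriv (f := slopeF) key ?_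
  simp only [slopeI, Nat.add_one_sub_one, pow_one]
  rw [Real.exp_neg]
  have := Real.exp_ne_zero u
  field_simp
  ring

lemma exp_neg_le_half {u : ℝ} (hu : 0 ≤ u) : Real.exp (-u) ≤ Real.exp (-(1 / 2) * u) :=
  Real.exp_le_exp.mpr (by linarith)

lemma log_one_add_nonneg {u : ℝ} (hu : 0 ≤ u) : 0 ≤ Real.log (1 + u) :=
  Real.log_nonneg (by linarith)

lemma log_one_add_le {u : ℝ} (hu : 0 ≤ u) : Real.log (1 + u) ≤ u := by
  linarith [Real.log_le_sub_one_of_pos (by linarith : 0 < 1 + u)]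

lemma logsq_bound {u : ℝ} (hu : 0 ≤ u) :
    Real.log (1 + u) ^ 2 * Real.exp (-u) ≤ 8 * Real.exp (-(1 / 2) * u) := by
  have h1 := Real.quadratic_le_exp_of_nonneg (by linarith : 0 ≤ 1 / 2 * u)
  have h2 : Real.log (1 + u) ^ 2 ≤ u ^ 2 :=
    pow_le_pow_left₀ (log_one_add_nonneg hu) (log_one_add_le hu) 2
  have h3 : Real.log (1 + u) ^ 2 ≤ 8 * Real.exp (1 / 2 * u) := by nlinarith
  have h4 : Real.exp (-(1 / 2) * u) = Real.exp (1 / 2 * u) * Real.exp (-u) := by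
    rw [← Real.exp_add]
    ring_nf
  rw [h4, ← mul_assoc]
  gcongr

lemma tailsq_bound (u : ℝ) : tailE u ^ 2 * Real.exp u ≤ Real.exp (-u) := by
  have h1 : tailE u ^ 2 ≤ Real.exp (-u) ^ 2 := pow_le_pow_left₀ (tailE_nonneg u) (tailE_le u) 2
  calc _ ≤ Real.exp (-u) ^ 2 * Real.exp u := by gcongr
    _ = _ := by rw [Real.exp_neg]; have := Real.exp_ne_zero u; field_simp

lemma inv_one_add_bounds {u : ℝ} (hu : 0 ≤ u) :
    0 < (1 + u)⁻¹ ∧ (1 + u)⁻¹ ≤ 1 ∧ u * (1 + u)⁻¹ ≤ 1 := by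
  have h1 : 0 < 1 + u := by positivity
  refine ⟨by positivity, inv_le_one_of_one_le₀ (by linarith), ?_⟩
  rw [← div_eq_mul_inv, div_le_one h1]
  linarith

lemma slopeI_bound {u : ℝ} (hu : 0 ≤ u) : |slopeI u| ≤ 20 * Real.exp (-(1 / 2) * u) := by
  obtain ⟨i0, i1, i2⟩ := inv_one_add_bounds hu
  have t1 := tailsq_bound u
  have t0 : 0 ≤ tailE u ^ 2 * Real.exp u := by positivity
  have x0 := Real.exp_pos (-u)
  have hx := exp_neg_le_half hu
  have l0 := log_one_add_nonneg hu
  have l1 := log_one_add_le hu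
  have k0 := kap_nonneg
  have k1 := kap_le_one
  have w0 : 0 ≤ u * Real.exp u * tailE u := by have := tailE_nonneg u; positivity
  have w1 : u * Real.exp u * tailE u ≤ u := by
    have : Real.exp u * tailE u ≤ 1 := by
      calc _ ≤ Real.exp u * Real.exp (-u) := by gcongr; exact tailE_le u
        _ = 1 := by rw [← Real.exp_add]; simp
    nlinarith
  set y := (1 + u)⁻¹ with hy
  set B := u * Real.exp u * tailE u + Real.log (1 + u) + y - 1 + kap with hB
  have hBa : |B| ≤ 2 * u + 2 := by
    rw [abs_le]
    constructor <;> linarith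
  have hyB : |y ^ 3 * B| ≤ 4 := by
    rw [abs_mul, abs_of_pos (by positivity : 0 < y ^ 3)]
    calc y ^ 3 * |B| = y ^ 2 * (y * |B|) := by ring
      _ ≤ 1 * (y * (2 * u + 2)) := by
        gcongr
        exact pow_le_one₀ i0.le i1
      _ ≤ 4 := by nlinarith
  have hy2 : y ^ 2 ≤ 1 := pow_le_one₀ i0.le i1
  have e : slopeI u = 2 * (tailE u ^ 2 * Real.exp u) - 4 * (Real.exp (-u) * (y ^ 3 * B))
      + Real.exp (-u) * y ^ 2 := by
    rw [slopeI]
    ring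
  obtain ⟨b1, b2⟩ := abs_le.mp hyB
  have c1 := mul_le_mul_of_nonneg_left b1 x0.le
  have c2 := mul_le_mul_of_nonneg_left b2 x0.le
  have c3 := mul_le_mul_of_nonneg_left hy2 x0.le
  have c4 : 0 ≤ Real.exp (-u) * y ^ 2 := by positivity
  rw [e, abs_le]
  constructor <;> linarith

lemma slopeF_bound {u : ℝ} (hu : 0 ≤ u) : |slopeF u| ≤ 30 * Real.exp (-(1 / 2) * u) := by
  obtain ⟨i0, i1, i2⟩ := inv_one_add_bounds hu
  have t1 := tailsq_bound u
  have t0 : 0 ≤ tailE u ^ 2 * Real.exp u := by positivity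
  have x0 := Real.exp_pos (-u)
  have hx := exp_neg_le_half hu
  have l0 := log_one_add_nonneg hu
  have l1 := log_one_add_le hu
  have k0 := kap_nonneg
  have k1 := kap_le_one
  have e0 := tailE_nonneg u
  have e1 := tailE_le u
  have L := logsq_bound hu
  have L0 : 0 ≤ Real.log (1 + u) ^ 2 * Real.exp (-u) := by positivity
  rw [slopeF]
  set y := (1 + u)⁻¹ with hy
  have hy2 : y ^ 2 ≤ 1 := pow_le_one₀ i0.le i1
  have hy3 : y ^ 3 ≤ 1 := pow_le_one₀ i0.le i1
  have ly : Real.log (1 + u) * y ≤ 1 := (mul_le_mul_of_nonneg_right l1 i0.le).trans i2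
  have a1 : tailE u * y ^ 2 ≤ Real.exp (-u) := (mul_le_of_le_one_right e0 hy2).trans e1
  have a1' : 0 ≤ tailE u * y ^ 2 := by positivity
  have a2 : Real.exp (-u) * Real.log (1 + u) * y ≤ Real.exp (-u) := by
    rw [mul_assoc]
    exact mul_le_of_le_one_right x0.le ly
  have a2' : 0 ≤ Real.exp (-u) * Real.log (1 + u) * y := by positivity
  have a3 : Real.exp (-u) * Real.log (1 + u) * y ^ 2 ≤ Real.exp (-u) := by
    rw [pow_two, ← mul_assoc]
    exact (mul_le_of_le_one_right a2' i1).trans a2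
  have a3' : 0 ≤ Real.exp (-u) * Real.log (1 + u) * y ^ 2 := by positivity
  have a4 : Real.exp (-u) * y ^ 3 ≤ Real.exp (-u) := mul_le_of_le_one_right x0.le hy3
  have a4' : 0 ≤ Real.exp (-u) * y ^ 3 := by positivity
  have a5 : Real.exp (-u) * y ^ 2 ≤ Real.exp (-u) := mul_le_of_le_one_right x0.le hy2
  have a5' : 0 ≤ Real.exp (-u) * y ^ 2 := by positivity
  have a6 : (2 - 2 * kap) * (Real.exp (-u) * y ^ 2) ≤ 2 * Real.exp (-u) := by
    gcongr
    linarith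
  have a6' : 0 ≤ (2 - 2 * kap) * (Real.exp (-u) * y ^ 2) := mul_nonneg (by linarith) a5'
  have a7 : (2 * kap + 1) * tailE u ≤ 3 * Real.exp (-u) := by
    gcongr
    linarith
  have a7' : 0 ≤ (2 * kap + 1) * tailE u := by positivity
  rw [abs_le]
  constructor <;> linarith

lemma slopeF_tendsto : Filter.Tendsto slopeF Filter.atTop (nhds 0) := by
  have h1 : Filter.Tendsto (fun u : ℝ => 30 * Real.exp (-(1 / 2) * u)) Filter.atTop (nhds 0) := by
    rw [← mul_zero (30 : ℝ)]
    refine Filter.Tendsto.const_mul 30 (Real.tendsto_exp_atBot.comp ?_)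
    exact Filter.tendsto_id.const_mul_atTop_of_neg (by norm_num)
  refine squeeze_zero_norm' ?_ h1
  filter_upwards [Filter.eventually_ge_atTop 0] with u hu
  exact slopeF_bound hu

lemma continuousOn_tailE : ContinuousOn tailE (Set.Ici 0) := fun _ hu =>
  (tailE_hasDerivAt hu).continuousAt.continuousWithinAt

lemma one_add_ne_zero_of_mem {u : ℝ} (hu : u ∈ Set.Ici (0 : ℝ)) : 1 + u ≠ 0 := by
  have : (0 : ℝ) ≤ u := hu
  positivity

lemma continuousOn_log_one_add : ContinuousOn (fun u : ℝ => Real.log (1 + u)) (Set.Ici 0) :=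
  ContinuousOn.log (by fun_prop) fun _ hu => one_add_ne_zero_of_mem hu

lemma integrableOn_logsq :
    IntegrableOn (fun u : ℝ => Real.log (1 + u) ^ 2 * Real.exp (-u)) (Set.Ioi 0) := by
  refine integrableOn_of_exp_bound (C := 8) ?_ fun u hu => ?_
  · have := continuousOn_log_one_add
    fun_prop
  · rw [abs_of_nonneg (by positivity)]
    exact logsq_bound hu

lemma integrableOn_slopeI : IntegrableOn slopeI (Set.Ioi 0) := by
  refine integrableOn_of_exp_bound (C := 20) ?_ fun u hu => slopeI_bound hu
  have h1 := continuousOn_log_one_add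
  have h2 := continuousOn_tailE
  have h3 : ContinuousOn (fun u : ℝ => (1 + u)⁻¹) (Set.Ici 0) :=
    ContinuousOn.inv₀ (by fun_prop) fun _ hu => one_add_ne_zero_of_mem hu
  unfold slopeI
  fun_prop

lemma integral_slopeI : ∫ u in Set.Ioi (0 : ℝ), slopeI u
    = kap - ∫ u in Set.Ioi (0 : ℝ), Real.log (1 + u) ^ 2 * Real.exp (-u) := by
  have h := integral_Ioi_of_hasDerivAt_of_tendsto' (a := 0) (fun u hu => slopeF_hasDerivAt hu)
    (integrableOn_slopeI.add integrableOn_logsq) slopeF_tendsto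
  rw [integral_add integrableOn_slopeI integrableOn_logsq] at h
  have h0 : slopeF 0 = -kap := by
    simp only [slopeF, tailE_zero, add_zero, Real.log_one, neg_zero, Real.exp_zero, inv_one]
    ring
  rw [h0] at h
  linarith

namespace MomentRec

variable {a d h s : ℕ → ℝ}

/-- Linear growth of the second moment, with logarithmic error and slope `K1 / 4`. -/
lemma s_asymp (H : MomentRec kap a d h s) (n : ℕ) :
    |s (n + 1) - (n + 2) * (K1 / 4)| ≤ 639 * hq n := by
  have ha := H.linBd_a
  have hd := linBd_of_bdd H.abs_d_le
  have hh := H.linBd_h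
  set r : ℕ → ℝ := fun n => (2 * cauchy d d n + 2 * cauchy h a n) + (2 * cauchy a h n + cauchy a a n) with hr
  have hrb : ∀ n : ℕ, |r n| ≤ 71 * ((n + 1) * hq n) := by
    intro n
    have hq1 := one_le_hq n
    have b1 : |cauchy d d n| ≤ ((n : ℝ) + 1) * 25 := cauchy_bound fun ij _ => by
      rw [abs_mul]
      nlinarith [H.abs_d_le ij.1, H.abs_d_le ij.2, abs_nonneg (d ij.1), abs_nonneg (d ij.2)]
    have b2 : |cauchy h a n| ≤ ((n : ℝ) + 1) * (5 * hq n) := cauchy_bound fun ij hij => by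
      have h1 := H.abs_h_le ij.1
      have h2 : hq ij.1 ≤ hq n := hq_mono (by
        have := Finset.HasAntidiagonal.mem_antidiagonal.mp hij
        omega)
      rw [abs_mul]
      exact (mul_le_of_le_one_right (abs_nonneg _) (H.abs_a_le _)).trans (by linarith)
    have b3 : |cauchy a h n| ≤ ((n : ℝ) + 1) * (5 * hq n) := cauchy_bound fun ij hij => by
      have h1 := H.abs_h_le ij.2
      have h2 : hq ij.2 ≤ hq n := hq_mono (by
        have := Finset.HasAntidiagonal.mem_antidiagonal.mp hij
        omega)
      rw [abs_mul]
      exact (mul_le_of_le_one_left (abs_nonneg _) (H.abs_a_le _)).trans (by linarith)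
    have b4 : |cauchy a a n| ≤ ((n : ℝ) + 1) * 1 := cauchy_bound fun ij _ => by
      rw [abs_mul]
      exact mul_le_one₀ (H.abs_a_le _) (abs_nonneg _) (H.abs_a_le _)
    have hn : (0 : ℝ) ≤ (n : ℝ) + 1 := by positivity
    have h3 := mul_le_mul_of_nonneg_left hq1 hn
    rw [abs_le] at *
    simp only [hr]
    constructor <;> linarith
  obtain ⟨hsum, hasy⟩ := rec_asymp (s := s) (r := r) (q := hq)
    (D := fun n : ℕ => (hq n + 1) / ((n : ℝ) + 1)) (C := 71)
    (fun n => by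
      have e : r n = ∑ ij ∈ antidiagonal n, (2 * (d ij.1 * d ij.2) + 2 * (h ij.1 * a ij.2)
          + 2 * (a ij.1 * h ij.2) + a ij.1 * a ij.2) := by
        simp only [hr, cauchy, Finset.mul_sum, ← Finset.sum_add_distrib]
        exact Finset.sum_congr rfl fun ij _ => by ring
      rw [H.s_succ, Finset.sum_add_distrib, Finset.sum_add_distrib, sum_antidiagonal_fst,
        sum_antidiagonal_snd, e]
      ring)
    (by norm_num) hrb
    (fun n => by
      refine le_of_eq ?_
      simp only [hq_succ]
      push_cast
      field_simp
      ring)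
    (fun n => by have := one_le_hq n; positivity) (fun n => by linarith [one_le_hq n])
  have hslope : s 0 + ∑' k : ℕ, r k * (2 / (((k : ℝ) + 1) * (k + 2) * (k + 3))) = K1 / 4 := by
    have e : ∀ u ∈ Set.Ioi (0 : ℝ), Real.exp (-u) ^ 3 * gu r u = slopeI u := by
      intro u hu
      have hu' : 0 ≤ u := le_of_lt hu
      have s1 := (sumAt_conv hd hd hu').const_mul 2
      have s2 := (sumAt_conv hh ha hu').const_mul 2
      have s3 := (sumAt_conv ha hh hu').const_mul 2
      have s4 := sumAt_conv ha ha hu'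
      rw [hr, gu_add (s1.add s2) (s3.add s4), gu_add s1 s2, gu_add s3 s4, gu_const_mul,
        gu_const_mul, gu_const_mul, gu_conv hd hd hu', gu_conv hh ha hu', gu_conv ha hh hu',
        gu_conv ha ha hu', H.gu_a hu', H.gu_d hu', H.gu_h hu', slopeI, Real.exp_neg]
      have := Real.exp_ne_zero u
      have : 1 + u ≠ 0 := one_add_ne_zero_of_mem hu'
      field_simp
      ring
    rw [tsum_eq_integral_u hsum, H.s_zero, setIntegral_congr_fun measurableSet_Ioi e,
      integral_slopeI, K1, kap_eq]
    ring
  have := hasy n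
  rw [hslope] at this
  refine this.trans ?_
  have hq1 := one_le_hq n
  have h1 : ((n : ℝ) + 2) * ((hq n + 1) / ((n : ℝ) + 1)) ≤ 2 * (hq n + 1) := by
    rw [← mul_div_assoc, div_le_iff₀ (by positivity)]
    have := (Nat.cast_nonneg n : (0 : ℝ) ≤ n)
    nlinarith
  linarith

end MomentRec

lemma var_asymp (k : ℕ) : |varAdjMult 0 (k + 2) - K1 * ((k : ℝ) + 2)| ≤ 2656 * MomentRec.hq k := by
  have H := momentRec kap
  have h1 := H.s_asymp k
  have h2 := H.abs_d_le (k + 1)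
  have h3 := MomentRec.one_le_hq k
  rw [show k + 2 = (k + 1) + 1 by ring, varAdjMult_eq kap]
  set S := ev (k + 1) (fun t => cmat kap t ^ 2)
  set M := ev (k + 1) (cmat kap)
  have h4 : M ^ 2 ≤ 25 := by
    rw [← sq_abs]
    nlinarith [abs_nonneg M]
  have h5 := sq_nonneg M
  rw [abs_le] at h1 ⊢
  constructor <;> linarith

/-- The variance of the multiplicity of the eigenvalue `0` of a random recursive tree
satisfies `Var[N_0(Rec_n)] = K₁ n + O(n/log n)`. -/
theorem stmt15 :
    ∃ C : ℝ, 0 < C ∧ ∃ N : ℕ, ∀ n ≥ N,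
      |varAdjMult 0 n - K1 * n| ≤ C * n / Real.log n := by
  refine ⟨10624, by norm_num, 2, fun n hn => ?_⟩
  obtain ⟨k, rfl⟩ := Nat.exists_eq_add_of_le' hn
  have h := var_asymp k
  push_cast
  set L := Real.log ((k : ℝ) + 2) with hL
  have hL0 : 0 < L := Real.log_pos (by linarith [(Nat.cast_nonneg k : (0 : ℝ) ≤ k)])
  have hqL : MomentRec.hq k ≤ 2 + L := by
    have h1 := harmonic_le_one_add_log k
    have h2 : Real.log k ≤ L := by
      rcases Nat.eq_zero_or_pos k with rfl | hk
      · simpa using hL0.le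
      · exact Real.log_le_log (by exact_mod_cast hk) (by linarith)
    rw [MomentRec.hq]
    linarith
  -- `e^L = n` dominates `1 + L + L² / 2`
  have hexp := Real.quadratic_le_exp_of_nonneg hL0.le
  rw [hL, Real.exp_log (by positivity), ← hL] at hexp
  rw [le_div_iff₀ hL0]
  calc _ ≤ 2656 * (2 + L) * L := by
        gcongr
        linarith
    _ ≤ _ := by nlinarith
end

section
/- For every x ∈ [0, 1), Σ_{n=1}^∞ (a_n/n!)·x^n = log(1 − log(1−x)), where a_n is the number of parent functions p on {0,…,n−1} such that the recursive tree T_p satisfies N_0(T_p) − N_0(T_p − 0) = 1 (i.e., the toll of the eigenvalue 0 at the root equals 1); in particular, the series on the left converges for all x ∈ [0,1). -/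
/-- `a_{k+1}`: the number of parent functions `p` on `{0, …, k}` whose recursive tree
`T_p` satisfies `N_0(T_p) - N_0(T_p - 0) = 1`, i.e. the toll of the eigenvalue `0` at
the root equals `1`. -/
noncomputable def aPlus (k : ℕ) : ℕ :=
  Nat.card {p : ParentSpace (k + 1) //
    (adjMult (recTree p) 0 : ℤ) -
      (adjMult ((recTree p).induce ({(0 : Fin (k + 1))}ᶜ : Set (Fin (k + 1)))) 0 : ℤ) = 1}

/-! ### The toll in terms of kernel vectors -/

section LinearAlgebra

theorem adjMult_zero_eq {V : Type} [Fintype V] (G : SimpleGraph V) [DecidableRel G.Adj] :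
    adjMult G 0 = Module.finrank ℝ (LinearMap.ker (G.adjMatrix ℝ).mulVecLin) := by
  unfold adjMult eigMult
  rw [zero_smul, sub_zero]
  congr!

theorem mem_ker_adj {V : Type} [Fintype V] (G : SimpleGraph V) [DecidableRel G.Adj]
    (x : V → ℝ) :
    x ∈ LinearMap.ker (G.adjMatrix ℝ).mulVecLin ↔
      ∀ v, ∑ w, (if G.Adj v w then x w else 0) = 0 := by
  rw [LinearMap.mem_ker, funext_iff]
  simp [Matrix.mulVec, dotProduct, SimpleGraph.adjMatrix_apply]

/-- Extension by zero from the complement of `r`. -/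
noncomputable def extendZero {V : Type} (r : V) :
    (({r}ᶜ : Set V) → ℝ) →ₗ[ℝ] (V → ℝ) where
  toFun y v := open Classical in if h : v ∈ ({r}ᶜ : Set V) then y ⟨v, h⟩ else 0
  map_add' y z := by
    funext v
    by_cases h : v ∈ ({r}ᶜ : Set V) <;> simp [h]
  map_smul' c y := by
    funext v
    by_cases h : v ∈ ({r}ᶜ : Set V) <;> simp [h]

theorem extendZero_self {V : Type} (r : V) (y : ({r}ᶜ : Set V) → ℝ) :
    extendZero r y r = 0 := by
  simp [extendZero]

theorem extendZero_coe {V : Type} (r : V) (y : ({r}ᶜ : Set V) → ℝ) (v : ({r}ᶜ : Set V)) :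
    extendZero r y v = y v := by
  have := v.2
  simp only [extendZero, LinearMap.coe_mk, AddHom.coe_mk, dif_pos this]

theorem sum_compl_eq {V : Type} [Fintype V] [DecidableEq V] (r : V) [Fintype ({r}ᶜ : Set V)]
    (f : V → ℝ) (hf : f r = 0) : ∑ w : ({r}ᶜ : Set V), f w = ∑ w, f w := by
  have h : ∑ w : ({r}ᶜ : Set V), f w = ∑ w ∈ Finset.univ.filter (fun w => w ≠ r), f w := by
    symm
    apply Finset.sum_subtype
    simp
  rw [h]
  apply Finset.sum_subset (Finset.subset_univ _)
  intro v _ hv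
  simp at hv
  rw [hv, hf]

open Classical in
/-- The toll of the eigenvalue `0` at `r` is `1` exactly when some kernel vector of the
adjacency matrix is nonzero at `r`. If `x₀` is such a vector, normalised by `x₀ r = 1`, symmetry
of the matrix shows that kernel vectors of `G - r` extend by zero, so that the kernel of `G` is
the direct sum of the kernel of `G - r` and of the line of `x₀`. Otherwise restriction embeds
the kernel of `G` into that of `G - r`. -/
theorem toll_eq_one_iff {V : Type} [Fintype V] (G : SimpleGraph V) (r : V) :
    (adjMult G 0 : ℤ) - (adjMult (G.induce ({r}ᶜ : Set V)) 0 : ℤ) = 1 ↔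
      ∃ x : V → ℝ, x r ≠ 0 ∧ ∀ v, ∑ w, (if G.Adj v w then x w else 0) = 0 := by
  rw [adjMult_zero_eq, adjMult_zero_eq]
  have restr : ∀ x ∈ LinearMap.ker (G.adjMatrix ℝ).mulVecLin, x r = 0 →
      (fun v : ({r}ᶜ : Set V) => x v) ∈
        LinearMap.ker ((G.induce ({r}ᶜ : Set V)).adjMatrix ℝ).mulVecLin := by
    intro x hx hr
    rw [mem_ker_adj] at hx ⊢
    intro v
    exact (sum_compl_eq r (fun w => if G.Adj v w then x w else 0) (by simp [hr])).trans (hx v)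
  constructor
  · intro h
    by_contra! hno
    have hr : ∀ x ∈ LinearMap.ker (G.adjMatrix ℝ).mulVecLin, x r = 0 := by
      intro x hx
      by_contra hxr
      obtain ⟨v, hv⟩ := hno x hxr
      exact hv ((mem_ker_adj G x).1 hx v)
    let φ : LinearMap.ker (G.adjMatrix ℝ).mulVecLin →ₗ[ℝ]
        LinearMap.ker ((G.induce ({r}ᶜ : Set V)).adjMatrix ℝ).mulVecLin :=
      { toFun := fun x => ⟨fun v => x.1 v, restr x.1 x.2 (hr x.1 x.2)⟩
        map_add' := fun x y => rfl
        map_smul' := fun c x => rfl }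
    have hφ : Function.Injective φ := by
      intro x y hxy
      apply Subtype.ext
      funext v
      by_cases hv : v = r
      · rw [hv, hr x.1 x.2, hr y.1 y.2]
      · exact congrFun (congrArg Subtype.val hxy) ⟨v, hv⟩
    have := LinearMap.finrank_le_finrank_of_injective hφ
    omega
  · rintro ⟨x, hxr, hx⟩
    obtain ⟨x₀, hx₀r, hx₀⟩ : ∃ x₀ : V → ℝ, x₀ r = 1 ∧
        x₀ ∈ LinearMap.ker (G.adjMatrix ℝ).mulVecLin :=
      ⟨(x r)⁻¹ • x, by simp [hxr], Submodule.smul_mem _ _ ((mem_ker_adj G x).2 hx)⟩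
    have hext : ∀ y ∈ LinearMap.ker ((G.induce ({r}ᶜ : Set V)).adjMatrix ℝ).mulVecLin,
        extendZero r y ∈ LinearMap.ker (G.adjMatrix ℝ).mulVecLin := by
      intro y hy
      rw [mem_ker_adj] at hy ⊢
      have hoff : ∀ v, v ≠ r →
          ∑ w, (if G.Adj v w then extendZero r y w else 0) = 0 := by
        intro v hv
        rw [← sum_compl_eq r _ (by simp [extendZero_self])]
        refine Eq.trans ?_ (hy ⟨v, hv⟩)
        refine Finset.sum_congr rfl fun w _ => ?_
        rw [extendZero_coe]
        rfl
      -- pairing with `x₀` kills the row sum at `r`, because the adjacency matrix is symmetric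
      have hpair : ∑ v, x₀ v * ∑ w, (if G.Adj v w then extendZero r y w else 0) = 0 := by
        have h0 : ∑ w, extendZero r y w * ∑ v, (if G.Adj w v then x₀ v else 0) = 0 :=
          Finset.sum_eq_zero fun w _ => by rw [(mem_ker_adj G x₀).1 hx₀ w, mul_zero]
        refine Eq.trans ?_ h0
        simp_rw [Finset.mul_sum]
        rw [Finset.sum_comm]
        refine Finset.sum_congr rfl fun w _ => Finset.sum_congr rfl fun v _ => ?_
        simp only [G.adj_comm w v]
        split_ifs <;> ring
      intro v
      by_cases hv : v = r
      · subst hv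
        rw [Finset.sum_eq_single v (fun b _ hb => by rw [hoff b hb, mul_zero]) (by simp),
          hx₀r, one_mul] at hpair
        exact hpair
      · exact hoff v hv
    let ψ : (LinearMap.ker ((G.induce ({r}ᶜ : Set V)).adjMatrix ℝ).mulVecLin × ℝ) →ₗ[ℝ]
        LinearMap.ker (G.adjMatrix ℝ).mulVecLin :=
      { toFun := fun yc => ⟨extendZero r yc.1.1 + yc.2 • x₀,
          Submodule.add_mem _ (hext _ yc.1.2) (Submodule.smul_mem _ _ hx₀)⟩
        map_add' := fun a b => by
          apply Subtype.ext
          simp only [Prod.fst_add, Prod.snd_add, Submodule.coe_add, map_add, add_smul]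
          abel
        map_smul' := fun c a => by
          apply Subtype.ext
          simp [mul_smul] }
    have hψ : Function.Bijective ψ := by
      constructor
      · rw [← LinearMap.ker_eq_bot, LinearMap.ker_eq_bot']
        rintro ⟨y, c⟩ h
        have h1 : ∀ v, extendZero r y.1 v + c * x₀ v = 0 := fun v =>
          congrFun (congrArg Subtype.val h) v
        have hc : c = 0 := by simpa [extendZero_self, hx₀r] using h1 r
        have hy : y = 0 := by
          apply Subtype.ext
          funext v
          simpa [hc, extendZero_coe] using h1 v
        rw [hc, hy]
        rfl
      · intro z
        have hz := restr (z.1 - z.1 r • x₀)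
          (Submodule.sub_mem _ z.2 (Submodule.smul_mem _ _ hx₀)) (by simp [hx₀r])
        refine ⟨(⟨_, hz⟩, z.1 r), ?_⟩
        apply Subtype.ext
        funext v
        change extendZero r _ v + z.1 r * x₀ v = z.1 v
        by_cases hv : v = r
        · rw [hv, extendZero_self, hx₀r]
          ring
        · have := extendZero_coe r (fun v : ({r}ᶜ : Set V) => (z.1 - z.1 r • x₀) v) ⟨v, hv⟩
          simp only at this
          rw [this]
          simp
    have := (LinearEquiv.ofBijective ψ hψ).finrank_eq
    rw [Module.finrank_prod, Module.finrank_self] at this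
    omega

end LinearAlgebra

/-! ### Taylor coefficients of `log (1 - log (1 - z))` -/

section Analysis

/-- `α = A'`, the derivative of `A(z) = log (1 - log (1 - z))`. -/
noncomputable def egfGood (z : ℂ) : ℂ := ((1 - z) * (1 - Complex.log (1 - z)))⁻¹

/-- `β = B'`, where `A + B = -log (1 - z)` is the generating function of all recursive trees. -/
noncomputable def egfBad (z : ℂ) : ℂ := (1 - z)⁻¹ - egfGood z

/-- The values at `0` of the iterated derivatives of `α ^ u * β ^ m`, given by the recursion
coming from `α' = α β` and `β' = α² + α β + β²`. -/
def taylorCoeff : ℕ → ℕ → ℕ → ℕ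
  | 0, _, m => if m = 0 then 1 else 0
  | t + 1, u, m => (u + m) * taylorCoeff t u (m + 1) +
      m * (taylorCoeff t (u + 1) m + taylorCoeff t (u + 2) (m - 1))

theorem one_sub_mem_slitPlane {z : ℂ} (hz : z ∈ Metric.ball (0 : ℂ) 1) :
    1 - z ∈ Complex.slitPlane := by
  left
  have h1 : z.re ≤ ‖z‖ := Complex.re_le_norm z
  have h2 : ‖z‖ < 1 := by simpa using hz
  simp
  linarith

/-- On the unit disc `Re log (1 - z) = log |1 - z| < log 2 < 1`. -/
theorem one_sub_log_mem_slitPlane {z : ℂ} (hz : z ∈ Metric.ball (0 : ℂ) 1) :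
    1 - Complex.log (1 - z) ∈ Complex.slitPlane := by
  left
  have h2 : ‖z‖ < 1 := by simpa using hz
  have h3 : ‖1 - z‖ ≤ 2 := by
    have := norm_sub_le (1 : ℂ) z
    rw [norm_one] at this
    linarith
  have hpos : 0 < ‖1 - z‖ :=
    norm_pos_iff.2 (Complex.slitPlane_ne_zero (one_sub_mem_slitPlane hz))
  have h4 := Real.log_le_log hpos h3
  have h5 := Real.log_two_lt_d9
  rw [Complex.sub_re, Complex.one_re, Complex.log_re]
  linarith

theorem hasDerivAt_inv_one_sub {z : ℂ} (hz : z ∈ Metric.ball (0 : ℂ) 1) :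
    HasDerivAt (fun z : ℂ => (1 - z)⁻¹) ((1 - z)⁻¹ ^ 2) z := by
  have h := ((hasDerivAt_id z).const_sub 1).inv
    (Complex.slitPlane_ne_zero (one_sub_mem_slitPlane hz))
  refine h.congr_deriv ?_
  simp

theorem hasDerivAt_one_sub_log {z : ℂ} (hz : z ∈ Metric.ball (0 : ℂ) 1) :
    HasDerivAt (fun z : ℂ => 1 - Complex.log (1 - z)) (1 - z)⁻¹ z := by
  have h := (((hasDerivAt_id z).const_sub 1).clog (one_sub_mem_slitPlane hz)).const_sub 1
  refine h.congr_deriv ?_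
  simp [neg_div]

theorem hasDerivAt_log_log {z : ℂ} (hz : z ∈ Metric.ball (0 : ℂ) 1) :
    HasDerivAt (fun z : ℂ => Complex.log (1 - Complex.log (1 - z))) (egfGood z) z := by
  refine ((hasDerivAt_one_sub_log hz).clog (one_sub_log_mem_slitPlane hz)).congr_deriv ?_
  rw [egfGood, mul_inv, div_eq_mul_inv]

theorem hasDerivAt_egfGood {z : ℂ} (hz : z ∈ Metric.ball (0 : ℂ) 1) :
    HasDerivAt egfGood (egfGood z * egfBad z) z := by
  have h1 := Complex.slitPlane_ne_zero (one_sub_mem_slitPlane hz)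
  have h2 := Complex.slitPlane_ne_zero (one_sub_log_mem_slitPlane hz)
  have h := (((hasDerivAt_id z).const_sub 1).mul (hasDerivAt_one_sub_log hz)).inv
    (mul_ne_zero h1 h2)
  refine h.congr_deriv ?_
  simp only [egfBad, egfGood, id, Pi.mul_apply]
  field_simp
  ring

theorem hasDerivAt_egfBad {z : ℂ} (hz : z ∈ Metric.ball (0 : ℂ) 1) :
    HasDerivAt egfBad (egfGood z ^ 2 + egfGood z * egfBad z + egfBad z ^ 2) z := by
  refine ((hasDerivAt_inv_one_sub hz).sub (hasDerivAt_egfGood hz)).congr_deriv ?_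
  simp only [egfBad]
  ring

theorem deriv_monomial {z : ℂ} (hz : z ∈ Metric.ball (0 : ℂ) 1) (u m : ℕ) :
    deriv (fun z => egfGood z ^ u * egfBad z ^ m) z =
      (u + m : ℕ) * (egfGood z ^ u * egfBad z ^ (m + 1)) +
        m * (egfGood z ^ (u + 1) * egfBad z ^ m + egfGood z ^ (u + 2) * egfBad z ^ (m - 1)) := by
  have h := ((hasDerivAt_egfGood hz).fun_pow u).fun_mul ((hasDerivAt_egfBad hz).fun_pow m)
  rw [h.deriv]
  rcases u with _ | u <;> rcases m with _ | m <;> simp <;> ring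

theorem analyticAt_monomial (u m : ℕ) :
    AnalyticAt ℂ (fun z => egfGood z ^ u * egfBad z ^ m) 0 := by
  have hg : AnalyticAt ℂ egfGood 0 :=
    DifferentiableOn.analyticAt (s := Metric.ball (0 : ℂ) 1)
      (fun z hz => (hasDerivAt_egfGood hz).differentiableAt.differentiableWithinAt)
      (Metric.ball_mem_nhds _ one_pos)
  have hb : AnalyticAt ℂ egfBad 0 :=
    DifferentiableOn.analyticAt (s := Metric.ball (0 : ℂ) 1)
      (fun z hz => (hasDerivAt_egfBad hz).differentiableAt.differentiableWithinAt)
      (Metric.ball_mem_nhds _ one_pos)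
  exact (hg.pow u).mul (hb.pow m)

theorem iteratedDeriv_monomial (t u m : ℕ) :
    iteratedDeriv t (fun z => egfGood z ^ u * egfBad z ^ m) 0 = taylorCoeff t u m := by
  induction t generalizing u m with
  | zero =>
    have hg : egfGood 0 = 1 := by simp [egfGood]
    have hb : egfBad 0 = 0 := by simp [egfBad, hg]
    rcases m with _ | m <;> simp [taylorCoeff, hg, hb]
  | succ t ih =>
    have hE : deriv (fun z => egfGood z ^ u * egfBad z ^ m) =ᶠ[nhds 0] fun z =>
        (u + m : ℕ) * (egfGood z ^ u * egfBad z ^ (m + 1)) +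
        m * (egfGood z ^ (u + 1) * egfBad z ^ m + egfGood z ^ (u + 2) * egfBad z ^ (m - 1)) := by
      filter_upwards [Metric.ball_mem_nhds (0 : ℂ) one_pos] with z hz
      exact deriv_monomial hz u m
    have hc : ∀ u m, ContDiffAt ℂ t (fun z => egfGood z ^ u * egfBad z ^ m) 0 :=
      fun u m => (analyticAt_monomial u m).contDiffAt
    rw [iteratedDeriv_succ', hE.iteratedDeriv_eq,
      iteratedDeriv_fun_add (contDiffAt_const.mul (hc _ _))
        (contDiffAt_const.mul ((hc _ _).add (hc _ _))),
      iteratedDeriv_const_mul_field, iteratedDeriv_const_mul_field,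
      iteratedDeriv_fun_add (hc _ _) (hc _ _), ih, ih, ih]
    simp [taylorCoeff]

/-- `z ↦ log (1 - log (1 - z))` is holomorphic on the whole unit disc, so its Taylor series
converges to it there. -/
theorem hasSum_taylorCoeff (x : ℝ) (hx : x ∈ Set.Ico (0 : ℝ) 1) :
    HasSum (fun k : ℕ => (taylorCoeff k 1 0 : ℝ) / (Nat.factorial (k + 1)) * x ^ (k + 1))
      (Real.log (1 - Real.log (1 - x))) := by
  have hball : (x : ℂ) ∈ Metric.ball (0 : ℂ) 1 := by
    simpa [abs_of_nonneg hx.1] using hx.2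
  have hT := Complex.hasSum_taylorSeries_on_ball (c := (0 : ℂ)) (r := 1)
    (f := fun z : ℂ => Complex.log (1 - Complex.log (1 - z)))
    (fun z hz => (hasDerivAt_log_log hz).differentiableAt.differentiableWithinAt) hball
  rw [← hasSum_nat_add_iff' 1] at hT
  have hd : deriv (fun z : ℂ => Complex.log (1 - Complex.log (1 - z))) =ᶠ[nhds 0]
      fun z => egfGood z ^ 1 * egfBad z ^ 0 := by
    filter_upwards [Metric.ball_mem_nhds (0 : ℂ) one_pos] with z hz
    rw [(hasDerivAt_log_log hz).deriv]
    simp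
  have hlog : 0 ≤ 1 - Real.log (1 - x) := by
    have := Real.log_nonpos (x := 1 - x) (by linarith [hx.2]) (by linarith [hx.1])
    linarith
  rw [← Complex.hasSum_ofReal]
  convert hT using 1
  · rfl
  · funext k
    rw [iteratedDeriv_succ', hd.iteratedDeriv_eq, iteratedDeriv_monomial]
    simp
    ring
  · rw [Complex.ofReal_log hlog]
    push_cast
    rw [Complex.ofReal_log (by linarith [hx.2])]
    simp

end Analysis

/-! ### Good vertices and kernel vectors of recursive trees -/

section Tree

/-- A vertex is good if none of its children is good. -/
def IsGood (n : ℕ) (par : ℕ → ℕ) (v : ℕ) : Prop :=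
  ∀ w, v < w → w < n → par w = v → ¬ IsGood n par w
termination_by n - v
decreasing_by omega

theorem isGood_iff (n : ℕ) (par : ℕ → ℕ) (v : ℕ) :
    IsGood n par v ↔ ∀ w, v < w → w < n → par w = v → ¬ IsGood n par w := by
  rw [IsGood]

/-- The kernel equations of the adjacency matrix of the tree with parent function `par`:
at every vertex the parent and the children have values adding up to zero. -/
def IsKernelVector (n : ℕ) (par : ℕ → ℕ) (x : ℕ → ℝ) : Prop :=
  ∀ v < n, (if 0 < v then x (par v) else 0) +
    ∑ w ∈ Finset.range n with 0 < w ∧ par w = v, x w = 0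

/-- Kernel vectors vanish at every bad vertex `v`: the equation at a good child of `v`, whose
own children are all bad, reduces to the vanishing at `v`. -/
theorem IsKernelVector.eq_zero_of_not_isGood {n : ℕ} {par : ℕ → ℕ}
    (hpar : ∀ v, 0 < v → par v < v) {x : ℕ → ℝ} (hx : IsKernelVector n par x) (v : ℕ)
    (hb : ¬ IsGood n par v) : x v = 0 := by
  induction hd : n - v using Nat.strong_induction_on generalizing v with
  | _ d ih =>
    rw [isGood_iff] at hb
    push Not at hb
    obtain ⟨w, hvw, hwn, hpw, hw⟩ := hb
    have h := hx w hwn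
    rw [if_pos (by omega), hpw, Finset.sum_eq_zero, add_zero] at h
    · exact h
    · intro u hu
      simp only [Finset.mem_filter, Finset.mem_range] at hu
      obtain ⟨hun, hu0, hpu⟩ := hu
      have hlt := hpar u hu0
      exact ih (n - u) (by omega) u ((isGood_iff n par w).1 hw u (by omega) hun hpu) rfl

open Classical in
/-- The kernel vector attached to a choice `sel` of a good child for every bad vertex: it is
`1` at the root, changes sign from the grandparent to the selected grandchild, and vanishes
elsewhere. -/
noncomputable def altVector (n : ℕ) (par sel : ℕ → ℕ) (v : ℕ) : ℝ :=
  if v = 0 then 1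
  else if h : IsGood n par v ∧ sel (par v) = v ∧ par (par v) < v then
    - altVector n par sel (par (par v))
  else 0
termination_by v
decreasing_by exact h.2.2

theorem exists_isKernelVector {n : ℕ} {par : ℕ → ℕ}
    (hpar : ∀ v, 0 < v → par v < v) (h0 : IsGood n par 0) :
    ∃ x : ℕ → ℝ, x 0 ≠ 0 ∧ IsKernelVector n par x := by
  have hsel : ∀ v, ∃ w, ¬ IsGood n par v → v < w ∧ w < n ∧ par w = v ∧ IsGood n par w := by
    intro v
    by_cases hv : IsGood n par v
    · exact ⟨0, fun h => absurd hv h⟩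
    · have hb := hv
      rw [isGood_iff] at hb
      push Not at hb
      obtain ⟨w, hw⟩ := hb
      exact ⟨w, fun _ => hw⟩
  choose sel hsel using hsel
  have hbad : ∀ v, ¬ IsGood n par v → altVector n par sel v = 0 := by
    intro v hv
    have hv0 : v ≠ 0 := by
      rintro rfl
      exact hv h0
    rw [altVector, if_neg hv0, dif_neg (fun h => hv h.1)]
  refine ⟨altVector n par sel, by rw [altVector]; simp, ?_⟩
  intro v hvn
  by_cases hv : IsGood n par v
  · -- the parent and all the children of a good vertex are bad
    rw [Finset.sum_eq_zero, add_zero]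
    · split_ifs with hv0
      · apply hbad
        rw [isGood_iff]
        intro h
        exact h v (hpar v hv0) hvn rfl hv
      · rfl
    · intro w hw
      simp only [Finset.mem_filter, Finset.mem_range] at hw
      obtain ⟨hwn, hw0, hpw⟩ := hw
      have := hpar w hw0
      exact hbad w ((isGood_iff n par v).1 hv w (by omega) hwn hpw)
  · -- among the children of a bad vertex only the selected one contributes
    have hv0 : 0 < v := by
      rcases Nat.eq_zero_or_pos v with rfl | h
      · exact absurd h0 hv
      · exact h
    obtain ⟨hs1, hs2, hs3, hs4⟩ := hsel v hv
    rw [if_pos hv0, Finset.sum_eq_single (sel v)]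
    · have hp := hpar v hv0
      have hval : altVector n par sel (sel v) = - altVector n par sel (par v) := by
        rw [altVector, if_neg (by omega),
          dif_pos ⟨hs4, by rw [hs3], by rw [hs3]; omega⟩, hs3]
      rw [hval, add_neg_cancel]
    · intro w hw hne
      simp only [Finset.mem_filter, Finset.mem_range] at hw
      obtain ⟨hwn, hw0, hpw⟩ := hw
      rw [altVector, if_neg (by omega), dif_neg]
      rintro ⟨_, h2, _⟩
      exact hne (by rw [← h2, hpw])
    · intro h
      exact absurd (by simp only [Finset.mem_filter, Finset.mem_range]; omega) h

/-- The parent map of `p`, extended by junk values to all natural numbers. -/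
def parentMap {k : ℕ} (p : ParentSpace (k + 1)) (v : ℕ) : ℕ :=
  if h : v - 1 < k then (p ⟨v - 1, h⟩).val else 0

theorem parentMap_lt {k : ℕ} (p : ParentSpace (k + 1)) (v : ℕ) (hv : 0 < v) :
    parentMap p v < v := by
  unfold parentMap
  split_ifs with h
  · have := (p ⟨v - 1, h⟩).2
    simp only at this
    omega
  · exact hv

theorem recTree_rel_iff {k : ℕ} (p : ParentSpace (k + 1)) (v w : Fin (k + 1)) :
    (∃ j : Fin (k + 1 - 1), v.val = j.val + 1 ∧ w.val = (p j).val) ↔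
      0 < v.val ∧ parentMap p v.val = w.val := by
  constructor
  · rintro ⟨j, hv, hw⟩
    refine ⟨by omega, ?_⟩
    have hj := j.2
    rw [hw, parentMap, dif_pos (by omega)]
    have : (⟨v.val - 1, by omega⟩ : Fin (k + 1 - 1)) = j := Fin.ext (by simp; omega)
    rw [this]
  · rintro ⟨h0, h⟩
    have hlt : v.val - 1 < k := by have := v.2; omega
    refine ⟨⟨v.val - 1, hlt⟩, by simp; omega, ?_⟩
    rw [← h, parentMap, dif_pos hlt]

theorem recTree_adj_iff_s17 {k : ℕ} (p : ParentSpace (k + 1)) (v w : Fin (k + 1)) :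
    (recTree p).Adj v w ↔ (0 < v.val ∧ parentMap p v.val = w.val) ∨
      (0 < w.val ∧ parentMap p w.val = v.val) := by
  rw [recTree, SimpleGraph.fromRel_adj, recTree_rel_iff, recTree_rel_iff]
  constructor
  · exact fun h => h.2
  · intro h
    refine ⟨?_, h⟩
    rintro rfl
    rcases h with h | h <;> exact absurd h.2 (parentMap_lt p _ h.1).ne

open Classical in
theorem sum_adj_eq {k : ℕ} (p : ParentSpace (k + 1)) (x : ℕ → ℝ) (v : Fin (k + 1)) :
    ∑ w : Fin (k + 1), (if (recTree p).Adj v w then x w else 0) =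
      (if 0 < v.val then x (parentMap p v) else 0) +
        ∑ w ∈ Finset.range (k + 1) with 0 < w ∧ parentMap p w = v, x w := by
  have hsplit : ∀ w : Fin (k + 1), (if (recTree p).Adj v w then x w else 0) =
      (if 0 < v.val ∧ parentMap p v = w.val then x w else 0) +
        (if 0 < w.val ∧ parentMap p w = v.val then x w else 0) := by
    intro w
    rw [recTree_adj_iff_s17]
    by_cases h1 : 0 < v.val ∧ parentMap p v = w.val
    · have h2 : ¬ (0 < w.val ∧ parentMap p w = v.val) := by
        intro h2
        have := parentMap_lt p _ h1.1
        have := parentMap_lt p _ h2.1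
        omega
      rw [if_pos (Or.inl h1), if_pos h1, if_neg h2, add_zero]
    · simp only [h1, false_or, if_false, zero_add]
  rw [Finset.sum_congr rfl fun w _ => hsplit w, Finset.sum_add_distrib]
  congr 1
  · split_ifs with hv
    · have hlt : parentMap p v < k + 1 := (parentMap_lt p _ hv).trans v.2
      rw [Finset.sum_eq_single ⟨parentMap p v, hlt⟩]
      · simp [hv]
      · intro w _ hw
        rw [if_neg]
        rintro ⟨_, h⟩
        exact hw (Fin.ext h.symm)
      · simp
    · simp [hv]
  · rw [Finset.sum_filter,
      Finset.sum_range (fun w => if 0 < w ∧ parentMap p w = v.val then x w else 0)]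

theorem toll_recTree_iff {k : ℕ} (p : ParentSpace (k + 1)) :
    (adjMult (recTree p) 0 : ℤ) -
      (adjMult ((recTree p).induce ({(0 : Fin (k + 1))}ᶜ : Set (Fin (k + 1)))) 0 : ℤ) = 1 ↔
      IsGood (k + 1) (parentMap p) 0 := by
  classical
  rw [toll_eq_one_iff]
  constructor
  · rintro ⟨x, hx0, hx⟩
    by_contra hb
    let y : ℕ → ℝ := fun i => if h : i < k + 1 then x ⟨i, h⟩ else 0
    have hy : ∀ w : Fin (k + 1), y w = x w := fun w => dif_pos w.2
    have hker : IsKernelVector (k + 1) (parentMap p) y := by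
      intro v hv
      have h := sum_adj_eq p y ⟨v, hv⟩
      rw [← h]
      simp_rw [hy]
      convert hx ⟨v, hv⟩
    apply hx0
    rw [← hy]
    exact hker.eq_zero_of_not_isGood (parentMap_lt p) 0 hb
  · intro h
    obtain ⟨x, hx0, hx⟩ := exists_isKernelVector (parentMap_lt p) h
    refine ⟨fun w => x w, hx0, fun v => ?_⟩
    exact (sum_adj_eq p x v).trans (hx v v.2)

end Tree

/-! ### Counting the recursive trees with good root -/

section Counting

open Finset

/-- The vertices `j, …, j + t - 1` choose parents `q 0, …, q (t - 1)`; `markSet t j q` is the set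
of vertices below `j` that have a good child among them. The vertices are treated in decreasing
order: when the turn of `j` comes it is bad if it is marked, and otherwise marks its parent. -/
def markSet : (t : ℕ) → ℕ → (Fin t → ℕ) → Finset ℕ
  | 0, _, _ => ∅
  | t + 1, j, q =>
    if j ∈ markSet t (j + 1) (Fin.tail q) then (markSet t (j + 1) (Fin.tail q)).erase j
    else insert (q 0) (markSet t (j + 1) (Fin.tail q))

/-- The admissible choices of parents for the vertices `j, …, j + t - 1`. -/
def choices (t j : ℕ) : Finset (Fin t → ℕ) := Fintype.piFinset fun i : Fin t => range (j + i)

/-- The number of choices of parents that leave exactly the vertices of `M` marked. -/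
def markCount (t j : ℕ) (M : Finset ℕ) : ℕ := #{q ∈ choices t j | markSet t j q = M}

theorem mem_markSet {n : ℕ} {par : ℕ → ℕ} (hpar : ∀ v, 0 < v → par v < v) (t j : ℕ)
    (hj : 0 < j) (hn : j + t = n) (v : ℕ) :
    v ∈ markSet t j (fun i => par (j + i)) ↔
      v < j ∧ ∃ w, j ≤ w ∧ w < n ∧ par w = v ∧ IsGood n par w := by
  induction t generalizing j v with
  | zero =>
    simp only [markSet, notMem_empty, false_iff]
    rintro ⟨_, w, h1, h2, _⟩
    omega
  | succ t ih =>
    have htail : Fin.tail (fun i : Fin (t + 1) => par (j + i)) =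
        fun i : Fin t => par (j + 1 + i) := by
      funext i
      simp only [Fin.tail, Fin.val_succ]
      congr 1
      omega
    have ih' := ih (j + 1) (by omega) (by omega)
    have hjb : j ∈ markSet t (j + 1) (fun i => par (j + 1 + i)) ↔ ¬ IsGood n par j := by
      rw [ih', isGood_iff]
      push Not
      constructor
      · rintro ⟨_, w, h1, h2, h3, h4⟩
        exact ⟨w, by omega, h2, h3, h4⟩
      · rintro ⟨w, h1, h2, h3, h4⟩
        exact ⟨by omega, w, by omega, h2, h3, h4⟩
    simp only [markSet, htail]
    have hpj := hpar j hj
    split_ifs with hmem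
    · have hb := hjb.1 hmem
      rw [mem_erase, ih']
      constructor
      · rintro ⟨h1, h2, w, h3, h4⟩
        exact ⟨by omega, w, by omega, h4⟩
      · rintro ⟨h1, w, h3, h4, h5, h6⟩
        have : w ≠ j := by
          rintro rfl
          exact hb h6
        exact ⟨by omega, by omega, w, by omega, h4, h5, h6⟩
    · have hg : IsGood n par j := by
        by_contra h
        exact hmem (hjb.2 h)
      rw [mem_insert, ih']
      constructor
      · rintro (h | ⟨h2, w, h3, h4, h5, h6⟩)
        · exact ⟨by simp at h; omega, j, le_rfl, by omega, by simp [h], hg⟩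
        · have : v ≠ j := by
            rintro rfl
            exact (isGood_iff n par v).1 hg w (by omega) h4 h5 h6
          exact ⟨by omega, w, by omega, h4, h5, h6⟩
      · rintro ⟨h1, w, h3, h4, h5, h6⟩
        by_cases hw : w = j
        · left
          simp [← h5, hw]
        · right
          exact ⟨by omega, w, by omega, h4, h5, h6⟩

theorem markCount_succ_eq_sum (t j : ℕ) (M : Finset ℕ) :
    markCount (t + 1) j M = ∑ v ∈ range j, #{q ∈ choices t (j + 1) |
      (if j ∈ markSet t (j + 1) q then (markSet t (j + 1) q).erase j
        else insert v (markSet t (j + 1) q)) = M} := by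
  rw [markCount, ← card_sigma]
  refine card_bij' (fun q _ => ⟨q 0, Fin.tail q⟩) (fun s _ => Fin.cons s.1 s.2) ?_ ?_ ?_ ?_
  · intro q hq
    simp only [mem_filter, choices, Fintype.mem_piFinset, mem_range, mem_sigma] at hq ⊢
    refine ⟨by simpa using hq.1 0, fun i => ?_, by simpa only [markSet] using hq.2⟩
    have := hq.1 i.succ
    simp only [Fin.val_succ] at this
    simp only [Fin.tail]
    omega
  · rintro ⟨v, q⟩ hq
    simp only [mem_filter, choices, Fintype.mem_piFinset, mem_range, mem_sigma] at hq ⊢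
    refine ⟨fun i => ?_, by simpa only [markSet, Fin.tail_cons, Fin.cons_zero] using hq.2.2⟩
    refine Fin.cases ?_ (fun i => ?_) i
    · simpa using hq.1
    · have := hq.2.1 i
      simp only [Fin.cons_succ, Fin.val_succ]
      omega
  · intro q _
    exact Fin.cons_self_tail q
  · rintro ⟨v, q⟩ _
    simp

/-- The states before vertex `j` is treated which lead to the marked set `M` when `j` chooses
the parent `v`. -/
theorem mark_step_iff {j v : ℕ} {M M' : Finset ℕ} (hM : j ∉ M) :
    (if j ∈ M' then M'.erase j else insert v M') = M ↔
      M' = insert j M ∨ (v ∈ M ∧ (M' = M ∨ M' = M.erase v)) := by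
  constructor
  · intro h
    split_ifs at h with hj
    · left
      rw [← h, insert_erase hj]
    · right
      subst h
      refine ⟨mem_insert_self _ _, ?_⟩
      by_cases hvM : v ∈ M'
      · left
        rw [insert_eq_of_mem hvM]
      · right
        rw [erase_insert hvM]
  · rintro (rfl | ⟨hvM, rfl | rfl⟩)
    · rw [if_pos (mem_insert_self _ _), erase_insert hM]
    · rw [if_neg hM, insert_eq_of_mem hvM]
    · rw [if_neg (fun h => hM (mem_of_mem_erase h)), insert_erase hvM]

theorem markCount_succ (t j : ℕ) {M : Finset ℕ} (hM : M ⊆ range j) :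
    markCount (t + 1) j M = j * markCount t (j + 1) (insert j M) +
      ∑ v ∈ M, (markCount t (j + 1) M + markCount t (j + 1) (M.erase v)) := by
  have hjM : j ∉ M := fun h => by simpa using hM h
  have hstep : ∀ v ∈ range j, #{q ∈ choices t (j + 1) |
      (if j ∈ markSet t (j + 1) q then (markSet t (j + 1) q).erase j
        else insert v (markSet t (j + 1) q)) = M} =
      markCount t (j + 1) (insert j M) +
        if v ∈ M then markCount t (j + 1) M + markCount t (j + 1) (M.erase v) else 0 := by
    intro v _
    simp_rw [mark_step_iff hjM]
    have hne : insert j M ≠ M := fun h => hjM (h ▸ mem_insert_self _ _)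
    split_ifs with hvM
    · have hne2 : M ≠ M.erase v := fun h => by
        rw [h] at hvM
        simp at hvM
      have hne3 : insert j M ≠ M.erase v := fun h => by
        have h1 : j ∈ M.erase v := h ▸ mem_insert_self _ _
        exact hjM (mem_of_mem_erase h1)
      simp only [hvM, true_and, markCount]
      rw [filter_or, card_union_of_disjoint, filter_or, card_union_of_disjoint]
      · exact disjoint_filter.2 fun q _ h1 h2 => hne2 (h1.symm.trans h2)
      · refine disjoint_filter.2 fun q _ h1 h2 => ?_
        rcases h2 with h2 | h2
        · exact hne (h1.symm.trans h2)
        · exact hne3 (h1.symm.trans h2)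
    · simp [hvM, markCount]
  rw [markCount_succ_eq_sum, sum_congr rfl hstep, sum_add_distrib, sum_const, card_range,
    smul_eq_mul, ← sum_filter]
  congr 2
  ext v
  rw [mem_filter]
  exact ⟨fun h => h.2, fun h => ⟨hM h, h⟩⟩

/-- The vertices below `j` play symmetric roles, so the count depends on `M` only through the
numbers of unmarked and of marked vertices, and it obeys the recursion of `taylorCoeff`. -/
theorem markCount_eq_taylorCoeff (t j : ℕ) {M : Finset ℕ} (hM : M ⊆ range j) :
    markCount t j M = taylorCoeff t (j - #M) #M := by
  induction t generalizing j M with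
  | zero =>
    have : choices 0 j = {Fin.elim0} := by
      ext q
      rw [Subsingleton.elim q Fin.elim0]
      simp only [choices, Fintype.mem_piFinset, IsEmpty.forall_iff, mem_singleton]
    simp only [markCount, this, markSet, taylorCoeff, card_eq_zero]
    by_cases h : M = ∅
    · simp [h]
    · simp [h, Ne.symm h]
  | succ t ih =>
    have hcard : #M ≤ j := by simpa using card_le_card hM
    have hjM : j ∉ M := fun h => by simpa using hM h
    have hM1 : M ⊆ range (j + 1) := hM.trans (range_subset_range.2 (by omega))
    have hins : insert j M ⊆ range (j + 1) := insert_subset (by simp) hM1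
    have hterm : ∀ v ∈ M, markCount t (j + 1) M + markCount t (j + 1) (M.erase v) =
        taylorCoeff t (j - #M + 1) #M + taylorCoeff t (j - #M + 2) (#M - 1) := by
      intro v hv
      have hpos : 0 < #M := card_pos.2 ⟨v, hv⟩
      rw [ih (j + 1) hM1, ih (j + 1) ((erase_subset v M).trans hM1), card_erase_of_mem hv]
      congr 2 <;> omega
    rw [markCount_succ t j hM, sum_congr rfl hterm, sum_const, smul_eq_mul, ih (j + 1) hins,
      card_insert_of_notMem hjM, taylorCoeff, Nat.sub_add_cancel hcard, Nat.add_sub_add_right]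

theorem aPlus_eq_taylorCoeff (k : ℕ) : aPlus k = taylorCoeff k 1 0 := by
  classical
  have h := markCount_eq_taylorCoeff k 1 (empty_subset (range 1))
  rw [card_empty] at h
  rw [← h, aPlus, Nat.card_eq_fintype_card, Fintype.card_subtype, markCount]
  have key : ∀ p : ParentSpace (k + 1), IsGood (k + 1) (parentMap p) 0 ↔
      markSet k 1 (fun i : Fin k => (p i).val) = ∅ := by
    intro p
    have hq : (fun i : Fin k => (p i).val) = fun i : Fin k => parentMap p (1 + i) := by
      funext i
      have hi : 1 + i.val - 1 < k := by have := i.2; omega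
      rw [parentMap, dif_pos hi]
      have : (⟨1 + i.val - 1, hi⟩ : Fin k) = i := Fin.ext (by simp)
      rw [this]
    rw [hq, isGood_iff, eq_empty_iff_forall_notMem]
    simp_rw [mem_markSet (parentMap_lt p) k 1 one_pos (add_comm 1 k)]
    constructor
    · rintro h v ⟨hv, w, h1, h2, h3, h4⟩
      exact h w (by omega) h2 (by omega) h4
    · intro h w h1 h2 h3 h4
      exact h 0 ⟨by omega, w, h1, h2, h3, h4⟩
  refine card_bij (fun p _ => fun i : Fin k => (p i).val) ?_ ?_ ?_
  · intro p hp
    simp only [mem_filter, mem_univ, true_and, toll_recTree_iff, key] at hp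
    simp only [mem_filter, choices, Fintype.mem_piFinset, mem_range]
    refine ⟨fun i => ?_, hp⟩
    have := (p i).2
    omega
  · intro p _ p' _ hpp
    funext i
    exact Fin.ext (congrFun hpp i)
  · intro q hq
    simp only [mem_filter, choices, Fintype.mem_piFinset, mem_range] at hq
    refine ⟨fun i => ⟨q i, by have := hq.1 i; omega⟩, ?_, rfl⟩
    simp only [mem_filter, mem_univ, true_and, toll_recTree_iff, key]
    exact hq.2

end Counting

/-- For every `x ∈ [0, 1)`, the exponential generating function of the numbers `a_n` of
recursive trees with root toll `+1` for the eigenvalue `0` satisfies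
`∑_{n≥1} (a_n/n!) xⁿ = log(1 - log(1-x))`; in particular the series converges. -/
theorem stmt17 (x : ℝ) (hx : x ∈ Set.Ico (0 : ℝ) 1) :
    HasSum (fun k : ℕ => (aPlus k : ℝ) / (Nat.factorial (k + 1)) * x ^ (k + 1))
      (Real.log (1 - Real.log (1 - x))) := by
  simpa only [aPlus_eq_taylorCoeff] using hasSum_taylorCoeff x hx
end
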